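/- arXiv:1011.5479 — 2 statements merged into one kernel-verified Lean document; each statement's English description precedes it below -/
import Mathlib

section
/- Let (λ_j)_{j≥1} and (μ_m)_{m≥1} be sequences of positive real numbers with λ_1 > μ_1 > λ_2 > μ_2 > … > 0 and Σ_{j≥1} λ_j² < ∞. Then the set of all c ∈ h^{1/2} such that the positive singular values of Γ_c are exactly the λ_j, j ≥ 1, each simple, and the positive singular values of Γ̃_c are exactly the μ_m, m ≥ 1, each simple, endowed with the topology induced by the h^{1/2} norm, is homeomorphic to the infinite-dimensional torus 𝕋^ℕ endowed with the product topology, where 𝕋 := ℝ/2πℤ. -/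
open scoped InnerProductSpace ComplexConjugate ENNReal

noncomputable section

/-- The Hilbert space `ℓ²(ℕ, ℂ)`. -/
abbrev L2 : Type := lp (fun _ : ℕ => ℂ) 2

/-- Membership in the space `h^{1/2}`: `c ∈ ℓ²` and `Σ n |c_n|² < ∞`. -/
def InH12 (c : ℕ → ℂ) : Prop :=
  Memℓp c 2 ∧ Summable (fun n : ℕ => (n : ℝ) * ‖c n‖ ^ 2)

/-- `Γ` is the Hankel operator of symbol `c`: `(Γ x)_n = Σ_p c_{n+p} x_p`. -/
def IsHankelOp (c : ℕ → ℂ) (Γ : L2 →L[ℂ] L2) : Prop :=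
  ∀ x : L2, ∀ n : ℕ, (Γ x : ℕ → ℂ) n = ∑' p : ℕ, c (n + p) * (x : ℕ → ℂ) p

/-- The shifted sequence `c̃ : n ↦ c_{n+1}`. -/
def shiftSeq (c : ℕ → ℂ) : ℕ → ℂ := fun n => c (n + 1)

/-- The operator `Γ Γ*`. -/
def opT (Γ : L2 →L[ℂ] L2) : L2 →L[ℂ] L2 :=
  Γ ∘L ContinuousLinearMap.adjoint Γ

/-- `e₀ = (1,0,0,…) ∈ ℓ²`. -/
def e0 : L2 := lp.single 2 0 1

/-- Generic min–max value `a_j` (for `j ≥ 1`) of a bounded operator `T` on a Hilbert space: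
the infimum over subspaces `F` of dimension at most `j-1` of the supremum of `Re ⟨T h, h⟩`
over unit vectors `h` orthogonal to `F`. -/
def minmaxVal {H : Type*} [NormedAddCommGroup H] [InnerProductSpace ℂ H]
    (T : H →L[ℂ] H) (j : ℕ) : ℝ :=
  ⨅ F : {F : Submodule ℂ H // Module.finrank ℂ F ≤ j - 1},
    ⨆ h : {h : H // ‖h‖ = 1 ∧ ∀ y ∈ F.1, ⟪y, h⟫_ℂ = 0},
      (⟪T h.1, h.1⟫_ℂ).re

/-- `λ_j(Γ)²` (for `j ≥ 1`): the `j`-th min–max value of `Γ Γ*`. -/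
def svalSq (Γ : L2 →L[ℂ] L2) (j : ℕ) : ℝ := minmaxVal (opT Γ) j

lemma summable_sq_of_memℓp {f : ℕ → ℂ} (hf : Memℓp f 2) :
    Summable fun n : ℕ => ‖f n‖ ^ 2 := by
  have h := hf.summable (p := 2) (by norm_num)
  have h2 : ((2 : ℝ≥0∞).toReal) = ((2 : ℕ) : ℝ) := by norm_num
  rw [h2] at h
  simpa [Real.rpow_natCast] using h

/-- The weighted sequence `n ↦ √(1+n) · c_n`, whose `ℓ²` norm is the `h^{1/2}` norm of `c`. -/
def wSeq (c : ℕ → ℂ) : ℕ → ℂ := fun n => (Real.sqrt (1 + (n : ℝ)) : ℂ) * c n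

lemma memℓp_wSeq {c : ℕ → ℂ} (hc : InH12 c) : Memℓp (wSeq c) 2 := by
  apply memℓp_gen
  have h2 : ((2 : ℝ≥0∞).toReal) = ((2 : ℕ) : ℝ) := by norm_num
  rw [h2]
  have hs : Summable fun n : ℕ => (1 + (n : ℝ)) * ‖c n‖ ^ 2 := by
    have := (summable_sq_of_memℓp hc.1).add hc.2
    convert this using 2 with n
    ring
  have key : ∀ n : ℕ, ‖wSeq c n‖ ^ ((2 : ℕ) : ℝ) = (1 + (n : ℝ)) * ‖c n‖ ^ 2 := by
    intro n
    rw [Real.rpow_natCast]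
    have h1 : (0 : ℝ) ≤ 1 + (n : ℝ) := by positivity
    simp only [wSeq, norm_mul, Complex.norm_real, Real.norm_eq_abs,
      abs_of_nonneg (Real.sqrt_nonneg _)]
    rw [mul_pow, Real.sq_sqrt h1]
  exact (summable_congr fun n => key n).mpr hs

/-- The space `h^{1/2}` as a type. -/
def H12 : Type := {c : ℕ → ℂ // InH12 c}

/-- The isometric embedding of `h^{1/2}` into `ℓ²` given by `c ↦ (√(1+n) c_n)_n`;
the `h^{1/2}` norm of `c` is the `ℓ²` norm of its image. -/
def H12.toL2 (c : H12) : L2 := ⟨wSeq c.1, memℓp_wSeq c.2⟩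

lemma H12.toL2_injective : Function.Injective H12.toL2 := by
  intro c d h
  apply Subtype.ext
  funext n
  have h' : wSeq c.1 n = wSeq d.1 n := congrFun (congrArg Subtype.val h) n
  have hs : (Real.sqrt (1 + (n : ℝ)) : ℂ) ≠ 0 := by
    simp only [ne_eq, Complex.ofReal_eq_zero]
    positivity
  exact mul_left_cancel₀ hs h'

/-- The metric (hence the topology) on `h^{1/2}` induced by the `h^{1/2}` norm
`(Σ (1+n)|c_n|²)^{1/2}`, obtained from the isometric embedding into `ℓ²`. -/
instance : MetricSpace H12 := MetricSpace.induced H12.toL2 H12.toL2_injective inferInstance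

/-- The positive singular values of `Γ` are exactly the `λ_j`, `j ≥ 1` (indexed here from `0`),
each simple: equivalently, the positive eigenvalues of `Γ Γ*` are exactly the `λ_j²`, each
with a one-dimensional eigenspace. -/
def HasSimpleSValsSeq (Γ : L2 →L[ℂ] L2) (lam : ℕ → ℝ) : Prop :=
  {z : ℂ | z ≠ 0 ∧ Module.End.HasEigenvalue (opT Γ).toLinearMap z}
    = Set.range (fun j : ℕ => ((lam j : ℂ)) ^ 2) ∧
  ∀ j : ℕ,
    Module.finrank ℂ (Module.End.eigenspace (opT Γ).toLinearMap ((lam j : ℂ) ^ 2)) = 1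


/-- standard basis vector -/
def dl (n : ℕ) : L2 := lp.single 2 n (1 : ℂ)

lemma inner_dl (n : ℕ) (x : L2) : ⟪dl n, x⟫_ℂ = x n := by
  simp [dl, lp.inner_single_left]

lemma dl_apply (n m : ℕ) : (dl n) m = if m = n then 1 else 0 := by
  unfold dl
  by_cases h : m = n
  · subst h; simp
  · simp [h]

lemma L2_ext_inner {x y : L2} (h : ∀ n, x n = y n) : x = y := by
  ext n; exact h n

lemma clm_ext {X Y : L2 →L[ℂ] L2} (h : ∀ n, X (dl n) = Y (dl n)) : X = Y := by
  ext1 x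
  have hs := lp.hasSum_single (p := 2) (by norm_num) x
  have e : ∀ i : ℕ, (lp.single 2 i (x i) : L2) = x i • dl i := by
    intro i; unfold dl; rw [← lp.single_smul]; simp
  have h1 := hs.mapL X
  have h2 := hs.mapL Y
  simp only [e, map_smul, h] at h1 h2
  exact h1.unique h2

lemma L2_norm_sq (x : L2) : HasSum (fun n => ‖x n‖ ^ 2) (‖x‖ ^ 2) := by
  have := lp.hasSum_norm (p := 2) (by norm_num) x
  simpa using this

/-- bounded sequences -/
def BB (a : ℕ → ℂ) : Prop := ∃ C : ℝ, ∀ n, ‖a n‖ ≤ C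

lemma memL2_of_le {f : ℕ → ℂ} {g : ℕ → ℝ} (hg : Summable g) (h : ∀ n, ‖f n‖ ^ 2 ≤ g n) :
    Memℓp f 2 := by
  apply memℓp_gen
  refine Summable.of_nonneg_of_le (fun n => by positivity) (fun n => ?_) hg
  simpa using h n

lemma mem_dg {a : ℕ → ℂ} (h : BB a) (x : L2) : Memℓp (fun n => a n * x n) 2 := by
  obtain ⟨C, hC⟩ := h
  refine memL2_of_le ((L2_norm_sq x).summable.mul_left (C ^ 2)) (fun n => ?_)
  rw [norm_mul, mul_pow]
  have := hC n
  gcongr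

/-- diagonal operator -/
def dg (a : ℕ → ℂ) : L2 →L[ℂ] L2 := by
  classical
  exact if h : BB a then
    LinearMap.mkContinuousOfExistsBound
      { toFun := fun x => ⟨fun n => a n * x n, mem_dg h x⟩
        map_add' := by intro x y; ext n; exact mul_add (a n) (x n) (y n)
        map_smul' := by intro c x; ext n; simp; ring }
      (by
        obtain ⟨C, hC⟩ := h
        refine ⟨C, fun x => ?_⟩
        have hC0 : 0 ≤ C := (norm_nonneg _).trans (hC 0)
        refine le_of_sq_le_sq ?_ (by positivity)
        have h1 := L2_norm_sq (⟨fun n => a n * x n, mem_dg ⟨C, hC⟩ x⟩ : L2)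
        have h2 := (L2_norm_sq x).mul_left (C ^ 2)
        rw [mul_pow]
        refine hasSum_le (fun n => ?_) h1 h2
        simp only [norm_mul, mul_pow]
        have := hC n
        gcongr)
  else 0

lemma dg_apply {a : ℕ → ℂ} (h : BB a) (x : L2) (n : ℕ) : (dg a x) n = a n * x n := by
  unfold dg
  rw [dif_pos h]
  rfl

lemma dg_dl {a : ℕ → ℂ} (h : BB a) (n : ℕ) : dg a (dl n) = a n • dl n := by
  ext m
  rw [dg_apply h]
  simp only [lp.coeFn_smul, Pi.smul_apply, dl_apply, smul_eq_mul]
  by_cases hm : m = n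
  · subst hm; simp
  · simp [hm]

lemma dg_comp {a b : ℕ → ℂ} (ha : BB a) (hb : BB b) :
    dg a ∘L dg b = dg (fun n => a n * b n) := by
  have hab : BB (fun n => a n * b n) := by
    obtain ⟨C, hC⟩ := ha
    obtain ⟨D, hD⟩ := hb
    refine ⟨C * D, fun n => ?_⟩
    rw [norm_mul]
    exact mul_le_mul (hC n) (hD n) (norm_nonneg _) ((norm_nonneg _).trans (hC 0))
  ext x n
  simp [dg_apply ha, dg_apply hb, dg_apply hab]; ring

lemma dg_one : dg (fun _ => 1) = ContinuousLinearMap.id ℂ L2 := by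
  have : BB (fun _ => 1) := ⟨1, by simp⟩
  ext x n
  simp [dg_apply this]

lemma BB.conj {a : ℕ → ℂ} (ha : BB a) : BB (fun n => conj (a n)) := by
  obtain ⟨C, hC⟩ := ha
  exact ⟨C, fun n => by simpa using hC n⟩

lemma inner_L2 (x y : L2) : ⟪x, y⟫_ℂ = ∑' n, conj (x n) * y n := by
  rw [lp.inner_eq_tsum]
  refine tsum_congr fun n => ?_
  simp [RCLike.inner_apply, mul_comm]

lemma dg_adjoint {a : ℕ → ℂ} (ha : BB a) :
    ContinuousLinearMap.adjoint (dg a) = dg (fun n => conj (a n)) := by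
  symm
  rw [ContinuousLinearMap.eq_adjoint_iff]
  intro x y
  simp only [inner_L2, dg_apply ha, dg_apply ha.conj]
  refine tsum_congr fun n => ?_
  simp; ring

lemma norm_dg_le {a : ℕ → ℂ} {C : ℝ} (h : ∀ n, ‖a n‖ ≤ C) (x : L2) : ‖dg a x‖ ≤ C * ‖x‖ := by
  have hC0 : 0 ≤ C := (norm_nonneg _).trans (h 0)
  refine le_of_sq_le_sq ?_ (by positivity)
  have h1 := L2_norm_sq (dg a x)
  have h2 := (L2_norm_sq x).mul_left (C ^ 2)
  rw [mul_pow]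
  refine hasSum_le (fun n => ?_) h1 h2
  rw [dg_apply ⟨C, h⟩, norm_mul, mul_pow]
  have := h n
  gcongr

/-- complex conjugate of an operator -/
def cj (X : L2 →L[ℂ] L2) : L2 →L[ℂ] L2 :=
  LinearMap.mkContinuous
    { toFun := fun x => star (X (star x))
      map_add' := by intro x y; simp
      map_smul' := by intro c x; simp [star_smul] }
    ‖X‖ (by
      intro x
      simp only [LinearMap.coe_mk, AddHom.coe_mk, norm_star]
      simpa using X.le_opNorm (star x))

lemma cj_apply (X : L2 →L[ℂ] L2) (x : L2) : cj X x = star (X (star x)) := rfl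

lemma cj_cj (X : L2 →L[ℂ] L2) : cj (cj X) = X := by
  ext1 x; simp [cj_apply]

lemma cj_comp (X Y : L2 →L[ℂ] L2) : cj (X ∘L Y) = cj X ∘L cj Y := by
  ext1 x; simp [cj_apply]

lemma inner_star_star (x y : L2) : ⟪star x, star y⟫_ℂ = ⟪y, x⟫_ℂ := by
  rw [inner_L2, inner_L2]
  refine tsum_congr fun n => ?_
  simp [lp.star_apply]; ring

lemma cj_adjoint (X : L2 →L[ℂ] L2) :
    ContinuousLinearMap.adjoint (cj X) = cj (ContinuousLinearMap.adjoint X) := by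
  symm
  rw [ContinuousLinearMap.eq_adjoint_iff]
  intro x y
  rw [cj_apply, cj_apply]
  conv_lhs => rw [← star_star y]
  rw [inner_star_star, ContinuousLinearMap.adjoint_inner_right]
  conv_rhs => rw [← star_star x]
  rw [inner_star_star]

lemma cj_dg {a : ℕ → ℂ} (ha : BB a) : cj (dg a) = dg (fun n => conj (a n)) := by
  ext x n
  simp [cj_apply, dg_apply ha, dg_apply ha.conj, lp.star_apply]

lemma star_dl (n : ℕ) : star (dl n) = dl n := by
  ext m
  simp [lp.star_apply, dl_apply, apply_ite]

lemma dg_inj {a b : ℕ → ℂ} (ha : BB a) (hb : BB b) (h : dg a = dg b) : a = b := by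
  funext n
  have := congrArg (fun X : L2 →L[ℂ] L2 => (X (dl n)) n) h
  simpa [dg_apply ha, dg_apply hb, dl_apply] using this

/-- an operator commuting with a simple diagonal operator is diagonal -/
lemma diag_of_comm {a : ℕ → ℂ} (ha : BB a) (hinj : Function.Injective a) {X : L2 →L[ℂ] L2}
    (h : X ∘L dg a = dg a ∘L X) : ∃ x : ℕ → ℂ, BB x ∧ X = dg x := by
  have hX : ∀ n, X (dl n) = (X (dl n) n) • dl n := by
    intro n
    have h1 := congrArg (fun Y : L2 →L[ℂ] L2 => Y (dl n)) h
    simp only [ContinuousLinearMap.comp_apply, dg_dl ha, map_smul] at h1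
    ext m
    have h2 := congrArg (fun y : L2 => y m) h1
    simp only [lp.coeFn_smul, Pi.smul_apply, dg_apply ha, smul_eq_mul] at h2
    simp only [lp.coeFn_smul, Pi.smul_apply, smul_eq_mul, dl_apply]
    by_cases hm : m = n
    · subst hm; simp
    · simp only [hm, if_false, mul_zero]
      have h3 : (a n - a m) * X (dl n) m = 0 := by linear_combination h2
      rcases mul_eq_zero.1 h3 with h4 | h4
      · exact absurd (hinj (sub_eq_zero.1 h4)).symm hm
      · exact h4
  have hb : BB (fun n => X (dl n) n) := by
    refine ⟨‖X‖, fun n => ?_⟩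
    calc ‖X (dl n) n‖ ≤ ‖X (dl n)‖ := lp.norm_apply_le_norm (by norm_num) _ _
      _ ≤ ‖X‖ * ‖dl n‖ := X.le_opNorm _
      _ = ‖X‖ := by simp [dl, lp.norm_single]
  refine ⟨_, hb, clm_ext fun n => ?_⟩
  rw [dg_dl hb]; exact hX n

/-- dominated coordinatewise continuity gives continuity into `ℓ²` -/
lemma tendsto_L2_of_dom {ι : Type*} {l : Filter ι} {g : ι → L2} {y : L2} {a : ℕ → ℝ}
    (ha : Summable fun n => a n ^ 2)
    (hb : ∀ i n, ‖g i n‖ ≤ a n) (hy : ∀ n, ‖y n‖ ≤ a n)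
    (ht : ∀ n, Filter.Tendsto (fun i => g i n) l (nhds (y n))) :
    Filter.Tendsto g l (nhds y) := by
  rw [tendsto_iff_norm_sub_tendsto_zero]
  have key : Filter.Tendsto (fun i => ∑' n, ‖(g i - y) n‖ ^ 2) l (nhds (∑' n : ℕ, (0 : ℝ))) := by
    refine tendsto_tsum_of_dominated_convergence (bound := fun n => 4 * a n ^ 2)
      (ha.mul_left 4) ?_ ?_
    · intro n
      have : Filter.Tendsto (fun i => ‖g i n - y n‖ ^ 2) l (nhds (‖y n - y n‖ ^ 2)) :=
        (((ht n).sub_const _).norm).pow 2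
      simpa using this
    · refine Filter.Eventually.of_forall fun i n => ?_
      have h1 : ‖(g i - y) n‖ ≤ 2 * a n := by
        simp only [lp.coeFn_sub, Pi.sub_apply]
        exact (norm_sub_le _ _).trans (by linarith [hb i n, hy n])
      rw [Real.norm_of_nonneg (by positivity)]
      calc ‖(g i - y) n‖ ^ 2 ≤ (2 * a n) ^ 2 := by gcongr
        _ = _ := by ring
  have e : ∀ i, ∑' n, ‖(g i - y) n‖ ^ 2 = ‖g i - y‖ ^ 2 := fun i => (L2_norm_sq _).tsum_eq
  simp only [e, tsum_zero] at key
  have := key.sqrt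
  simpa using this

lemma continuous_dg_apply {X : Type*} [TopologicalSpace X] {a : X → ℕ → ℂ} {C : ℝ}
    (h : ∀ t n, ‖a t n‖ ≤ C) (hc : ∀ n, Continuous fun t => a t n) (x : L2) :
    Continuous fun t => dg (a t) x := by
  rw [continuous_iff_continuousAt]
  intro t
  refine tendsto_L2_of_dom (a := fun n => C * ‖x n‖) ?_ ?_ ?_ ?_
  · simp only [mul_pow]; exact (L2_norm_sq x).summable.mul_left _
  · intro s n; rw [dg_apply ⟨C, h s⟩, norm_mul]; exact mul_le_mul_of_nonneg_right (h s n) (norm_nonneg _)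
  · intro n; rw [dg_apply ⟨C, h t⟩, norm_mul]; exact mul_le_mul_of_nonneg_right (h t n) (norm_nonneg _)
  · intro n
    have : ∀ s, dg (a s) x n = a s n * x n := fun s => dg_apply ⟨C, h s⟩ x n
    simp only [this]
    exact ((hc n).tendsto t).mul_const _

/-- Hilbert cube is compact -/
lemma compact_cube {a : ℕ → ℝ} (ha : Summable fun n => a n ^ 2) :
    IsCompact {x : L2 | ∀ n, ‖x n‖ ≤ a n} := by
  let Q : Set (ℕ → ℂ) := Set.univ.pi fun n => Metric.closedBall 0 (a n)
  have hQ : IsCompact Q := isCompact_univ_pi fun n => isCompact_closedBall _ _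
  have hQb : ∀ q : Q, ∀ n, ‖q.1 n‖ ≤ a n := fun q n => by
    have := q.2 n (Set.mem_univ n)
    simpa using this
  let g : Q → L2 := fun q => ⟨q.1, memL2_of_le ha fun n => by
    have := hQb q n
    gcongr⟩
  have hg : Continuous g := by
    rw [continuous_iff_continuousAt]
    intro q
    refine tendsto_L2_of_dom ha (fun i n => hQb i n) (fun n => hQb q n) (fun n => ?_)
    exact ((continuous_apply n).comp continuous_subtype_val).tendsto q
  have := isCompact_iff_compactSpace.1 hQ
  have := isCompact_range hg
  convert this
  ext x
  constructor
  · intro hx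
    exact ⟨⟨fun n => x n, fun n _ => by simpa using hx n⟩, rfl⟩
  · rintro ⟨q, rfl⟩ n
    exact hQb q n


abbrev Op : Type := L2 →L[ℂ] L2

lemma op_mul_apply (X Y : Op) (x : L2) : (X * Y) x = X (Y x) := rfl

lemma star_inner_left (X : Op) (x y : L2) : ⟪(star X) x, y⟫_ℂ = ⟪x, X y⟫_ℂ := by
  rw [ContinuousLinearMap.star_eq_adjoint, ContinuousLinearMap.adjoint_inner_left]

lemma star_inner_right (X : Op) (x y : L2) : ⟪x, (star X) y⟫_ℂ = ⟪X x, y⟫_ℂ := by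
  rw [ContinuousLinearMap.star_eq_adjoint, ContinuousLinearMap.adjoint_inner_right]

lemma dg_mul {a b : ℕ → ℂ} (ha : BB a) (hb : BB b) :
    dg a * dg b = dg (fun n => a n * b n) := dg_comp ha hb

lemma dg_star {a : ℕ → ℂ} (ha : BB a) : star (dg a) = dg (fun n => conj (a n)) := by
  rw [ContinuousLinearMap.star_eq_adjoint, dg_adjoint ha]

lemma cj_mul (X Y : Op) : cj (X * Y) = cj X * cj Y := cj_comp X Y

lemma cj_star (X : Op) : cj (star X) = star (cj X) := by
  rw [ContinuousLinearMap.star_eq_adjoint, ContinuousLinearMap.star_eq_adjoint, cj_adjoint]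

lemma cj_one : cj (1 : Op) = 1 := by
  ext1 x; simp [cj_apply]

lemma opT_eq (X : Op) : opT X = X * star X := rfl

def rk (u : L2) : Op := (innerSL ℂ u).smulRight u

lemma rk_apply (u x : L2) : rk u x = ⟪u, x⟫_ℂ • u := rfl

lemma rk_conj (X : Op) (u : L2) : X * rk u * star X = rk (X u) := by
  ext1 x
  simp only [op_mul_apply, rk_apply, map_smul, star_inner_right]

lemma BB_real {a : ℕ → ℝ} (ha : Summable a) : BB (fun n => (a n : ℂ)) := by
  obtain ⟨C, hC⟩ := ha.tendsto_atTop_zero.norm.bddAbove_range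
  exact ⟨C, fun n => by simpa using hC ⟨n, rfl⟩⟩

lemma trace_lemma {W : Op} (hW : star W * W = 1) {a : ℕ → ℝ} (ha : Summable a)
    (ha0 : ∀ n, 0 ≤ a n) :
    HasSum (fun n => ⟪dl n, (W * dg (fun n => (a n : ℂ)) * star W) (dl n)⟫_ℂ)
      ((∑' n, a n : ℝ) : ℂ) := by
  let f : ℕ × ℕ → ℝ := fun p => a p.1 * ‖W (dl p.1) p.2‖ ^ 2
  have hn : ∀ j, ‖W (dl j)‖ ^ 2 = 1 := by
    intro j
    have h1 : ⟪W (dl j), W (dl j)⟫_ℂ = 1 := by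
      rw [← star_inner_right]
      have : star W (W (dl j)) = dl j := by
        have := congrArg (fun X : Op => X (dl j)) hW
        simpa using this
      rw [this, inner_dl, dl_apply]; simp
    have h2 := inner_self_eq_norm_sq_to_K (𝕜 := ℂ) (W (dl j))
    rw [h1] at h2
    have h3 : ((‖W (dl j)‖ ^ 2 : ℝ) : ℂ) = ((1 : ℝ) : ℂ) := by push_cast; exact h2.symm
    exact Complex.ofReal_injective h3
  have h1 : ∀ j, HasSum (fun n => f (j, n)) (a j) := by
    intro j
    have := (L2_norm_sq (W (dl j))).mul_left (a j)
    rwa [hn, mul_one] at this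
  have hf0 : 0 ≤ f := fun p => mul_nonneg (ha0 _) (by positivity)
  have hs : Summable f := by
    rw [summable_prod_of_nonneg hf0]
    refine ⟨fun j => (h1 j).summable, ?_⟩
    simp only [fun j => (h1 j).tsum_eq]
    exact ha
  have ht : HasSum f (∑' n, a n) := by
    have := hs.hasSum.prod_fiberwise h1
    rw [this.tsum_eq]; exact hs.hasSum
  have hsw : HasSum (fun p : ℕ × ℕ => f p.swap) (∑' n, a n) :=
    (Equiv.prodComm ℕ ℕ).hasSum_iff.2 ht
  have h2 := hsw.prod_fiberwise (fun n => (hsw.summable.prod_factor n).hasSum)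
  have h3 := Complex.hasSum_ofReal.2 h2
  convert h3 using 2 with n
  rw [Complex.ofReal_tsum, op_mul_apply, op_mul_apply,
    ← star_inner_left, inner_L2]
  refine tsum_congr fun j => ?_
  rw [dg_apply (BB_real ha)]
  have : star W (dl n) j = conj (W (dl j) n) := by
    rw [← inner_dl, star_inner_right, ← inner_conj_symm, inner_dl]
  rw [this]
  simp only [f, Prod.swap_prod_mk]
  push_cast
  rw [Complex.conj_conj, ← Complex.mul_conj']
  ring

lemma iso_apply {W : Op} (hW : star W * W = 1) (x : L2) : star W (W x) = x := by
  have := congrArg (fun X : Op => X x) hW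
  simpa using this

lemma BB_sq {a : ℕ → ℝ} (ha : Summable fun j => a j ^ 2) : BB (fun n => (a n : ℂ) ^ 2) := by
  have := BB_real ha
  simpa using this

lemma hasSimple_of_diag {Γ W : Op} {a : ℕ → ℝ} (hW : star W * W = 1)
    (ha : Summable fun j => a j ^ 2) (hpos : ∀ j, 0 < a j) (hinj : Function.Injective a)
    (h : opT Γ = W * dg (fun n => (a n : ℂ) ^ 2) * star W) : HasSimpleSValsSeq Γ a := by
  have hB := BB_sq ha
  have hsq : Function.Injective (fun j => (a j : ℂ) ^ 2) := by
    intro i j hij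
    apply hinj
    have : a i ^ 2 = a j ^ 2 := by
      have hij' : (a i : ℂ) ^ 2 = (a j : ℂ) ^ 2 := hij
      exact_mod_cast hij'
    exact (pow_left_inj₀ (hpos i).le (hpos j).le two_ne_zero).1 this
  have hne : ∀ j, (a j : ℂ) ^ 2 ≠ 0 := fun j => by
    have := (hpos j).ne'
    simpa using this
  have hWd : ∀ j, W (dl j) ≠ 0 := by
    intro j h0
    have := iso_apply hW (dl j)
    rw [h0, map_zero] at this
    have h2 := congrArg (fun x : L2 => x j) this
    simp [dl_apply] at h2
  have hTd : ∀ j, opT Γ (W (dl j)) = (a j : ℂ) ^ 2 • W (dl j) := by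
    intro j
    rw [h]
    simp [iso_apply hW, dg_dl hB]
  have key : ∀ z : ℂ, z ≠ 0 → ∀ x, opT Γ x = z • x → x = W (star W x) ∧
      ∀ j, (a j : ℂ) ^ 2 * (star W x) j = z * (star W x) j := by
    intro z hz x hx
    have h1 : W (dg (fun n => (a n : ℂ) ^ 2) (star W x)) = z • x := by
      rw [← hx, h]; simp
    have h2 : dg (fun n => (a n : ℂ) ^ 2) (star W x) = z • star W x := by
      rw [← iso_apply hW (dg _ _), h1, map_smul]
    constructor
    · rw [h2, map_smul] at h1
      exact (smul_right_injective _ hz h1).symm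
    · intro j
      have := congrArg (fun x : L2 => x j) h2
      simpa [dg_apply hB] using this
  constructor
  · ext z
    simp only [Set.mem_ofPred_eq, Set.mem_range]
    constructor
    · rintro ⟨hz, he⟩
      obtain ⟨x, hx⟩ := he.exists_hasEigenvector
      obtain ⟨k1, k2⟩ := key z hz x hx.apply_eq_smul
      by_contra hcon
      push Not at hcon
      apply hx.2
      have : star W x = 0 := by
        ext j
        have := k2 j
        have h3 : ((a j : ℂ) ^ 2 - z) * star W x j = 0 := by linear_combination this
        rcases mul_eq_zero.1 h3 with h4 | h4
        · exact absurd (sub_eq_zero.1 h4) (hcon j)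
        · simpa using h4
      rw [k1, this, map_zero]
    · rintro ⟨j, rfl⟩
      refine ⟨hne j, ?_⟩
      exact Module.End.hasEigenvalue_of_hasEigenvector
        ⟨Module.End.mem_eigenspace_iff.2 (hTd j), hWd j⟩
  · intro j
    rw [finrank_eq_one_iff']
    refine ⟨⟨W (dl j), Module.End.mem_eigenspace_iff.2 (hTd j)⟩, ?_, ?_⟩
    · intro h0; exact hWd j (congrArg Subtype.val h0)
    · rintro ⟨x, hx⟩
      obtain ⟨k1, k2⟩ := key _ (hne j) x (Module.End.mem_eigenspace_iff.1 hx)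
      refine ⟨star W x j, Subtype.ext ?_⟩
      change star W x j • W (dl j) = x
      conv_rhs => rw [k1]
      rw [← map_smul]
      congr 1
      ext i
      simp only [lp.coeFn_smul, Pi.smul_apply, dl_apply, smul_eq_mul]
      by_cases hi : i = j
      · subst hi; simp
      · have h3 : ((a i : ℂ) ^ 2 - (a j : ℂ) ^ 2) * star W x i = 0 := by linear_combination k2 i
        rcases mul_eq_zero.1 h3 with h4 | h4
        · exact absurd (hsq (sub_eq_zero.1 h4)) hi
        · simp [hi, h4]

lemma iso_of_orthonormal {e : ℕ → L2} (he : Orthonormal ℂ e) :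
    ∃ W : Op, star W * W = 1 ∧ ∀ j, W (dl j) = e j := by
  refine ⟨he.orthogonalFamily.linearIsometry.toContinuousLinearMap, ?_, ?_⟩
  · ext1 x
    refine ext_inner_left ℂ fun y => ?_
    simp only [op_mul_apply, star_inner_right]
    simp
  · intro j
    have := he.orthogonalFamily.linearIsometry_apply_single (i := j) (1 : ℂ)
    unfold dl
    simp only [LinearIsometry.coe_toContinuousLinearMap]
    rw [this]; simp

lemma diag_of_hasSimple {Γ : Op} {a : ℕ → ℝ} (hcomp : IsCompactOperator (opT Γ))
    (ha : Summable fun j => a j ^ 2) (hpos : ∀ j, 0 < a j) (hinj : Function.Injective a)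
    (h : HasSimpleSValsSeq Γ a) :
    ∃ W : Op, star W * W = 1 ∧ opT Γ = W * dg (fun n => (a n : ℂ) ^ 2) * star W := by
  have hB := BB_sq ha
  have hsq : Function.Injective (fun j => (a j : ℂ) ^ 2) := by
    intro i j hij
    apply hinj
    have : a i ^ 2 = a j ^ 2 := by
      have hij' : (a i : ℂ) ^ 2 = (a j : ℂ) ^ 2 := hij
      exact_mod_cast hij'
    exact (pow_left_inj₀ (hpos i).le (hpos j).le two_ne_zero).1 this
  have hsym : (opT Γ).toLinearMap.IsSymmetric := by
    intro x y
    change ⟪opT Γ x, y⟫_ℂ = ⟪x, opT Γ y⟫_ℂ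
    rw [opT_eq, op_mul_apply, op_mul_apply,
      ← star_inner_right Γ, ← star_inner_left Γ]
  have hex : ∀ j, ∃ e : L2, ‖e‖ = 1 ∧ opT Γ e = (a j : ℂ) ^ 2 • e ∧
      ∀ w, opT Γ w = (a j : ℂ) ^ 2 • w → ∃ c : ℂ, w = c • e := by
    intro j
    obtain ⟨⟨v, hv⟩, hv0, hv1⟩ := finrank_eq_one_iff'.1 (h.2 j)
    have hv0' : v ≠ 0 := fun h0 => hv0 (Subtype.ext h0)
    have hn : (‖v‖ : ℂ) ≠ 0 := by simpa using hv0'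
    have hv' : opT Γ v = (a j : ℂ) ^ 2 • v := Module.End.mem_eigenspace_iff.1 hv
    refine ⟨(‖v‖ : ℂ)⁻¹ • v, ?_, ?_, ?_⟩
    · rw [norm_smul]; simp [hv0']
    · rw [map_smul, hv', smul_comm]
    · intro w hw
      obtain ⟨c, hc⟩ := hv1 ⟨w, Module.End.mem_eigenspace_iff.2 hw⟩
      have hc' : c • v = w := congrArg Subtype.val hc
      refine ⟨c * ‖v‖, ?_⟩
      rw [smul_smul, mul_assoc, mul_inv_cancel₀ hn, mul_one, hc']
  choose e he1 he2 he3 using hex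
  have hon : Orthonormal ℂ e := by
    refine ⟨he1, fun i j hij => ?_⟩
    have h1 := hsym (e i) (e j)
    change ⟪opT Γ (e i), e j⟫_ℂ = ⟪e i, opT Γ (e j)⟫_ℂ at h1
    rw [he2, he2, inner_smul_left, inner_smul_right] at h1
    simp only [map_pow, Complex.conj_ofReal] at h1
    have h3 : ((a i : ℂ) ^ 2 - (a j : ℂ) ^ 2) * ⟪e i, e j⟫_ℂ = 0 := by linear_combination h1
    rcases mul_eq_zero.1 h3 with h4 | h4
    · exact absurd (hsq (sub_eq_zero.1 h4)) hij
    · exact h4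
  obtain ⟨W, hW, hWe⟩ := iso_of_orthonormal hon
  refine ⟨W, hW, ?_⟩
  have hTW : opT Γ * W = W * dg (fun n => (a n : ℂ) ^ 2) := by
    refine clm_ext fun j => ?_
    simp only [op_mul_apply, dg_dl hB, map_smul, hWe, he2]
  rw [← hTW]
  ext1 x
  have hr : opT Γ (x - W (star W x)) = 0 := by
    have hperp : ∀ j, ⟪e j, x - W (star W x)⟫_ℂ = 0 := by
      intro j
      rw [← hWe, ← star_inner_right, map_sub, iso_apply hW, sub_self, inner_zero_right]
    have hmem : opT Γ (x - W (star W x)) ∈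
        (⨆ μ, Module.End.eigenspace (opT Γ).toLinearMap μ)ᗮ := by
      rw [← Submodule.iInf_orthogonal, Submodule.mem_iInf]
      intro z
      rw [Submodule.mem_orthogonal]
      intro w hw
      have hw' : opT Γ w = z • w := Module.End.mem_eigenspace_iff.1 hw
      have h1 := hsym w (x - W (star W x))
      change ⟪opT Γ w, (x - W (star W x))⟫_ℂ = ⟪w, opT Γ (x - W (star W x))⟫_ℂ at h1
      rw [← h1, hw', inner_smul_left]
      by_cases hz : z = 0
      · simp [hz]
      by_cases hw0 : w = 0
      · simp [hw0]
      have hz2 : z ∈ {z : ℂ | z ≠ 0 ∧ Module.End.HasEigenvalue (opT Γ).toLinearMap z} :=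
        ⟨hz, Module.End.hasEigenvalue_of_hasEigenvector ⟨hw, hw0⟩⟩
      rw [h.1] at hz2
      obtain ⟨j, rfl⟩ := hz2
      obtain ⟨c, hc⟩ := he3 j w hw'
      rw [hc, inner_smul_left, hperp]
      simp
    rw [ContinuousLinearMap.orthogonalComplement_iSup_eigenspaces_eq_bot hcomp hsym] at hmem
    simpa using hmem
  rw [map_sub, sub_eq_zero] at hr
  simpa using hr

lemma diag_of_symm {Γ W : Op} {a : ℕ → ℝ} (hW : star W * W = 1)
    (ha : Summable fun j => a j ^ 2) (hpos : ∀ j, 0 < a j) (hinj : Function.Injective a)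
    (hs : cj Γ = star Γ)
    (h : opT Γ = W * dg (fun n => (a n : ℂ) ^ 2) * star W) :
    ∃ p : ℕ → Circle, Γ = W * dg (fun n => (a n : ℂ) * (p n : ℂ)) * star (cj W) := by
  have hB := BB_sq ha
  have hsq : Function.Injective (fun j => (a j : ℂ) ^ 2) := by
    intro i j hij
    apply hinj
    have : a i ^ 2 = a j ^ 2 := by
      have hij' : (a i : ℂ) ^ 2 = (a j : ℂ) ^ 2 := hij
      exact_mod_cast hij'
    exact (pow_left_inj₀ (hpos i).le (hpos j).le two_ne_zero).1 this
  set D := dg (fun n => (a n : ℂ) ^ 2) with hD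
  have hDc : cj D = D := by
    rw [hD, cj_dg hB]; simp
  rw [opT_eq] at h
  have hWc : star (cj W) * cj W = 1 := by
    rw [← cj_star, ← cj_mul, hW, cj_one]
  have e1 : (1 - W * star W) * Γ = 0 := by
    rw [← CStarRing.mul_star_self_eq_zero_iff]
    have : (1 - W * star W) * Γ * star ((1 - W * star W) * Γ)
      = (1 - W * star W) * (Γ * star Γ) * star (1 - W * star W) := by
      rw [star_mul]; noncomm_ring
    rw [this, h]
    have : (1 - W * star W) * (W * D * star W) = W * (1 - star W * W) * D * star W := by
      noncomm_ring
    rw [this, hW]; simp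
  have e2 : W * star W * Γ = Γ := by
    rw [sub_mul, one_mul, sub_eq_zero] at e1; exact e1.symm
  have e3 : Γ * (cj W * star (cj W)) = Γ := by
    have := congrArg (fun X => star (cj X)) e2
    simp only [cj_mul, cj_star, star_mul, star_star, hs] at this
    rw [← this]
    have e4 : Γ * (cj W * star (cj W)) * (cj W * star (cj W)) =
        Γ * cj W * (star (cj W) * cj W) * star (cj W) := by noncomm_ring
    rw [e4, hWc]; noncomm_ring
  set X := star W * Γ * cj W with hX
  have hΓ : Γ = W * X * star (cj W) := by
    have : W * X * star (cj W) = (W * star W * Γ) * (cj W * star (cj W)) := by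
      rw [hX]; noncomm_ring
    rw [this, e2, e3]
  have hXs : cj X = star X := by
    rw [hX]; simp only [cj_mul, cj_star, star_mul, star_star, cj_cj, hs]
    noncomm_ring
  have hXX : X * cj X = D := by
    rw [hXs, hX]
    have : star W * Γ * cj W * star (star W * Γ * cj W) =
        star W * (Γ * (cj W * star (cj W))) * star Γ * W := by
      simp only [star_mul, star_star]; noncomm_ring
    rw [this, e3]
    have : star W * Γ * star Γ * W = star W * (Γ * star Γ) * W := by noncomm_ring
    rw [this, h]
    have : star W * (W * D * star W) * W = (star W * W) * D * (star W * W) := by noncomm_ring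
    rw [this, hW]; simp
  have hXX' : cj X * X = D := by
    have := congrArg cj hXX
    rwa [cj_mul, cj_cj, hDc] at this
  have hcomm : X * D = D * X := by
    rw [← hXX']
    rw [← mul_assoc, hXX, hXX']
  obtain ⟨x, hx, hXd⟩ := diag_of_comm hB hsq (X := X) hcomm
  have hx2 : ∀ n, ‖x n‖ = a n := by
    intro n
    rw [hXd, cj_dg hx, dg_mul hx hx.conj, hD] at hXX
    have hb : BB (fun n => x n * conj (x n)) := by
      obtain ⟨C, hC⟩ := hx
      refine ⟨C * C, fun n => ?_⟩
      rw [norm_mul]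
      exact mul_le_mul (hC n) (by simpa using hC n) (norm_nonneg _) ((norm_nonneg _).trans (hC 0))
    have := congrFun (dg_inj hb hB hXX) n
    simp only [Complex.mul_conj'] at this
    have h4 : ‖x n‖ ^ 2 = a n ^ 2 := by exact_mod_cast this
    exact (pow_left_inj₀ (norm_nonneg _) (hpos n).le two_ne_zero).1 h4
  have hne : ∀ n, (a n : ℂ) ≠ 0 := fun n => by simpa using (hpos n).ne'
  refine ⟨fun n => ⟨x n / a n, ?_⟩, ?_⟩
  · change x n / a n ∈ Metric.sphere (0 : ℂ) 1
    rw [mem_sphere_zero_iff_norm, norm_div, hx2, Complex.norm_real, Real.norm_of_nonneg (hpos n).le, div_self (hpos n).ne']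
  · rw [hΓ, hXd]
    congr 3
    funext n
    simp only
    field_simp [hne n]


/-- finite Cauchy weights -/
def wN (x y : ℕ → ℝ) (N j : ℕ) : ℝ :=
  (∏ k ∈ Finset.range N, (x j - y k)) / ∏ k ∈ (Finset.range N).erase j, (x j - x k)

section weights
variable {x y : ℕ → ℝ}

lemma x_anti (h1 : ∀ j, y j < x j) (h2 : ∀ j, x (j + 1) < y j) : StrictAnti x :=
  strictAnti_nat_of_succ_lt fun j => (h2 j).trans (h1 j)

lemma y_anti (h1 : ∀ j, y j < x j) (h2 : ∀ j, x (j + 1) < y j) : StrictAnti y :=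
  strictAnti_nat_of_succ_lt fun j => (h1 _).trans (h2 j)

lemma poly_deg (N : ℕ) :
    (Lagrange.nodal (Finset.range N) x - Lagrange.nodal (Finset.range N) y).degree
      < (Finset.range N).card := by
  have := Polynomial.degree_sub_lt_left (p := Lagrange.nodal (Finset.range N) x)
    (q := Lagrange.nodal (Finset.range N) y) (by simp [Lagrange.degree_nodal])
    Lagrange.nodal_ne_zero
    (by rw [Lagrange.nodal_monic.leadingCoeff, Lagrange.nodal_monic.leadingCoeff])
  rwa [Lagrange.degree_nodal] at this

lemma wN_identity (hinj : Function.Injective x) (N : ℕ) (z : ℝ) (hz : ∀ k, z ≠ x k) :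
    ∏ k ∈ Finset.range N, (z - y k) =
      (∏ k ∈ Finset.range N, (z - x k)) *
        (1 - ∑ j ∈ Finset.range N, wN x y N j / (x j - z)) := by
  have h := Lagrange.eq_interpolate (s := Finset.range N) (v := x) hinj.injOn
    (poly_deg (x := x) (y := y) N)
  have h2 := congrArg (Polynomial.eval z) h
  rw [Lagrange.eval_interpolate_not_at_node _ (fun i _ => hz i)] at h2
  simp only [Polynomial.eval_sub, Lagrange.eval_nodal] at h2
  rw [mul_sub, mul_one]
  have h3 : ∑ i ∈ Finset.range N, Lagrange.nodalWeight (Finset.range N) x i * (z - x i)⁻¹ *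
      (∏ j ∈ Finset.range N, (x i - x j) - ∏ j ∈ Finset.range N, (x i - y j)) =
      ∑ j ∈ Finset.range N, wN x y N j / (x j - z) := by
    refine Finset.sum_congr rfl fun i hi => ?_
    rw [Finset.prod_eq_zero (i := i) hi (sub_self _), Lagrange.nodalWeight, wN,
      Finset.prod_inv_distrib]
    rw [← neg_sub (x i) z, inv_neg, div_eq_mul_inv, div_eq_mul_inv]
    ring
  rw [h3] at h2
  linarith

lemma wN_sum (hinj : Function.Injective x) (N : ℕ) :
    ∑ j ∈ Finset.range N, wN x y N j = ∑ j ∈ Finset.range N, (x j - y j) := by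
  rcases Nat.eq_zero_or_pos N with rfl | hN
  · simp
  have h := Lagrange.coeff_eq_sum (s := Finset.range N) (v := x) hinj.injOn
    (poly_deg (x := x) (y := y) N)
  rw [Polynomial.coeff_sub, Lagrange.nodal_eq, Lagrange.nodal_eq,
    Polynomial.prod_X_sub_C_coeff_card_pred _ _ (by simpa using hN),
    Polynomial.prod_X_sub_C_coeff_card_pred _ _ (by simpa using hN)] at h
  have h3 : ∑ j ∈ Finset.range N, wN x y N j = -(-∑ i ∈ Finset.range N, x i - -∑ i ∈ Finset.range N, y i) := by
    rw [h, ← Finset.sum_neg_distrib]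
    refine Finset.sum_congr rfl fun i hi => ?_
    simp only [Polynomial.eval_sub, Polynomial.eval_prod, Polynomial.eval_X, Polynomial.eval_C]
    rw [Finset.prod_eq_zero (i := i) hi (sub_self _), wN]
    ring
  rw [h3, Finset.sum_sub_distrib]; ring

lemma wN_pos (h1 : ∀ j, y j < x j) (h2 : ∀ j, x (j + 1) < y j) {N j : ℕ} (hj : j < N) :
    0 < wN x y N j := by
  have hx := x_anti h1 h2
  rw [wN, ← Finset.mul_prod_erase _ _ (Finset.mem_range.2 hj), mul_div_assoc,
    ← Finset.prod_div_distrib]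
  refine mul_pos (sub_pos.2 (h1 j)) (Finset.prod_pos fun k hk => ?_)
  have hne : k ≠ j := (Finset.mem_erase.1 hk).1
  rcases lt_or_gt_of_ne hne with hlt | hgt
  · apply div_pos_of_neg_of_neg
    · have : x j ≤ x (k + 1) := hx.antitone hlt
      linarith [h2 k]
    · linarith [hx hlt]
  · apply div_pos
    · linarith [hx hgt, h1 k]
    · linarith [hx hgt]

lemma wN_succ (h1 : ∀ j, y j < x j) (h2 : ∀ j, x (j + 1) < y j) {N j : ℕ} (hj : j < N) :
    wN x y N j ≤ wN x y (N + 1) j := by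
  have hx := x_anti h1 h2
  have hpos := wN_pos h1 h2 hj
  have : wN x y (N + 1) j = wN x y N j * ((x j - y N) / (x j - x N)) := by
    have he : (Finset.range (N + 1)).erase j = insert N ((Finset.range N).erase j) := by
      ext k; simp only [Finset.mem_erase, Finset.mem_range, Finset.mem_insert]; omega
    rw [wN, wN, he, Finset.prod_insert (by simp), Finset.prod_range_succ]
    rw [mul_comm (x j - x N), mul_div_mul_comm]
  rw [this]
  have h3 : 0 < x j - x N := sub_pos.2 (hx hj)
  refine le_mul_of_one_le_right hpos.le ?_
  rw [one_le_div h3]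
  linarith [h1 N]

lemma sep (h1 : ∀ j, y j < x j) (h2 : ∀ j, x (j + 1) < y j) (m : ℕ) :
    ∃ δ : ℝ, 0 < δ ∧ ∀ j, δ ≤ |x j - y m| := by
  have hx := x_anti h1 h2
  refine ⟨min (x m - y m) (y m - x (m + 1)), lt_min (sub_pos.2 (h1 m)) (sub_pos.2 (h2 m)), ?_⟩
  intro j
  rcases le_or_gt j m with h | h
  · refine (min_le_left _ _).trans (le_trans ?_ (le_abs_self _))
    linarith [hx.antitone h]
  · refine (min_le_right _ _).trans (le_trans ?_ (neg_le_abs _))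
    have : x j ≤ x (m + 1) := hx.antitone h
    linarith

/-- extended weights -/
def wE (x y : ℕ → ℝ) (N j : ℕ) : ℝ := if j < N then wN x y N j else 0

lemma exists_weights (h1 : ∀ j, y j < x j) (h2 : ∀ j, x (j + 1) < y j) (h3 : ∀ j, 0 < y j)
    (hs : Summable x) :
    ∃ w : ℕ → ℝ, (∀ j, 0 < w j) ∧ HasSum w (∑' j, (x j - y j)) ∧
      (∀ m, HasSum (fun j => w j / (x j - y m)) 1) ∧
      Summable (fun j => w j / x j) ∧ ∑' j, w j / x j ≤ 1 := by
  have hx := x_anti h1 h2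
  have hy := y_anti h1 h2
  have hx0 : ∀ j, 0 < x j := fun j => (h3 j).trans (h1 j)
  have hsy : Summable y := Summable.of_nonneg_of_le (fun j => (h3 j).le) (fun j => (h1 j).le) hs
  have hsxy : Summable fun j => x j - y j := hs.sub hsy
  have hd0 : ∀ j, 0 ≤ x j - y j := fun j => (sub_pos.2 (h1 j)).le
  have hE0 : ∀ N j, 0 ≤ wE x y N j := by
    intro N j; unfold wE; split_ifs with h
    · exact (wN_pos h1 h2 h).le
    · exact le_rfl
  have hmono : ∀ j, Monotone fun N => wE x y N j := by
    intro j
    refine monotone_nat_of_le_succ fun N => ?_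
    by_cases h : j < N
    · have h' : j < N + 1 := by omega
      simp only [wE, h, h', if_true]
      exact wN_succ h1 h2 h
    · have : wE x y N j = 0 := by simp [wE, h]
      rw [this]; exact hE0 _ _
  have hEsum : ∀ (f : ℕ → ℝ) N, HasSum (fun j => wE x y N j * f j)
      (∑ j ∈ Finset.range N, wN x y N j * f j) := by
    intro f N
    have : ∑ j ∈ Finset.range N, wN x y N j * f j = ∑ j ∈ Finset.range N, wE x y N j * f j := by
      refine Finset.sum_congr rfl fun j hj => ?_
      simp [wE, Finset.mem_range.1 hj]
    rw [this]
    refine hasSum_sum_of_ne_finset_zero fun j hj => ?_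
    have : ¬ j < N := by simpa using hj
    simp [wE, this]
  set S := ∑' j, (x j - y j) with hS
  have hEtot : ∀ N, ∑' j, wE x y N j = ∑ j ∈ Finset.range N, (x j - y j) := by
    intro N
    have := (hEsum (fun _ => 1) N).tsum_eq
    simpa [wN_sum hx.injective] using this
  have hEs : ∀ N, Summable (wE x y N) := by
    intro N
    have := (hEsum (fun _ => 1) N).summable
    simpa using this
  have hElS : ∀ N, ∑' j, wE x y N j ≤ S := by
    intro N; rw [hEtot]; exact hsxy.sum_le_tsum _ (fun j _ => hd0 j)
  have hEb : ∀ N j, wE x y N j ≤ S := fun N j =>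
    ((hEs N).le_tsum j (fun i _ => hE0 N i)).trans (hElS N)
  set w : ℕ → ℝ := fun j => ⨆ N, wE x y N j with hw
  have hbdd : ∀ j, BddAbove (Set.range fun N => wE x y N j) := fun j => ⟨S, by
    rintro _ ⟨N, rfl⟩; exact hEb N j⟩
  have htend : ∀ j, Filter.Tendsto (fun N => wE x y N j) Filter.atTop (nhds (w j)) :=
    fun j => tendsto_atTop_ciSup (hmono j) (hbdd j)
  have hle : ∀ N j, wE x y N j ≤ w j := fun N j => le_ciSup (hbdd j) N
  have hwpos : ∀ j, 0 < w j := by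
    intro j
    refine lt_of_lt_of_le ?_ (hle (j + 1) j)
    simp only [wE, Nat.lt_succ_self, if_true]
    exact wN_pos h1 h2 (Nat.lt_succ_self j)
  have hws : Summable w := by
    refine summable_of_sum_le (c := S) (fun j => (hwpos j).le) fun u => ?_
    refine le_of_tendsto (tendsto_finsetSum u fun j _ => htend j) ?_
    refine Filter.Eventually.of_forall fun N => ?_
    exact ((hEs N).sum_le_tsum u fun j _ => hE0 N j).trans (hElS N)
  have hdom : ∀ (f : ℕ → ℝ) (C : ℝ), (∀ j, |f j| ≤ C) →
      Summable (fun j => w j * f j) ∧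
      Filter.Tendsto (fun N => ∑ j ∈ Finset.range N, wN x y N j * f j) Filter.atTop
        (nhds (∑' j, w j * f j)) := by
    intro f C hf
    have hC : 0 ≤ C := (abs_nonneg _).trans (hf 0)
    constructor
    · refine Summable.of_norm_bounded (hws.mul_right C) fun j => ?_
      rw [norm_mul, Real.norm_of_nonneg (hwpos j).le]
      exact mul_le_mul_of_nonneg_left (hf j) (hwpos j).le
    · simp only [← (hEsum f _).tsum_eq]
      refine tendsto_tsum_of_dominated_convergence (bound := fun j => w j * C) (hws.mul_right C)
        (fun j => (htend j).mul_const _) (Filter.Eventually.of_forall fun N j => ?_)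
      rw [norm_mul, Real.norm_of_nonneg (hE0 N j)]
      exact mul_le_mul (hle N j) (hf j) (abs_nonneg _) (hwpos j).le
  have hfin : ∀ N, ∑ j ∈ Finset.range N, wN x y N j / x j ≤ 1 := by
    intro N
    have h := wN_identity (y := y) hx.injective N 0 (fun k => (hx0 k).ne)
    simp only [zero_sub, sub_zero, Finset.prod_neg] at h
    rw [mul_assoc] at h
    have hu : ((-1 : ℝ) ^ (Finset.range N).card) ≠ 0 := by simp
    have h' := mul_left_cancel₀ hu h
    have hp1 : 0 < ∏ k ∈ Finset.range N, y k := Finset.prod_pos fun k _ => h3 k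
    have hp2 : 0 < ∏ k ∈ Finset.range N, x k := Finset.prod_pos fun k _ => hx0 k
    rw [h'] at hp1
    have := (mul_pos_iff_of_pos_left hp2).1 hp1
    linarith
  have hpart : ∀ u : Finset ℕ, ∑ j ∈ u, w j / x j ≤ 1 := by
    intro u
    refine le_of_tendsto (tendsto_finsetSum u fun j _ => (htend j).div_const (x j)) ?_
    refine Filter.Eventually.of_forall fun N => ?_
    have hsum := hEsum (fun j => (x j)⁻¹) N
    have := hsum.summable.sum_le_tsum u (fun j _ => mul_nonneg (hE0 N j) (inv_nonneg.2 (hx0 j).le))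
    rw [hsum.tsum_eq] at this
    simp only [← div_eq_mul_inv] at this
    exact this.trans (hfin N)
  have hsd : Summable fun j => w j / x j :=
    summable_of_sum_le (fun j => (div_pos (hwpos j) (hx0 j)).le) hpart
  refine ⟨w, hwpos, ?_, ?_, hsd, hsd.tsum_le_of_sum_le hpart⟩
  · have h := (hdom (fun _ => 1) 1 (by simp)).2
    simp only [mul_one, wN_sum hx.injective] at h
    have h' := hsxy.hasSum.tendsto_sum_nat
    rw [tendsto_nhds_unique h' h] at hS
    rw [hS]
    exact hws.hasSum
  · intro m
    obtain ⟨δ, hδ, hsep⟩ := sep h1 h2 m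
    have h := hdom (fun j => (x j - y m)⁻¹) δ⁻¹ (fun j => by
      rw [abs_inv]; exact inv_anti₀ hδ (hsep j))
    have hone : ∑' j, w j * (x j - y m)⁻¹ = 1 := by
      refine tendsto_nhds_unique h.2 (tendsto_const_nhds.congr' ?_)
      filter_upwards [Filter.eventually_gt_atTop m] with N hN
      have hne : ∀ k, y m ≠ x k := fun k hk => by
        have := hsep k; rw [hk, sub_self, abs_zero] at this; linarith
      have h := wN_identity (y := y) hx.injective N (y m) hne
      rw [Finset.prod_eq_zero (i := m) (Finset.mem_range.2 hN) (sub_self _)] at h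
      have hp : ∏ k ∈ Finset.range N, (y m - x k) ≠ 0 :=
        Finset.prod_ne_zero_iff.2 fun k _ => sub_ne_zero.2 (hne k)
      have h5 := (mul_eq_zero.1 h.symm).resolve_left hp
      simp only [← div_eq_mul_inv]
      linarith
    simp only [div_eq_mul_inv]
    rw [← hone]
    exact h.1.hasSum

end weights


lemma rk_star (u : L2) : star (rk u) = rk u := by
  ext1 x
  refine ext_inner_left ℂ fun y => ?_
  rw [star_inner_right, rk_apply, rk_apply, inner_smul_left, inner_smul_right, inner_conj_symm]
  ring

lemma BB_lam {a : ℕ → ℝ} (ha : Summable fun j => a j ^ 2) : BB (fun n => (a n : ℂ)) := by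
  obtain ⟨C, hC⟩ := BB_sq ha
  refine ⟨C + 1, fun n => ?_⟩
  have := hC n
  rw [norm_pow] at this
  nlinarith [sq_nonneg (‖(a n : ℂ)‖ - 1), norm_nonneg (a n : ℂ)]

lemma defect_nonneg {v : L2} (hv : ‖v‖ ≤ 1) (r : L2) :
    ‖r - ⟪v, r⟫_ℂ • v‖ ^ 2 ≤ (⟪r, ((1 : Op) - rk v) r⟫_ℂ).re := by
  have h1 : ‖r - ⟪v, r⟫_ℂ • v‖ ^ 2 = ‖r‖ ^ 2 - 2 * ‖⟪v, r⟫_ℂ‖ ^ 2 + ‖⟪v, r⟫_ℂ‖ ^ 2 * ‖v‖ ^ 2 := by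
    rw [@norm_sub_sq ℂ, inner_smul_right, norm_smul, ← inner_conj_symm r v, Complex.mul_conj,
      Complex.normSq_eq_norm_sq, mul_pow]
    simp only [RCLike.re_to_complex, Complex.ofReal_re]
  have h2 : (⟪r, ((1 : Op) - rk v) r⟫_ℂ).re = ‖r‖ ^ 2 - ‖⟪v, r⟫_ℂ‖ ^ 2 := by
    have : ((1 : Op) - rk v) r = r - ⟪v, r⟫_ℂ • v := rfl
    rw [this, inner_sub_right, inner_smul_right, ← inner_conj_symm r v, Complex.mul_conj,
      Complex.normSq_eq_norm_sq, inner_self_eq_norm_sq_to_K, Complex.sub_re]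
    norm_cast
  rw [h1, h2]
  have : ‖v‖ ^ 2 ≤ 1 := by nlinarith [norm_nonneg v]
  nlinarith [sq_nonneg ‖⟪v, r⟫_ℂ‖]

structure Mdl (lam mu : ℕ → ℝ) where
  ν : ℕ → ℝ
  u0 : L2
  v0 : L2
  F : Op
  lam_anti : StrictAnti lam
  lam_pos : ∀ j, 0 < lam j
  lam_sum : Summable fun j => lam j ^ 2
  mu_anti : StrictAnti mu
  mu_pos : ∀ j, 0 < mu j
  mu_sum : Summable fun j => mu j ^ 2
  ν_pos : ∀ j, 0 < ν j
  u0_apply : ∀ j, u0 j = (ν j : ℂ)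
  v0_apply : ∀ j, v0 j = (ν j : ℂ) / (lam j : ℂ)
  v0_norm : ‖v0‖ ≤ 1
  hF : star F * F = 1
  cjF : cj F = F
  hT : dg (fun n => (lam n : ℂ) ^ 2) - rk u0 = F * dg (fun n => (mu n : ℂ) ^ 2) * star F

lemma exists_model (lam mu : ℕ → ℝ)
    (h1 : ∀ j : ℕ, mu j < lam j)
    (h2 : ∀ j : ℕ, lam (j + 1) < mu j)
    (h3 : ∀ j : ℕ, 0 < mu j)
    (hsum : Summable fun j : ℕ => lam j ^ 2) : Nonempty (Mdl lam mu) := by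
  have hlp : ∀ j, 0 < lam j := fun j => (h3 j).trans (h1 j)
  set x : ℕ → ℝ := fun j => lam j ^ 2 with hx
  set y : ℕ → ℝ := fun j => mu j ^ 2 with hy
  have H1 : ∀ j, y j < x j := fun j => pow_lt_pow_left₀ (h1 j) (h3 j).le two_ne_zero
  have H2 : ∀ j, x (j + 1) < y j := fun j => pow_lt_pow_left₀ (h2 j) (hlp _).le two_ne_zero
  have H3 : ∀ j, 0 < y j := fun j => pow_pos (h3 j) 2
  have hxp : ∀ j, 0 < x j := fun j => pow_pos (hlp j) 2
  have hysum : Summable y := Summable.of_nonneg_of_le (fun j => (H3 j).le) (fun j => (H1 j).le) hsum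
  obtain ⟨w, hw0, hwsum, hw1, hwx, hwx1⟩ := exists_weights H1 H2 H3 hsum
  have hyinj : Function.Injective y := (y_anti H1 H2).injective
  set ν : ℕ → ℝ := fun j => Real.sqrt (w j) with hν
  have hν2 : ∀ j, ν j ^ 2 = w j := fun j => Real.sq_sqrt (hw0 j).le
  have hνp : ∀ j, 0 < ν j := fun j => Real.sqrt_pos.2 (hw0 j)
  let u0 : L2 := ⟨fun j => (ν j : ℂ), memL2_of_le hwsum.summable (fun n => by
    rw [Complex.norm_real, Real.norm_eq_abs, sq_abs, hν2])⟩
  have hu0 : ∀ j, u0 j = (ν j : ℂ) := fun j => rfl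
  let v0 : L2 := ⟨fun j => (ν j : ℂ) / (lam j : ℂ), memL2_of_le hwx (fun n => by
    rw [norm_div, Complex.norm_real, Complex.norm_real, div_pow, Real.norm_eq_abs,
      Real.norm_eq_abs, sq_abs, sq_abs, hν2])⟩
  have hv0 : ∀ j, v0 j = (ν j : ℂ) / (lam j : ℂ) := fun j => rfl
  have hv0n : ‖v0‖ ≤ 1 := by
    have := (L2_norm_sq v0).tsum_eq
    have h' : ∀ n, ‖v0 n‖ ^ 2 = w n / x n := fun n => by
      rw [hv0, norm_div, Complex.norm_real, Complex.norm_real, div_pow, Real.norm_eq_abs,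
        Real.norm_eq_abs, sq_abs, sq_abs, hν2]
    simp_rw [h'] at this
    rw [this] at hwx1
    nlinarith [norm_nonneg v0]
  have hBx : BB (fun n => (lam n : ℂ) ^ 2) := BB_sq hsum
  have hBl : BB (fun n => (lam n : ℂ)) := BB_lam hsum
  have hBy : BB (fun n => (mu n : ℂ) ^ 2) := BB_sq hysum
  set D : Op := dg (fun n => (lam n : ℂ)) with hD
  have hDs : star D = D := by
    rw [hD, dg_star hBl]; simp
  have hDv : D v0 = u0 := by
    apply L2_ext_inner; intro n
    rw [hD, dg_apply hBl, hv0, hu0]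
    have : (lam n : ℂ) ≠ 0 := by exact_mod_cast (hlp n).ne'
    field_simp
  set T : Op := dg (fun n => (lam n : ℂ) ^ 2) - rk u0 with hT
  have hDD : D * D = dg (fun n => (lam n : ℂ) ^ 2) := by
    rw [hD, dg_mul hBl hBl]; congr 1; funext n; ring
  have hTD : T = D * (1 - rk v0) * D := by
    have := rk_conj D v0
    rw [hDs, hDv] at this
    rw [hT, ← this, ← hDD]; noncomm_ring
  have hTs : star T = T := by
    rw [hTD]; simp only [star_mul, star_sub, star_one, rk_star, hDs]; noncomm_ring
  -- eigenvectors
  have hxy : ∀ j m, x j - y m ≠ 0 := by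
    intro j m h
    obtain ⟨δ, hδ, h'⟩ := sep H1 H2 m
    have := h' j
    rw [h, abs_zero] at this; linarith
  have hg : ∀ m, Memℓp (fun j => ((ν j / (x j - y m) : ℝ) : ℂ)) 2 := by
    intro m
    obtain ⟨δ, hδ, h'⟩ := sep H1 H2 m
    refine memL2_of_le (hwsum.summable.mul_left (1 / δ ^ 2)) fun j => ?_
    rw [Complex.norm_real, Real.norm_eq_abs, sq_abs, div_pow, hν2]
    have : δ ^ 2 ≤ (x j - y m) ^ 2 := by
      rw [← sq_abs (x j - y m)]; exact pow_le_pow_left₀ hδ.le (h' j) 2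
    rw [one_div_mul_eq_div]
    exact div_le_div_of_nonneg_left (hw0 j).le (by positivity) this
  let g : ℕ → L2 := fun m => ⟨_, hg m⟩
  have hga : ∀ m j, g m j = ((ν j / (x j - y m) : ℝ) : ℂ) := fun m j => rfl
  have hug : ∀ m, ⟪u0, g m⟫_ℂ = 1 := by
    intro m
    rw [inner_L2]
    have h' : ∀ n, conj (u0 n) * g m n = ((w n / (x n - y m) : ℝ) : ℂ) := by
      intro n
      rw [hu0, hga, Complex.conj_ofReal, ← Complex.ofReal_mul, ← hν2]; congr 1; ring
    simp_rw [h']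
    rw [← Complex.ofReal_tsum, (hw1 m).tsum_eq, Complex.ofReal_one]
  have hTg : ∀ m, T (g m) = ((mu m : ℂ) ^ 2) • g m := by
    intro m
    apply L2_ext_inner; intro n
    have e1 : (T (g m)) n = (dg (fun n => (lam n : ℂ) ^ 2) (g m)) n - (rk u0 (g m)) n := rfl
    have e2 : (rk u0 (g m)) n = u0 n := by rw [rk_apply, hug, one_smul]
    have e3 : (((mu m : ℂ) ^ 2) • g m) n = (mu m : ℂ) ^ 2 * g m n := rfl
    rw [e1, e2, e3, dg_apply hBx, hu0, hga]
    have := hxy n m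
    have h4 : lam n ^ 2 * (ν n / (x n - y m)) - ν n = mu m ^ 2 * (ν n / (x n - y m)) := by
      have e : x n * (ν n / (x n - y m)) - ν n = y m * (ν n / (x n - y m)) := by
        field_simp; ring
      exact e
    have h5 := congrArg (fun t : ℝ => (t : ℂ)) h4
    simp only [Complex.ofReal_sub, Complex.ofReal_mul, Complex.ofReal_pow] at h5
    simp only [Complex.ofReal_sub, Complex.ofReal_mul, Complex.ofReal_pow]
    exact h5
  have hgne : ∀ m, g m ≠ 0 := by
    intro m h
    have := hug m
    rw [h, inner_zero_right] at this; exact zero_ne_one this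
  have hgo : ∀ m k, m ≠ k → ⟪g m, g k⟫_ℂ = 0 := by
    intro m k hmk
    have e1 : ⟪g m, T (g k)⟫_ℂ = (mu k : ℂ) ^ 2 * ⟪g m, g k⟫_ℂ := by
      rw [hTg, inner_smul_right]
    have e2 : ⟪g m, T (g k)⟫_ℂ = (mu m : ℂ) ^ 2 * ⟪g m, g k⟫_ℂ := by
      rw [← star_inner_left, hTs, hTg, inner_smul_left]; simp
    have e3 : ((mu k : ℂ) ^ 2 - (mu m : ℂ) ^ 2) * ⟪g m, g k⟫_ℂ = 0 := by
      rw [sub_mul, ← e1, ← e2, sub_self]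
    rcases mul_eq_zero.1 e3 with h | h
    · exfalso
      have h' : y k = y m := by
        have : (mu k : ℂ) ^ 2 = (mu m : ℂ) ^ 2 := sub_eq_zero.1 h
        exact_mod_cast this
      exact hmk (hyinj h').symm
    · exact h
  let f : ℕ → L2 := fun m => ((‖g m‖⁻¹ : ℝ) : ℂ) • g m
  have hf : Orthonormal ℂ f := by
    constructor
    · intro m
      have : ‖g m‖ ≠ 0 := norm_ne_zero_iff.2 (hgne m)
      simp only [f, norm_smul, Complex.norm_real, norm_inv, norm_norm]
      field_simp
    · intro m k hmk
      simp only [f, inner_smul_left, inner_smul_right, hgo m k hmk, mul_zero]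
  obtain ⟨F, hF, hFf⟩ := iso_of_orthonormal hf
  have hcF : cj F = F := by
    apply clm_ext; intro n
    rw [cj_apply, star_dl, hFf]
    apply L2_ext_inner; intro j
    have e1 : (star (f n)) j = conj ((f n) j) := rfl
    have e2 : (f n) j = ((‖g n‖⁻¹ : ℝ) : ℂ) * g n j := rfl
    rw [e1, e2, hga, map_mul, Complex.conj_ofReal, Complex.conj_ofReal]
  set E : Op := dg (fun n => (mu n : ℂ) ^ 2) with hE
  have hEs : star E = E := by rw [hE, dg_star hBy]; simp
  have hTF : T * F = F * E := by
    apply clm_ext; intro n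
    rw [op_mul_apply, op_mul_apply, hE, dg_dl hBy, map_smul, hFf]
    simp only [f, map_smul, hTg]
    rw [smul_comm]
  have hFT : star F * T = E * star F := by
    have := congrArg star hTF
    simpa only [star_mul, hTs, hEs] using this
  set Z : Op := T - F * E * star F with hZ
  set Q : Op := 1 - F * star F with hQ
  have hQs : star Q = Q := by rw [hQ]; simp
  have hZ1 : Z = T * Q := by
    rw [hZ, hQ, mul_sub, mul_one, ← mul_assoc, hTF]
  have hZ2 : Z = Q * T * Q := by
    rw [mul_assoc, ← hZ1, hQ, sub_mul, one_mul, hZ, mul_sub]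
    have e1 : F * star F * T = F * E * star F := by rw [mul_assoc, hFT, mul_assoc]
    have e2 : F * star F * (F * E * star F) = F * E * star F := by
      calc F * star F * (F * E * star F) = F * (star F * F) * E * star F := by noncomm_ring
        _ = _ := by rw [hF, mul_one]
    rw [e1, e2, sub_self, sub_zero]
  have hZn : ∀ n, ⟪dl n, Z (dl n)⟫_ℂ = ⟪D (Q (dl n)), (1 - rk v0) (D (Q (dl n)))⟫_ℂ := by
    intro n
    have e : Z = star Q * (star D * ((1 - rk v0) * (D * Q))) := by
      rw [hZ2, hTD, hQs, hDs]; noncomm_ring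
    rw [e, op_mul_apply, star_inner_right, op_mul_apply, star_inner_right]
    rfl
  have hsumZ : HasSum (fun n => ⟪dl n, Z (dl n)⟫_ℂ) 0 := by
    have t1 := trace_lemma (W := (1 : Op)) (by simp) hsum (fun n => (hxp n).le)
    have t2 := trace_lemma hF hysum (fun n => (H3 n).le)
    have t3 : HasSum (fun n => ((w n : ℝ) : ℂ)) ((∑' j, (x j - y j) : ℝ) : ℂ) :=
      Complex.hasSum_ofReal.2 hwsum
    have t4 := (t1.sub t3).sub t2
    have e0 : (fun n => ⟪dl n, Z (dl n)⟫_ℂ) = fun b =>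
      ⟪dl b, ((1 * dg fun n => (x n : ℂ)) * star (1 : Op)) (dl b)⟫_ℂ - (w b : ℂ) -
        ⟪dl b, ((F * dg fun n => (y n : ℂ)) * star F) (dl b)⟫_ℂ := by
      funext n
      have e1 : Z (dl n) = dg (fun n => (lam n : ℂ) ^ 2) (dl n) - rk u0 (dl n)
        - (F * E * star F) (dl n) := rfl
      have e2 : ⟪dl n, rk u0 (dl n)⟫_ℂ = (w n : ℂ) := by
        rw [rk_apply, inner_smul_right, inner_dl, ← inner_conj_symm, inner_dl, hu0,
          Complex.conj_ofReal, ← Complex.ofReal_mul, ← hν2]; congr 1; ring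
      rw [e1, inner_sub_right, inner_sub_right, e2]
      simp [hE, hx, hy]
    have e9 : (((∑' j, x j : ℝ) : ℂ) - ((∑' j, (x j - y j) : ℝ) : ℂ) - ((∑' j, y j : ℝ) : ℂ)) = 0 := by
      rw [hsum.tsum_sub hysum, Complex.ofReal_sub]; ring
    rw [e9] at t4
    rw [e0]; exact t4
  have hsumZr : HasSum (fun n => (⟪dl n, Z (dl n)⟫_ℂ).re) 0 := by
    simpa using Complex.hasSum_re hsumZ
  have hnn : ∀ n, ‖D (Q (dl n)) - ⟪v0, D (Q (dl n))⟫_ℂ • v0‖ ^ 2 ≤ (⟪dl n, Z (dl n)⟫_ℂ).re := by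
    intro n; rw [hZn]; exact defect_nonneg hv0n _
  have hz : ∀ n, (⟪dl n, Z (dl n)⟫_ℂ).re = 0 := by
    have := (hasSum_zero_iff_of_nonneg (fun n => (sq_nonneg _).trans (hnn n))).1 hsumZr
    intro n; exact congrFun this n
  have hZ0 : Z = 0 := by
    apply clm_ext; intro n
    have h' := hnn n
    rw [hz] at h'
    have h'' : D (Q (dl n)) - ⟪v0, D (Q (dl n))⟫_ℂ • v0 = 0 := by
      rw [← norm_eq_zero]; exact pow_eq_zero_iff two_ne_zero |>.1 (le_antisymm h' (sq_nonneg _))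
    rw [hZ1, hTD]
    have : (D * (1 - rk v0) * D * Q) (dl n) = D (D (Q (dl n)) - ⟪v0, D (Q (dl n))⟫_ℂ • v0) := rfl
    rw [this, h'', map_zero]; rfl
  have hanti := x_anti H1 H2
  exact ⟨{
    ν := ν, u0 := u0, v0 := v0, F := F,
    lam_anti := (fun i j hij => lt_of_pow_lt_pow_left₀ 2 (hlp i).le (hanti hij)),
    lam_pos := hlp, lam_sum := hsum,
    mu_anti := (fun i j hij => lt_of_pow_lt_pow_left₀ 2 (h3 i).le (y_anti H1 H2 hij)),
    mu_pos := h3, mu_sum := hysum, ν_pos := hνp, u0_apply := hu0, v0_apply := hv0,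
    v0_norm := hv0n, hF := hF, cjF := hcF, hT := sub_eq_zero.1 hZ0 }⟩


lemma dg_cancel_right {a : ℕ → ℂ} (ha : BB a) (h0 : ∀ n, a n ≠ 0) {X Y : Op}
    (h : X * dg a = Y * dg a) : X = Y := by
  apply clm_ext; intro n
  have h' := congrArg (fun Z : Op => Z (dl n)) h
  simp only [op_mul_apply, dg_dl ha, map_smul] at h'
  exact smul_right_injective L2 (h0 n) h'

lemma dg_cancel_left {a : ℕ → ℂ} (ha : BB a) (h0 : ∀ n, a n ≠ 0) {X Y : Op}
    (h : dg a * X = dg a * Y) : X = Y := by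
  ext1 x
  apply L2_ext_inner; intro n
  have h' := congrArg (fun Z : Op => (Z x) n) h
  simp only [op_mul_apply, dg_apply ha] at h'
  exact mul_left_cancel₀ (h0 n) h'

lemma inner_self_c (x : L2) : ⟪x, x⟫_ℂ = ((‖x‖ ^ 2 : ℝ) : ℂ) := by
  rw [inner_self_eq_norm_sq_to_K]; simp

lemma inner_rk (u x : L2) : ⟪x, rk u x⟫_ℂ = ((‖⟪u, x⟫_ℂ‖ ^ 2 : ℝ) : ℂ) := by
  rw [rk_apply, inner_smul_right, ← inner_conj_symm x, Complex.mul_conj, Complex.normSq_eq_norm_sq]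

lemma iso_norm {W : Op} (hW : star W * W = 1) (x : L2) : ‖W x‖ = ‖x‖ := by
  have h : ⟪W x, W x⟫_ℂ = ⟪x, x⟫_ℂ := by rw [← star_inner_right, iso_apply hW]
  rw [inner_self_eq_norm_sq_to_K, inner_self_eq_norm_sq_to_K] at h
  have h2 : ‖W x‖ ^ 2 = ‖x‖ ^ 2 := by exact_mod_cast h
  exact (pow_left_inj₀ (norm_nonneg _) (norm_nonneg _) two_ne_zero).1 h2

lemma star_contr {X : Op} (hX : ∀ x, ‖X x‖ ≤ ‖x‖) (x : L2) : ‖star X x‖ ≤ ‖x‖ := by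
  have h : ‖star X x‖ ^ 2 ≤ ‖star X x‖ * ‖x‖ := by
    have e : ⟪star X x, star X x⟫_ℂ = ⟪x, X (star X x)⟫_ℂ := by rw [star_inner_left]
    have e2 := inner_self_eq_norm_sq_to_K (𝕜 := ℂ) (star X x)
    have e3 : ‖(⟪star X x, star X x⟫_ℂ)‖ = ‖star X x‖ ^ 2 := by rw [e2]; simp
    rw [← e3, e]
    calc _ ≤ ‖x‖ * ‖X (star X x)‖ := norm_inner_le_norm _ _
      _ ≤ ‖x‖ * ‖star X x‖ := by gcongr; exact hX _
      _ = _ := mul_comm _ _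
  by_contra hc
  push Not at hc
  nlinarith [norm_nonneg x, norm_nonneg (star X x)]

lemma dg_dense {a : ℕ → ℂ} (ha : BB a) (h0 : ∀ n, a n ≠ 0) : DenseRange (dg a) := by
  have h : Dense ((LinearMap.range (dg a).toLinearMap : Submodule ℂ L2) : Set L2) := by
    rw [Submodule.dense_iff_topologicalClosure_eq_top, Submodule.topologicalClosure_eq_top_iff,
      Submodule.eq_bot_iff]
    intro x hx
    apply L2_ext_inner; intro n
    rw [Submodule.mem_orthogonal] at hx
    have := hx (dl n) ⟨(a n)⁻¹ • dl n, by
      change dg a ((a n)⁻¹ • dl n) = dl n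
      rw [map_smul, dg_dl ha, smul_smul, inv_mul_cancel₀ (h0 n), one_smul]⟩
    rw [inner_dl] at this
    rw [this]; rfl
  exact h

lemma cont_apply {S : Type*} [TopologicalSpace S] {X : S → Op} (hX : ∀ x, Continuous fun s => X s x)
    (hc : ∀ s x, ‖X s x‖ ≤ ‖x‖) {f : S → L2} (hf : Continuous f) :
    Continuous fun s => X s (f s) := by
  rw [continuous_iff_continuousAt]
  intro s
  have h1 : Filter.Tendsto (fun t => X t (f t - f s)) (nhds s) (nhds 0) := by
    apply squeeze_zero_norm (fun t => hc t _)
    have := (hf.sub (continuous_const (y := f s))).norm.tendsto s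
    simpa using this
  have h2 := h1.add ((hX (f s)).tendsto s)
  simp only [map_sub, sub_add_cancel, zero_add] at h2
  exact h2

lemma circ_norm (z : Circle) : ‖(z : ℂ)‖ = 1 := Circle.norm_coe z
lemma circ_mul_conj (z : Circle) : (z : ℂ) * conj (z : ℂ) = 1 := by
  rw [Complex.mul_conj, Complex.normSq_eq_norm_sq, circ_norm]; simp
lemma BB_circ (p : ℕ → Circle) : BB (fun n => (p n : ℂ)) := ⟨1, fun n => (circ_norm _).le⟩

lemma BB.mul {a b : ℕ → ℂ} (ha : BB a) (hb : BB b) : BB (fun n => a n * b n) := by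
  obtain ⟨C, hC⟩ := ha
  obtain ⟨C', hC'⟩ := hb
  refine ⟨C * C', fun n => ?_⟩
  rw [norm_mul]
  exact mul_le_mul (hC n) (hC' n) (norm_nonneg _) ((norm_nonneg _).trans (hC n))

namespace Mdl
variable {lam mu : ℕ → ℝ} (M : Mdl lam mu) (p q : ℕ → Circle)

lemma lam_ne (M : Mdl lam mu) (n : ℕ) : (lam n : ℂ) ≠ 0 := by exact_mod_cast (M.lam_pos n).ne'
lemma BBl (M : Mdl lam mu) : BB (fun n => (lam n : ℂ)) := BB_lam M.lam_sum
lemma BBm (M : Mdl lam mu) : BB (fun n => (mu n : ℂ)) := BB_lam M.mu_sum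
lemma BBl2 (M : Mdl lam mu) : BB (fun n => (lam n : ℂ) ^ 2) := BB_sq M.lam_sum
lemma BBm2 (M : Mdl lam mu) : BB (fun n => (mu n : ℂ) ^ 2) := BB_sq M.mu_sum

def D (_ : Mdl lam mu) : Op := dg (fun n => (lam n : ℂ))
def G0 : Op := M.F * dg (fun n => (mu n : ℂ)) * star M.F

lemma D_star : star M.D = M.D := by rw [D, dg_star M.BBl]; simp
lemma D_mul : M.D * M.D = dg (fun n => (lam n : ℂ) ^ 2) := by
  rw [D, dg_mul M.BBl M.BBl]; congr 1; funext n; ring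
lemma G0_sq : star M.G0 * M.G0 = dg (fun n => (lam n : ℂ) ^ 2) - rk M.u0 := by
  have e : star (dg (fun n => (mu n : ℂ))) * dg (fun n => (mu n : ℂ))
      = dg (fun n => (mu n : ℂ) ^ 2) := by
    rw [dg_star M.BBm, dg_mul M.BBm.conj M.BBm]; congr 1; funext n; simp; ring
  rw [M.hT, G0, ← e]
  simp only [star_mul, star_star]
  calc _ = M.F * (star (dg (fun n => (mu n : ℂ))) * (star M.F * M.F) * dg (fun n => (mu n : ℂ)))
        * star M.F := by noncomm_ring
    _ = _ := by rw [M.hF, mul_one]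

lemma norm_G0_le (x : L2) : ‖M.G0 x‖ ≤ ‖M.D x‖ := by
  have h1 : ⟪M.G0 x, M.G0 x⟫_ℂ = ⟪M.D x, M.D x⟫_ℂ - ⟪x, rk M.u0 x⟫_ℂ := by
    rw [← star_inner_right, ← star_inner_right, ← op_mul_apply, ← op_mul_apply, G0_sq, D_star,
      D_mul, ← inner_sub_right]
    rfl
  rw [inner_rk, inner_self_c, inner_self_c] at h1
  have h2 : ‖M.G0 x‖ ^ 2 = ‖M.D x‖ ^ 2 - ‖⟪M.u0, x⟫_ℂ‖ ^ 2 := by exact_mod_cast h1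
  refine le_of_sq_le_sq ?_ (norm_nonneg _)
  nlinarith [sq_nonneg ‖⟪M.u0, x⟫_ℂ‖]

def R : Op := M.G0.toLinearMap.extendOfNorm M.D.toLinearMap

lemma D_dense : DenseRange M.D.toLinearMap := dg_dense M.BBl M.lam_ne

lemma R_mul_D : M.R * M.D = M.G0 := by
  ext1 x
  exact LinearMap.extendOfNorm_eq M.D_dense ⟨1, fun x => by
    rw [one_mul]; exact M.norm_G0_le x⟩ x

lemma norm_R_le (x : L2) : ‖M.R x‖ ≤ ‖x‖ := by
  have := LinearMap.norm_extendOfNorm_apply_le (f := M.G0.toLinearMap) M.D_dense 1 (fun x => by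
    rw [one_mul]; exact M.norm_G0_le x) x
  rwa [one_mul] at this

def U : Op := dg (fun n => (p n : ℂ))
def V : Op := M.F * dg (fun n => (q n : ℂ)) * star M.F
def P (_ : Mdl lam mu) : Op := dg (fun n => (lam n : ℂ) * (p n : ℂ))
def G : Op := M.F * dg (fun n => (mu n : ℂ) * (q n : ℂ)) * star M.F
def A : Op := M.V q * M.R * star (U p)
def v : L2 := U p M.v0

lemma BBP (M : Mdl lam mu) : BB (fun n => (lam n : ℂ) * (p n : ℂ)) := M.BBl.mul (BB_circ p)
lemma BBG (M : Mdl lam mu) : BB (fun n => (mu n : ℂ) * (q n : ℂ)) := M.BBm.mul (BB_circ q)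
lemma P_ne (M : Mdl lam mu) (n : ℕ) : (lam n : ℂ) * (p n : ℂ) ≠ 0 :=
  mul_ne_zero (M.lam_ne n) (Circle.coe_ne_zero _)

lemma star_U : star (U p) = dg (fun n => conj (p n : ℂ)) := by rw [U, dg_star (BB_circ p)]
lemma star_U_U : star (U p) * U p = 1 := by
  rw [star_U, U, dg_mul (BB_circ p).conj (BB_circ p)]
  simp_rw [mul_comm, circ_mul_conj]
  exact dg_one
lemma U_norm (x : L2) : ‖U p x‖ ≤ ‖x‖ := by
  have := norm_dg_le (C := 1) (fun n => (circ_norm (p n)).le) x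
  rwa [one_mul] at this
lemma star_U_norm (x : L2) : ‖star (U p) x‖ ≤ ‖x‖ := star_contr (U_norm p) x
lemma V_norm (x : L2) : ‖M.V q x‖ ≤ ‖x‖ := by
  have e : M.V q x = M.F (U q (star M.F x)) := rfl
  rw [e, iso_norm M.hF]
  exact (U_norm q _).trans (star_contr (fun y => (iso_norm M.hF y).le) x)
lemma A_norm (x : L2) : ‖M.A p q x‖ ≤ ‖x‖ := by
  have e : M.A p q x = M.V q (M.R (star (U p) x)) := rfl
  rw [e]
  exact (M.V_norm q _).trans ((M.norm_R_le _).trans (star_U_norm p x))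

lemma P_eq : M.P p = U p * M.D := by
  rw [P, U, D, dg_mul (BB_circ p) M.BBl]; congr 1; funext n; ring

lemma A_mul_P : M.A p q * M.P p = M.G q := by
  rw [P_eq, A]
  calc _ = M.V q * (M.R * (star (U p) * U p) * M.D) := by noncomm_ring
    _ = M.V q * M.G0 := by rw [star_U_U, mul_one, R_mul_D]
    _ = M.F * (dg (fun n => (q n : ℂ)) * (star M.F * M.F) * dg (fun n => (mu n : ℂ)))
        * star M.F := by rw [V, G0]; noncomm_ring
    _ = _ := by
      rw [M.hF, mul_one, dg_mul (BB_circ q) M.BBm, G]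
      congr 3; funext n; ring

lemma cj_P : cj (M.P p) = star (M.P p) := by rw [P, cj_dg (M.BBP p), dg_star (M.BBP p)]
lemma cj_G : cj (M.G q) = star (M.G q) := by
  rw [G, cj_mul, cj_mul, cj_star, M.cjF, cj_dg (M.BBG q)]
  simp only [star_mul, star_star, dg_star (M.BBG q)]
  noncomm_ring

lemma A_P_comm : M.A p q * M.P p = M.P p * cj (star (M.A p q)) := by
  have h1 : cj (star (M.G q)) = M.G q := by rw [← cj_G, cj_cj]
  rw [A_mul_P]
  conv_lhs => rw [← h1, ← M.A_mul_P p q]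
  rw [star_mul, cj_mul, ← cj_P, cj_cj]

lemma A_pow_P (n : ℕ) : M.A p q ^ n * M.P p = M.P p * cj (star (M.A p q)) ^ n := by
  induction n with
  | zero => simp
  | succ n ih => rw [pow_succ', mul_assoc, ih, ← mul_assoc, A_P_comm, mul_assoc, ← pow_succ']

lemma P_star_v : star (M.P p) (M.v p) = M.u0 := by
  apply L2_ext_inner; intro n
  rw [P, dg_star (M.BBP p), dg_apply (M.BBP p).conj, v, U, dg_apply (BB_circ p), M.v0_apply,
    M.u0_apply]
  have := M.lam_ne n
  have h := circ_mul_conj (p n)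
  simp only [map_mul, Complex.conj_ofReal]
  field_simp
  linear_combination (M.ν n : ℂ) * h

lemma star_P_P : star (M.P p) * M.P p = dg (fun n => (lam n : ℂ) ^ 2) := by
  rw [P, dg_star (M.BBP p), dg_mul (M.BBP p).conj (M.BBP p)]
  congr 1; funext n
  simp only [map_mul, Complex.conj_ofReal]
  linear_combination (lam n : ℂ) ^ 2 * circ_mul_conj (p n)
lemma P_star_P : M.P p * star (M.P p) = dg (fun n => (lam n : ℂ) ^ 2) := by
  rw [P, dg_star (M.BBP p), dg_mul (M.BBP p) (M.BBP p).conj]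
  congr 1; funext n
  simp only [map_mul, Complex.conj_ofReal]
  linear_combination (lam n : ℂ) ^ 2 * circ_mul_conj (p n)

lemma G_star_G : M.G q * star (M.G q) = M.F * dg (fun n => (mu n : ℂ) ^ 2) * star M.F := by
  rw [G]
  simp only [star_mul, star_star]
  calc _ = M.F * (dg (fun n => (mu n : ℂ) * (q n : ℂ)) * (star M.F * M.F) *
      star (dg (fun n => (mu n : ℂ) * (q n : ℂ)))) * star M.F := by noncomm_ring
    _ = _ := by
      rw [M.hF, mul_one, dg_star (M.BBG q), dg_mul (M.BBG q) (M.BBG q).conj]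
      congr 3; funext n
      simp only [map_mul, Complex.conj_ofReal]
      linear_combination (mu n : ℂ) ^ 2 * circ_mul_conj (q n)
lemma star_G_G : star (M.G q) * M.G q = M.F * dg (fun n => (mu n : ℂ) ^ 2) * star M.F := by
  rw [G]
  simp only [star_mul, star_star]
  calc _ = M.F * (star (dg (fun n => (mu n : ℂ) * (q n : ℂ))) * (star M.F * M.F) *
      (dg (fun n => (mu n : ℂ) * (q n : ℂ)))) * star M.F := by noncomm_ring
    _ = _ := by
      rw [M.hF, mul_one, dg_star (M.BBG q), dg_mul (M.BBG q).conj (M.BBG q)]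
      congr 3; funext n
      simp only [map_mul, Complex.conj_ofReal]
      linear_combination (mu n : ℂ) ^ 2 * circ_mul_conj (q n)

lemma star_A_A : star (M.A p q) * M.A p q = 1 - rk (M.v p) := by
  apply dg_cancel_right (M.BBP p) (M.P_ne p)
  have hs : ∀ n, conj ((lam n : ℂ) * (p n : ℂ)) ≠ 0 := fun n => by
    rw [map_ne_zero]; exact M.P_ne p n
  apply dg_cancel_left (M.BBP p).conj hs
  rw [← dg_star (M.BBP p)]
  change star (M.P p) * (star (M.A p q) * M.A p q * M.P p)
    = star (M.P p) * ((1 - rk (M.v p)) * M.P p)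
  have e1 : star (M.P p) * (star (M.A p q) * M.A p q * M.P p)
      = star (M.A p q * M.P p) * (M.A p q * M.P p) := by rw [star_mul]; noncomm_ring
  have e2 := rk_conj (star (M.P p)) (M.v p)
  rw [star_star, P_star_v] at e2
  rw [e1, A_mul_P, star_G_G, ← M.hT, ← e2, ← star_P_P M p]
  noncomm_ring

lemma A_rel : M.A p q * dg (fun n => (lam n : ℂ) ^ 2) * star (M.A p q)
    = dg (fun n => (lam n : ℂ) ^ 2) - rk M.u0 := by
  rw [M.hT, ← M.G_star_G q, ← M.A_mul_P p q, ← M.P_star_P p, star_mul]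
  noncomm_ring

lemma cont_A (x : L2) : Continuous fun s : (ℕ → Circle) × (ℕ → Circle) => M.A s.1 s.2 x := by
  have c1 : Continuous fun s : (ℕ → Circle) × (ℕ → Circle) => star (U s.1) x := by
    simp_rw [star_U]
    refine continuous_dg_apply (C := 1) (fun s n => ?_) (fun n => ?_) x
    · rw [RCLike.norm_conj, circ_norm]
    · fun_prop
  have c2 : Continuous fun s : (ℕ → Circle) × (ℕ → Circle) => star M.F (M.R (star (U s.1) x)) :=
    (star M.F).continuous.comp (M.R.continuous.comp c1)
  have c3 : ∀ x, Continuous fun s : (ℕ → Circle) × (ℕ → Circle) => U s.2 x := by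
    intro x
    refine continuous_dg_apply (C := 1) (fun s n => ?_) (fun n => ?_) x
    · rw [circ_norm]
    · fun_prop
  exact M.F.continuous.comp (cont_apply c3 (fun s x => U_norm s.2 x) c2)

lemma cont_v : Continuous fun s : (ℕ → Circle) × (ℕ → Circle) => M.v s.1 := by
  refine continuous_dg_apply (C := 1) (fun s n => ?_) (fun n => ?_) _
  · rw [circ_norm]
  · fun_prop

/-- The symbol attached to the angles. -/
def c (n : ℕ) : ℂ := ⟪M.v p, (M.A p q ^ n) M.u0⟫_ℂ

lemma cont_c (n : ℕ) : Continuous fun s : (ℕ → Circle) × (ℕ → Circle) => M.c s.1 s.2 n := by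
  have h : Continuous fun s : (ℕ → Circle) × (ℕ → Circle) => (M.A s.1 s.2 ^ n) M.u0 := by
    induction n with
    | zero => simpa using continuous_const
    | succ n ih =>
      have := cont_apply M.cont_A (fun s x => M.A_norm s.1 s.2 x) ih
      simpa only [pow_succ', op_mul_apply] using this
  exact M.cont_v.inner h

end Mdl

lemma moment_lemma {a : ℕ → ℂ} (ha : Summable fun j => ‖a j‖) {x : ℕ → ℝ} (hx : StrictAnti x)
    (hx0 : ∀ j, 0 < x j) (h : ∀ k : ℕ, 1 ≤ k → ∑' j, a j * (x j : ℂ) ^ k = 0) : ∀ j, a j = 0 := by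
  intro j
  induction j using Nat.strong_induction_on with
  | _ j ih =>
  have hxj : (x j : ℂ) ≠ 0 := by exact_mod_cast (hx0 j).ne'
  have key : Filter.Tendsto (fun k : ℕ => ∑' i, a i * ((x i / x j : ℝ) : ℂ) ^ k) Filter.atTop
      (nhds (∑' i, if i = j then a j else 0)) := by
    refine tendsto_tsum_of_dominated_convergence ha ?_ ?_
    · intro i
      rcases lt_trichotomy i j with hij | hij | hij
      · simp [ih i hij, hij.ne]
      · subst hij
        have : (x i / x i : ℝ) = 1 := div_self (hx0 i).ne'
        simp [this]
      · rw [if_neg hij.ne']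
        have h1 : Filter.Tendsto (fun k : ℕ => ((x i / x j : ℝ) : ℂ) ^ k) Filter.atTop (nhds 0) := by
          apply tendsto_pow_atTop_nhds_zero_of_norm_lt_one
          rw [Complex.norm_real, Real.norm_of_nonneg (div_pos (hx0 i) (hx0 j)).le,
            div_lt_one (hx0 j)]
          exact hx hij
        simpa using h1.const_mul (a i)
    · refine Filter.Eventually.of_forall fun k i => ?_
      rcases lt_or_ge i j with hij | hij
      · simp [ih i hij]
      · rw [norm_mul, norm_pow, Complex.norm_real,
          Real.norm_of_nonneg (div_pos (hx0 i) (hx0 j)).le]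
        have : x i / x j ≤ 1 := by rw [div_le_one (hx0 j)]; exact hx.antitone hij
        exact mul_le_of_le_one_right (norm_nonneg _)
          (pow_le_one₀ (div_pos (hx0 i) (hx0 j)).le this)
  rw [tsum_ite_eq] at key
  have h0 : ∀ᶠ k : ℕ in Filter.atTop, ∑' i, a i * ((x i / x j : ℝ) : ℂ) ^ k = 0 := by
    filter_upwards [Filter.eventually_ge_atTop 1] with k hk
    have e : ∀ i, a i * ((x i / x j : ℝ) : ℂ) ^ k = (a i * (x i : ℂ) ^ k) * ((x j : ℂ) ^ k)⁻¹ := by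
      intro i; push_cast; rw [div_pow]; ring
    simp_rw [e]
    rw [tsum_mul_right, h k hk, zero_mul]
  exact tendsto_nhds_unique key (Filter.Tendsto.congr' (h0.mono fun k hk => hk.symm) tendsto_const_nhds)

lemma cj_pow (X : Op) (n : ℕ) : cj X ^ n = cj (X ^ n) := by
  induction n with
  | zero => simp [cj_one]
  | succ n ih => rw [pow_succ, ih, pow_succ, cj_mul]

lemma pow_contr {X : Op} (hX : ∀ x, ‖X x‖ ≤ ‖x‖) (n : ℕ) (x : L2) : ‖(X ^ n) x‖ ≤ ‖x‖ := by
  induction n with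
  | zero => simp
  | succ n ih => rw [pow_succ', op_mul_apply]; exact (hX _).trans ih

lemma summable_inner_mul (x y : L2) : Summable fun n => ‖conj (x n) * y n‖ := by
  have := (lp.summable_inner (𝕜 := ℂ) x y).norm
  refine this.congr fun n => ?_
  rw [RCLike.inner_apply', ]

lemma norm_coord_le (x : L2) (j : ℕ) : ‖x j‖ ≤ ‖x‖ := lp.norm_apply_le_norm (by norm_num) x j

namespace Mdl
variable {lam mu : ℕ → ℝ} (M : Mdl lam mu) (p q : ℕ → Circle)

lemma A_norm_sq (z : L2) : ‖M.A p q z‖ ^ 2 = ‖z‖ ^ 2 - ‖⟪M.v p, z⟫_ℂ‖ ^ 2 := by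
  have h : ⟪M.A p q z, M.A p q z⟫_ℂ = ⟪z, z⟫_ℂ - ⟪z, rk (M.v p) z⟫_ℂ := by
    rw [← star_inner_right, ← op_mul_apply, star_A_A, ← inner_sub_right]; rfl
  rw [inner_rk, inner_self_c, inner_self_c] at h
  exact_mod_cast h

lemma D_energy (z : L2) :
    ‖M.D (star (M.A p q) z)‖ ^ 2 = ‖M.D z‖ ^ 2 - ‖⟪M.u0, z⟫_ℂ‖ ^ 2 := by
  have h : ⟪M.D (star (M.A p q) z), M.D (star (M.A p q) z)⟫_ℂ
      = ⟪M.D z, M.D z⟫_ℂ - ⟪z, rk M.u0 z⟫_ℂ := by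
    have e : ∀ y, ⟪M.D y, M.D y⟫_ℂ = ⟪y, dg (fun n => (lam n : ℂ) ^ 2) y⟫_ℂ := by
      intro y; rw [← star_inner_right, D_star, ← D_mul]; rfl
    rw [e, e, ← inner_sub_right, star_inner_left, ← op_mul_apply, ← op_mul_apply,
      A_rel]
    rfl
  rw [inner_rk, inner_self_c, inner_self_c] at h
  exact_mod_cast h

lemma A_iso_pow {z : L2} (hz : ∀ n, ⟪M.v p, (M.A p q ^ n) z⟫_ℂ = 0) (n : ℕ) :
    ‖(M.A p q ^ n) z‖ = ‖z‖ := by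
  induction n with
  | zero => simp
  | succ n ih =>
    rw [← ih, pow_succ', op_mul_apply]
    have := M.A_norm_sq p q ((M.A p q ^ n) z)
    rw [hz n] at this
    refine (pow_left_inj₀ (norm_nonneg _) (norm_nonneg _) two_ne_zero).1 ?_
    rw [this]; simp

lemma star_A_pow {z : L2} (hz : ∀ n, ⟪M.v p, (M.A p q ^ n) z⟫_ℂ = 0) (k i : ℕ) :
    (star (M.A p q) ^ k) ((M.A p q ^ (i + k)) z) = (M.A p q ^ i) z := by
  induction k with
  | zero => simp
  | succ k ih =>
    rw [pow_succ, op_mul_apply, ← add_assoc, pow_succ', op_mul_apply, ← op_mul_apply (star _),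
      star_A_A]
    have : (1 - rk (M.v p)) ((M.A p q ^ (i + k)) z) = (M.A p q ^ (i + k)) z := by
      change (M.A p q ^ (i + k)) z - rk (M.v p) ((M.A p q ^ (i + k)) z) = _
      rw [rk_apply, hz, zero_smul, sub_zero]
    rw [this, ih]

def K (C : ℝ) : Set L2 :=
  {z | ∀ n, (∀ j, ‖((M.A p q ^ n) z) j‖ ≤ C * lam j) ∧ ⟪M.v p, (M.A p q ^ n) z⟫_ℂ = 0}

lemma continuous_coord (j : ℕ) : Continuous fun x : L2 => x j := by
  have : (fun x : L2 => x j) = fun x => ⟪dl j, x⟫_ℂ := by funext x; rw [inner_dl]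
  rw [this]; exact continuous_const.inner continuous_id

lemma K_closed (C : ℝ) : IsClosed (M.K p q C) := by
  have : M.K p q C = ⋂ n, ((⋂ j, {z | ‖((M.A p q ^ n) z) j‖ ≤ C * lam j}) ∩
      {z | ⟪M.v p, (M.A p q ^ n) z⟫_ℂ = 0}) := by
    ext z; simp [K]
  rw [this]
  refine isClosed_iInter fun n => IsClosed.inter (isClosed_iInter fun j => ?_) ?_
  · exact isClosed_le ((continuous_coord j).comp (M.A p q ^ n).continuous).norm continuous_const
  · exact isClosed_eq (continuous_const.inner (M.A p q ^ n).continuous) continuous_const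

lemma K_inv {C : ℝ} {z : L2} (hz : z ∈ M.K p q C) (i : ℕ) : (M.A p q ^ i) z ∈ M.K p q C := by
  intro n
  rw [← op_mul_apply, ← pow_add]
  exact hz _

lemma cube_compact (M : Mdl lam mu) (C : ℝ) : IsCompact {x : L2 | ∀ n, ‖x n‖ ≤ C * lam n} := by
  apply compact_cube
  simp only [mul_pow]; exact M.lam_sum.mul_left _

lemma recur {C : ℝ} {z : L2} (hz : z ∈ M.K p q C) {ε : ℝ} (hε : 0 < ε) (m : ℕ) :
    ∃ n, m ≤ n ∧ ‖(M.A p q ^ n) z - z‖ < ε := by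
  obtain ⟨a, -, φ, hφ, hlim⟩ := (M.cube_compact C).tendsto_subseq (x := fun n => (M.A p q ^ n) z)
    (fun n => (hz n).1)
  obtain ⟨N, hN⟩ := Metric.cauchySeq_iff.1 hlim.cauchySeq ε hε
  have hl : φ N + m ≤ φ (N + (φ N + m)) := (Nat.le_add_left _ _).trans (hφ.id_le _)
  refine ⟨φ (N + (φ N + m)) - φ N, by omega, ?_⟩
  have h := hN (N + (φ N + m)) (by omega) N le_rfl
  rw [dist_eq_norm] at h
  simp only [Function.comp] at h
  set k := φ (N + (φ N + m)) - φ N with hk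
  have e : φ (N + (φ N + m)) = φ N + k := by omega
  rw [e, pow_add, op_mul_apply, ← map_sub, M.A_iso_pow p q] at h
  · exact h
  · intro n
    rw [map_sub, inner_sub_right, (hz n).2, sub_zero]
    exact (M.K_inv p q hz k n).2

lemma star_mem {C : ℝ} {z : L2} (hz : z ∈ M.K p q C) (m : ℕ) :
    (star (M.A p q) ^ m) z ∈ M.K p q C := by
  rw [← (M.K_closed p q C).closure_eq, Metric.mem_closure_iff]
  intro ε hε
  obtain ⟨n, hn, h⟩ := M.recur p q hz hε m
  refine ⟨(M.A p q ^ (n - m)) z, M.K_inv p q hz _, ?_⟩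
  rw [← M.star_A_pow p q (fun n => (hz n).2) m (n - m), Nat.sub_add_cancel hn, dist_eq_norm,
    ← map_sub]
  refine (pow_contr (star_contr (M.A_norm p q)) m _).trans_lt ?_
  rwa [norm_sub_rev]

lemma u0_inner {C : ℝ} {z : L2} (hz : z ∈ M.K p q C) (m : ℕ) :
    ⟪M.u0, (star (M.A p q) ^ m) z⟫_ℂ = 0 := by
  set g : ℕ → ℝ := fun n => ‖M.D ((star (M.A p q) ^ n) z)‖ with hg
  have hstep : ∀ n, g (n + 1) ^ 2 = g n ^ 2 - ‖⟪M.u0, (star (M.A p q) ^ n) z⟫_ℂ‖ ^ 2 := by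
    intro n
    simp only [hg, pow_succ' (star (M.A p q)) n, op_mul_apply]
    exact M.D_energy p q _
  have hanti : Antitone g := antitone_nat_of_succ_le fun n => by
    refine le_of_sq_le_sq ?_ (norm_nonneg _)
    have := hstep n
    nlinarith [sq_nonneg ‖⟪M.u0, (star (M.A p q) ^ n) z⟫_ℂ‖]
  have hlow : ∀ n, g 0 ≤ g n := by
    intro i
    refine le_of_forall_pos_le_add fun ε hε => ?_
    obtain ⟨n, hn, h⟩ := M.recur p q hz (div_pos hε (by positivity : (0:ℝ) < ‖M.D‖ + 1)) i
    have h1 : ‖(star (M.A p q) ^ n) z - z‖ ≤ ‖(M.A p q ^ n) z - z‖ := by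
      have e := M.star_A_pow p q (fun n => (hz n).2) n 0
      rw [pow_zero, zero_add] at e
      have e' : z = (star (M.A p q) ^ n) ((M.A p q ^ n) z) := e.symm
      calc ‖(star (M.A p q) ^ n) z - z‖ = ‖(star (M.A p q) ^ n) (z - (M.A p q ^ n) z)‖ := by
            rw [map_sub, ← e']
        _ ≤ ‖z - (M.A p q ^ n) z‖ := pow_contr (star_contr (M.A_norm p q)) n _
        _ = _ := norm_sub_rev _ _
    have h2 : g 0 ≤ g n + ‖M.D‖ * ‖(star (M.A p q) ^ n) z - z‖ := by
      have : M.D z = M.D ((star (M.A p q) ^ n) z) - M.D ((star (M.A p q) ^ n) z - z) := by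
        rw [map_sub]; abel
      have e0 : g 0 = ‖M.D z‖ := rfl
      rw [e0, this]
      refine (norm_sub_le _ _).trans ?_
      gcongr
      exact M.D.le_opNorm _
    have h3 : ‖M.D‖ * ‖(star (M.A p q) ^ n) z - z‖ ≤ ε := by
      calc _ ≤ (‖M.D‖ + 1) * (ε / (‖M.D‖ + 1)) := by
            gcongr
            · linarith
            · exact h1.trans h.le
        _ = ε := by field_simp
    linarith [hanti hn]
  have heq : ∀ n, g n = g 0 := fun n => le_antisymm (hanti (Nat.zero_le n)) (hlow n)
  have := hstep m
  rw [heq (m + 1), heq m] at this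
  have h0 : ‖⟪M.u0, (star (M.A p q) ^ m) z⟫_ℂ‖ ^ 2 = 0 := by linarith
  simpa using h0

lemma star_u0 : star M.u0 = M.u0 := by
  apply L2_ext_inner; intro n
  have e : (star M.u0) n = conj (M.u0 n) := rfl
  rw [e, M.u0_apply, Complex.conj_ofReal]

lemma inner_v_P (x : L2) : ⟪M.v p, M.P p x⟫_ℂ = ⟪M.u0, x⟫_ℂ := by
  rw [← star_inner_left, P_star_v]

lemma A_pow_P_apply (n : ℕ) (y : L2) :
    (M.A p q ^ n) (M.P p y) = M.P p ((cj (star (M.A p q)) ^ n) y) := by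
  rw [← op_mul_apply, A_pow_P]; rfl

lemma cj_star_norm (n : ℕ) (y : L2) : ‖(cj (star (M.A p q)) ^ n) y‖ ≤ ‖y‖ := by
  rw [cj_pow, cj_apply, norm_star]
  exact (pow_contr (star_contr (M.A_norm p q)) n _).trans (norm_star y).le

lemma P_coord (y : L2) (j : ℕ) : ‖(M.P p y) j‖ ≤ ‖y‖ * lam j := by
  rw [P, dg_apply (M.BBP p), norm_mul, norm_mul, circ_norm, mul_one, Complex.norm_real,
    Real.norm_of_nonneg (M.lam_pos j).le, mul_comm]
  exact mul_le_mul_of_nonneg_right (norm_coord_le y j) (M.lam_pos j).le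

lemma H_mem {C : ℝ} {z : L2} (hz : z ∈ M.K p q C) : M.P p (star z) ∈ M.K p q ‖z‖ := by
  intro n
  rw [A_pow_P_apply]
  constructor
  · intro j
    refine (M.P_coord p _ j).trans ?_
    refine mul_le_mul_of_nonneg_right ?_ (M.lam_pos j).le
    exact (M.cj_star_norm p q n _).trans (norm_star z).le
  · rw [inner_v_P, cj_pow, cj_apply, star_star, ← star_u0, inner_star_star, ← inner_conj_symm,
      M.u0_inner p q hz, map_zero]

lemma D2_mem {C : ℝ} {z : L2} (hz : z ∈ M.K p q C) :
    ∃ C', dg (fun n => (lam n : ℂ) ^ 2) z ∈ M.K p q C' := by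
  have := M.H_mem p q (M.H_mem p q hz)
  rw [← cj_apply, cj_P, ← op_mul_apply, P_star_P] at this
  exact ⟨_, this⟩

lemma K_zero {C : ℝ} {z : L2} (hz : z ∈ M.K p q C) : z = 0 := by
  have h1 : ∀ k : ℕ, ∃ C', (dg (fun n => (lam n : ℂ) ^ 2) ^ k) z ∈ M.K p q C' := by
    intro k
    induction k with
    | zero => exact ⟨C, by simpa using hz⟩
    | succ k ih =>
      obtain ⟨C', h⟩ := ih
      rw [pow_succ', op_mul_apply]
      exact M.D2_mem p q h
  have h2 : ∀ (k : ℕ) (j : ℕ), ((dg (fun n => (lam n : ℂ) ^ 2) ^ k) z) j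
      = z j * ((lam j ^ 2 : ℝ) : ℂ) ^ k := by
    intro k j
    induction k with
    | zero => simp
    | succ k ih =>
      rw [pow_succ', op_mul_apply, dg_apply M.BBl2, ih]; push_cast; ring
  have h3 := moment_lemma (summable_inner_mul (M.v p) z)
    (x := fun j => lam j ^ 2) (fun i j hij => pow_lt_pow_left₀ (M.lam_anti hij) (M.lam_pos j).le
      two_ne_zero) (fun j => pow_pos (M.lam_pos j) 2) (fun k _ => by
      obtain ⟨C', h⟩ := h1 k
      have := (h 0).2
      rw [pow_zero] at this
      change ⟪M.v p, (dg (fun n => (lam n : ℂ) ^ 2) ^ k) z⟫_ℂ = 0 at this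
      rw [inner_L2] at this
      rw [← this]
      refine tsum_congr fun j => ?_
      rw [h2]; ring)
  apply L2_ext_inner; intro j
  rcases mul_eq_zero.1 (h3 j) with h | h
  · exfalso
    rw [map_eq_zero, v, U, dg_apply (BB_circ p), M.v0_apply] at h
    refine mul_ne_zero (Circle.coe_ne_zero (p j)) (div_ne_zero ?_ (M.lam_ne j)) h
    exact_mod_cast (M.ν_pos j).ne'
  · rw [h]; rfl

lemma A_anti (x : L2) : Antitone fun n => ‖(M.A p q ^ n) x‖ :=
  antitone_nat_of_succ_le fun n => by
    rw [pow_succ', op_mul_apply]; exact M.A_norm p q _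

lemma stable_P (y : L2) :
    Filter.Tendsto (fun n => ‖(M.A p q ^ n) (M.P p y)‖) Filter.atTop (nhds 0) := by
  set x := M.P p y with hx
  have hb : BddBelow (Set.range fun n => ‖(M.A p q ^ n) x‖) := ⟨0, by
    rintro _ ⟨n, rfl⟩; exact norm_nonneg _⟩
  have hL := tendsto_atTop_ciInf (M.A_anti p q x) hb
  set L := ⨅ n, ‖(M.A p q ^ n) x‖
  have hc : ∀ n j, ‖((M.A p q ^ n) x) j‖ ≤ ‖y‖ * lam j := by
    intro n j
    rw [hx, A_pow_P_apply]
    refine (M.P_coord p _ j).trans ?_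
    exact mul_le_mul_of_nonneg_right (M.cj_star_norm p q n _) (M.lam_pos j).le
  obtain ⟨z, -, φ, hφ, hlim⟩ := (M.cube_compact ‖y‖).tendsto_subseq
    (x := fun n => (M.A p q ^ n) x) (fun n => hc n)
  have hA : ∀ n, Filter.Tendsto (fun k => (M.A p q ^ (n + φ k)) x) Filter.atTop
      (nhds ((M.A p q ^ n) z)) := by
    intro n
    have := ((M.A p q ^ n).continuous.tendsto z).comp hlim
    refine this.congr fun k => ?_
    simp [pow_add, op_mul_apply]
  have hLn : ∀ n, ‖(M.A p q ^ n) z‖ = L := by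
    intro n
    refine tendsto_nhds_unique (hA n).norm (hL.comp ?_)
    exact Filter.tendsto_atTop_mono (fun k => Nat.le_add_left _ _) hφ.tendsto_atTop
  have hzK : z ∈ M.K p q ‖y‖ := by
    intro n
    constructor
    · intro j
      exact le_of_tendsto' (((continuous_coord j).norm.tendsto _).comp (hA n)) (fun k => hc _ j)
    · have := M.A_norm_sq p q ((M.A p q ^ n) z)
      rw [← op_mul_apply, ← pow_succ', hLn, hLn] at this
      have h0 : ‖⟪M.v p, (M.A p q ^ n) z⟫_ℂ‖ ^ 2 = 0 := by linarith
      simpa using h0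
  have hL0 : L = 0 := by
    rw [← hLn 0, M.K_zero p q hzK]; simp
  rw [hL0] at hL; exact hL

lemma stable (x : L2) : Filter.Tendsto (fun n => ‖(M.A p q ^ n) x‖) Filter.atTop (nhds 0) := by
  rw [Metric.tendsto_atTop]
  intro ε hε
  obtain ⟨y, hy⟩ := (dg_dense (M.BBP p) (M.P_ne p)).exists_dist_lt x (half_pos hε)
  obtain ⟨N, hN⟩ := Metric.tendsto_atTop.1 (M.stable_P p q y) (ε / 2) (half_pos hε)
  refine ⟨N, fun n hn => ?_⟩
  have h1 := hN n hn
  simp only [dist_zero_right, norm_norm] at h1 ⊢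
  have e : (M.A p q ^ n) x = (M.A p q ^ n) (x - M.P p y) + (M.A p q ^ n) (M.P p y) := by
    rw [map_sub]; abel
  rw [e]
  have h2 := pow_contr (M.A_norm p q) n (x - M.P p y)
  rw [dist_eq_norm] at hy
  change ‖x - M.P p y‖ < ε / 2 at hy
  linarith [norm_add_le ((M.A p q ^ n) (x - M.P p y)) ((M.A p q ^ n) (M.P p y))]

end Mdl

lemma anti_fiber (g : ℕ → ℝ) (n : ℕ) :
    HasSum (fun t : {x // x ∈ Finset.HasAntidiagonal.antidiagonal n} => g (t.1.1 + t.1.2)) ((1 + (n : ℝ)) * g n) := by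
  have h := hasSum_fintype (fun t : {x // x ∈ Finset.HasAntidiagonal.antidiagonal n} => g (t.1.1 + t.1.2))
  convert h using 1
  have e : ∀ t : {x // x ∈ Finset.HasAntidiagonal.antidiagonal n}, g (t.1.1 + t.1.2) = g n := fun t => by
    rw [Finset.HasAntidiagonal.mem_antidiagonal.1 t.2]
  simp only [e, Finset.sum_const, nsmul_eq_mul]
  simp
  left; ring

lemma anti_hasSum {g : ℕ → ℝ} {T : ℝ} (h : HasSum (fun t : ℕ × ℕ => g (t.1 + t.2)) T) :
    HasSum (fun n : ℕ => (1 + (n : ℝ)) * g n) T := by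
  have h1 := (Finset.HasAntidiagonal.sigmaAntidiagonalEquivProd (A := ℕ)).hasSum_iff.2 h
  exact h1.sigma (anti_fiber g)

lemma anti_summable {g : ℕ → ℝ} (hg : ∀ n, 0 ≤ g n) (h : Summable fun n : ℕ => (1 + (n : ℝ)) * g n) :
    Summable (fun t : ℕ × ℕ => g (t.1 + t.2)) := by
  rw [← (Finset.HasAntidiagonal.sigmaAntidiagonalEquivProd (A := ℕ)).summable_iff]
  refine (summable_sigma_of_nonneg (fun x => by exact hg _)).2 ⟨fun n => (anti_fiber g n).summable, ?_⟩
  refine h.congr fun n => ?_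
  exact (anti_fiber g n).tsum_eq.symm

lemma cj_iso {W : Op} (hW : star W * W = 1) : star (cj W) * cj W = 1 := by
  rw [← cj_star, ← cj_mul, hW, cj_one]

lemma iso_of_norm {W : Op} (h : ∀ x, ‖W x‖ = ‖x‖) : star W * W = 1 :=
  W.norm_map_iff_adjoint_comp_self.1 h

namespace Mdl
variable {lam mu : ℕ → ℝ} (M : Mdl lam mu) (p q : ℕ → Circle)

lemma W_hasSum (x : L2) : HasSum (fun n => ‖⟪M.v p, (M.A p q ^ n) x⟫_ℂ‖ ^ 2) (‖x‖ ^ 2) := by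
  rw [hasSum_iff_tendsto_nat_of_nonneg (fun n => sq_nonneg _)]
  have e : ∀ N, ∑ n ∈ Finset.range N, ‖⟪M.v p, (M.A p q ^ n) x⟫_ℂ‖ ^ 2
      = ‖x‖ ^ 2 - ‖(M.A p q ^ N) x‖ ^ 2 := by
    intro N
    induction N with
    | zero => simp
    | succ N ih =>
      rw [Finset.sum_range_succ, ih, pow_succ' _ N, op_mul_apply, A_norm_sq]; ring
  simp_rw [e]
  have := ((M.stable p q x).pow 2).const_sub (‖x‖ ^ 2)
  simpa using this

def W : Op := LinearMap.mkContinuous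
  { toFun := fun x => ⟨fun n => ⟪M.v p, (M.A p q ^ n) x⟫_ℂ,
      memL2_of_le (M.W_hasSum p q x).summable (fun _ => le_rfl)⟩
    map_add' := fun x y => by
      apply L2_ext_inner; intro n
      change ⟪M.v p, (M.A p q ^ n) (x + y)⟫_ℂ
        = ⟪M.v p, (M.A p q ^ n) x⟫_ℂ + ⟪M.v p, (M.A p q ^ n) y⟫_ℂ
      rw [map_add, inner_add_right]
    map_smul' := fun a x => by
      apply L2_ext_inner; intro n
      change ⟪M.v p, (M.A p q ^ n) (a • x)⟫_ℂ = a * ⟪M.v p, (M.A p q ^ n) x⟫_ℂ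
      rw [map_smul, inner_smul_right] } 1 (fun x => by
    rw [one_mul]
    refine le_of_sq_le_sq (le_of_eq ?_) (norm_nonneg _)
    exact (L2_norm_sq _).unique (M.W_hasSum p q x))

lemma W_apply (x : L2) (n : ℕ) : (M.W p q x) n = ⟪M.v p, (M.A p q ^ n) x⟫_ℂ := rfl

lemma W_iso : star (M.W p q) * M.W p q = 1 := by
  apply iso_of_norm
  intro x
  refine (pow_left_inj₀ (norm_nonneg _) (norm_nonneg _) two_ne_zero).1 ?_
  exact (L2_norm_sq _).unique (M.W_hasSum p q x)

lemma W_u0 (n : ℕ) : (M.W p q M.u0) n = M.c p q n := rfl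

def Gam : Op := M.W p q * M.P p * star (cj (M.W p q))
def Gamt : Op := M.W p q * M.G q * star (cj (M.W p q))

lemma hankel_aux (x : L2) (n : ℕ) :
    ⟪M.v p, (M.A p q ^ n) (M.P p (star (cj (M.W p q)) x))⟫_ℂ = ∑' k, M.c p q (n + k) * x k := by
  rw [A_pow_P_apply, inner_v_P]
  have e : cj (star (M.A p q)) ^ n * star (cj (M.W p q)) = star (cj (M.W p q * M.A p q ^ n)) := by
    rw [cj_pow, ← cj_star, ← cj_mul, ← cj_star, star_mul, star_pow]
  rw [← op_mul_apply, e, star_inner_right, cj_apply, star_u0, inner_L2]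
  refine tsum_congr fun k => ?_
  have e2 : (star ((M.W p q * M.A p q ^ n) M.u0)) k = conj (((M.W p q * M.A p q ^ n) M.u0) k) := rfl
  rw [e2, Complex.conj_conj, op_mul_apply, W_apply, ← op_mul_apply, ← pow_add, add_comm k n]
  rfl

lemma hankel : IsHankelOp (M.c p q) (M.Gam p q) := by
  intro x n
  exact M.hankel_aux p q x n

lemma hankelt : IsHankelOp (shiftSeq (M.c p q)) (M.Gamt p q) := by
  intro x n
  have e : (M.Gamt p q x) n = ⟪M.v p, (M.A p q ^ (n + 1)) (M.P p (star (cj (M.W p q)) x))⟫_ℂ := by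
    have : M.Gamt p q x = M.W p q (M.A p q (M.P p (star (cj (M.W p q)) x))) := by
      rw [Gamt, ← A_mul_P M p q]; rfl
    rw [this, W_apply, pow_succ]; rfl
  rw [e, hankel_aux]
  refine tsum_congr fun k => ?_
  rw [shiftSeq]; congr 2; ring

lemma opT_Gam : opT (M.Gam p q) = M.W p q * dg (fun n => (lam n : ℂ) ^ 2) * star (M.W p q) := by
  rw [opT_eq, Gam, ← M.P_star_P p]
  simp only [star_mul, star_star]
  calc _ = M.W p q * (M.P p * (star (cj (M.W p q)) * cj (M.W p q)) * star (M.P p))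
        * star (M.W p q) := by noncomm_ring
    _ = _ := by rw [cj_iso (M.W_iso p q), mul_one]

lemma opT_Gamt : opT (M.Gamt p q)
    = (M.W p q * M.F) * dg (fun n => (mu n : ℂ) ^ 2) * star (M.W p q * M.F) := by
  have e : (M.W p q * M.F) * dg (fun n => (mu n : ℂ) ^ 2) * star (M.W p q * M.F)
      = M.W p q * (M.F * dg (fun n => (mu n : ℂ) ^ 2) * star M.F) * star (M.W p q) := by
    rw [star_mul]; noncomm_ring
  rw [e, opT_eq, Gamt, ← M.G_star_G q]
  simp only [star_mul, star_star]
  calc _ = M.W p q * (M.G q * (star (cj (M.W p q)) * cj (M.W p q)) * star (M.G q))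
        * star (M.W p q) := by noncomm_ring
    _ = _ := by rw [cj_iso (M.W_iso p q), mul_one]

lemma WF_iso : star (M.W p q * M.F) * (M.W p q * M.F) = 1 := by
  rw [star_mul]
  calc _ = star M.F * (star (M.W p q) * M.W p q) * M.F := by noncomm_ring
    _ = _ := by rw [W_iso, mul_one, M.hF]

lemma simple_Gam : HasSimpleSValsSeq (M.Gam p q) lam :=
  hasSimple_of_diag (M.W_iso p q) M.lam_sum M.lam_pos M.lam_anti.injective (M.opT_Gam p q)
lemma simple_Gamt : HasSimpleSValsSeq (M.Gamt p q) mu :=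
  hasSimple_of_diag (M.WF_iso p q) M.mu_sum M.mu_pos M.mu_anti.injective (M.opT_Gamt p q)

lemma Gam_dl (k n : ℕ) : (M.Gam p q (dl k)) n = M.c p q (k + n) := by
  rw [M.hankel p q, tsum_eq_single k]
  · rw [dl_apply]; simp [add_comm]
  · intro b hb; rw [dl_apply]; simp [hb]

lemma c_hasSum : HasSum (fun n : ℕ => (1 + (n : ℝ)) * ‖M.c p q n‖ ^ 2) (∑' j, lam j ^ 2) := by
  have hS : star (M.Gam p q) * M.Gam p q
      = cj (M.W p q) * dg (fun n => ((lam n ^ 2 : ℝ) : ℂ)) * star (cj (M.W p q)) := by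
    have e : (fun n => ((lam n ^ 2 : ℝ) : ℂ)) = fun n => (lam n : ℂ) ^ 2 := by
      funext n; push_cast; rfl
    rw [e, Gam, ← M.star_P_P p]
    simp only [star_mul, star_star]
    calc _ = cj (M.W p q) * (star (M.P p) * (star (M.W p q) * M.W p q) * M.P p)
          * star (cj (M.W p q)) := by noncomm_ring
      _ = _ := by rw [W_iso, mul_one]
  have h1 := trace_lemma (cj_iso (M.W_iso p q)) M.lam_sum (fun n => sq_nonneg _)
  rw [← hS] at h1
  have h2 : HasSum (fun k => ‖M.Gam p q (dl k)‖ ^ 2) (∑' j, lam j ^ 2) := by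
    rw [← Complex.hasSum_ofReal]
    convert h1 using 1
    funext k
    rw [op_mul_apply, star_inner_right, inner_self_c]
  have h3 : ∀ k, HasSum (fun n => ‖M.c p q (k + n)‖ ^ 2) (‖M.Gam p q (dl k)‖ ^ 2) := by
    intro k
    have := L2_norm_sq (M.Gam p q (dl k))
    simpa only [Gam_dl] using this
  apply anti_hasSum (g := fun n => ‖M.c p q n‖ ^ 2)
  have hs : Summable (fun t : ℕ × ℕ => ‖M.c p q (t.1 + t.2)‖ ^ 2) := by
    rw [summable_prod_of_nonneg (fun _ => sq_nonneg _)]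
    refine ⟨fun k => (h3 k).summable, ?_⟩
    refine h2.summable.congr fun k => ?_
    exact (h3 k).tsum_eq.symm
  have h4 := hs.hasSum.prod_fiberwise h3
  rw [← h4.unique h2]
  exact hs.hasSum

lemma c_InH12 : InH12 (M.c p q) := by
  have hs := (M.c_hasSum p q).summable
  refine ⟨memL2_of_le hs fun n => ?_, ?_⟩
  · have : (0:ℝ) ≤ n := Nat.cast_nonneg n
    nlinarith [sq_nonneg ‖M.c p q n‖]
  · refine Summable.of_nonneg_of_le (fun n => by positivity) (fun n => ?_) hs
    nlinarith [sq_nonneg ‖M.c p q n‖]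

def Phi (s : (ℕ → Circle) × (ℕ → Circle)) : H12 := ⟨M.c s.1 s.2, M.c_InH12 s.1 s.2⟩

lemma Phi_norm (s : (ℕ → Circle) × (ℕ → Circle)) : ‖(M.Phi s).toL2‖ ^ 2 = ∑' j, lam j ^ 2 := by
  refine (L2_norm_sq _).unique ?_
  convert M.c_hasSum s.1 s.2 using 1
  funext n
  change ‖(Real.sqrt (1 + (n : ℝ)) : ℂ) * M.c s.1 s.2 n‖ ^ 2 = _
  rw [norm_mul, mul_pow, Complex.norm_real, Real.norm_eq_abs, sq_abs, Real.sq_sqrt (by positivity)]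

/-- constant norm and coordinatewise continuity give norm continuity -/
lemma cont_of_coord {S : Type*} [TopologicalSpace S] {f : S → L2} {C : ℝ}
    (hn : ∀ s, ‖f s‖ ^ 2 = C) (hc : ∀ n, Continuous fun s => f s n) : Continuous f := by
  have hw : ∀ x : L2, Continuous fun s => ⟪x, f s⟫_ℂ := by
    intro x
    have hd : x ∈ closure ((Submodule.span ℂ (Set.range dl) : Submodule ℂ L2) : Set L2) := by
      have : (Submodule.span ℂ (Set.range dl)).topologicalClosure = ⊤ := by
        rw [Submodule.topologicalClosure_eq_top_iff, Submodule.eq_bot_iff]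
        intro y hy
        apply L2_ext_inner; intro n
        rw [Submodule.mem_orthogonal] at hy
        have := hy (dl n) (Submodule.subset_span ⟨n, rfl⟩)
        rw [inner_dl] at this; rw [this]; rfl
      have h2 : x ∈ (Submodule.span ℂ (Set.range dl)).topologicalClosure := by rw [this]; trivial
      exact h2
    have hsp : ∀ y ∈ Submodule.span ℂ (Set.range dl), Continuous fun s => ⟪y, f s⟫_ℂ := by
      intro y hy
      induction hy using Submodule.span_induction with
      | mem y h => obtain ⟨n, rfl⟩ := h; simpa only [inner_dl] using hc n
      | zero => simpa using continuous_const
      | add a b _ _ ha hb => simp only [inner_add_left]; exact ha.add hb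
      | smul a b _ hb => simpa only [inner_smul_left] using hb.const_mul _
    rw [continuous_iff_continuousAt]
    intro s
    rw [ContinuousAt, Metric.tendsto_nhds]
    intro ε hε
    have hC : 0 ≤ Real.sqrt C := Real.sqrt_nonneg C
    have hfn : ∀ t, ‖f t‖ = Real.sqrt C := fun t => by rw [← hn t, Real.sqrt_sq (norm_nonneg _)]
    obtain ⟨y, hy, hxy⟩ := Metric.mem_closure_iff.1 hd (ε / (3 * (Real.sqrt C + 1))) (by positivity)
    rw [dist_eq_norm] at hxy
    have hb : ∀ t, ‖⟪x - y, f t⟫_ℂ‖ < ε / 3 := by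
      intro t
      calc _ ≤ ‖x - y‖ * ‖f t‖ := norm_inner_le_norm _ _
        _ ≤ ‖x - y‖ * (Real.sqrt C + 1) := by rw [hfn]; gcongr; linarith
        _ < ε / (3 * (Real.sqrt C + 1)) * (Real.sqrt C + 1) := by gcongr
        _ = ε / 3 := by field_simp
    have := Metric.tendsto_nhds.1 ((hsp y hy).tendsto s) (ε / 3) (by positivity)
    filter_upwards [this] with t ht
    rw [dist_eq_norm] at ht ⊢
    have e : ⟪x, f t⟫_ℂ - ⟪x, f s⟫_ℂ
        = (⟪y, f t⟫_ℂ - ⟪y, f s⟫_ℂ) + (⟪x - y, f t⟫_ℂ - ⟪x - y, f s⟫_ℂ) := by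
      rw [inner_sub_left, inner_sub_left]; ring
    rw [e]
    calc _ ≤ ‖⟪y, f t⟫_ℂ - ⟪y, f s⟫_ℂ‖ + ‖⟪x - y, f t⟫_ℂ - ⟪x - y, f s⟫_ℂ‖ := norm_add_le _ _
      _ ≤ ‖⟪y, f t⟫_ℂ - ⟪y, f s⟫_ℂ‖ + (‖⟪x - y, f t⟫_ℂ‖ + ‖⟪x - y, f s⟫_ℂ‖) := by
        gcongr; exact norm_sub_le _ _
      _ < ε := by linarith [hb t, hb s]
  rw [continuous_iff_continuousAt]
  intro s
  rw [ContinuousAt, tendsto_iff_norm_sub_tendsto_zero]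
  have h2 : ∀ t, ‖f t - f s‖ ^ 2 = 2 * C - 2 * (⟪f s, f t⟫_ℂ).re := by
    intro t
    rw [@norm_sub_sq ℂ, hn, hn, ← inner_conj_symm]
    simp only [RCLike.re_to_complex, Complex.conj_re]; ring
  have h3 : Filter.Tendsto (fun t => ‖f t - f s‖ ^ 2) (nhds s) (nhds 0) := by
    simp_rw [h2]
    have := ((Complex.continuous_re.comp (hw (f s))).tendsto s).const_mul 2 |>.const_sub (2 * C)
    have e : 2 * C - 2 * (⟪f s, f s⟫_ℂ).re = 0 := by
      rw [inner_self_c, hn, Complex.ofReal_re]; ring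
    simp only [Function.comp] at this
    rw [e] at this
    exact this
  have := h3.sqrt
  simpa using this

lemma cont_Phi : Continuous M.Phi := by
  have hi : Topology.IsInducing H12.toL2 := ⟨rfl⟩
  rw [hi.continuous_iff]
  refine cont_of_coord M.Phi_norm fun n => ?_
  exact (M.cont_c n).const_mul (Real.sqrt (1 + (n : ℝ)) : ℂ)

end Mdl

lemma hk_dl {c : ℕ → ℂ} {Γ : Op} (h : IsHankelOp c Γ) (k n : ℕ) : (Γ (dl k)) n = c (n + k) := by
  rw [h, tsum_eq_single k]
  · rw [dl_apply]; simp
  · intro b hb; rw [dl_apply]; simp [hb]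

lemma star_coord (x : L2) (n : ℕ) : (star x) n = conj (x n) := rfl

lemma op_ext {X Y : Op} (h : ∀ m n, (X (dl m)) n = (Y (dl m)) n) : X = Y :=
  clm_ext fun m => L2_ext_inner (h m)

lemma star_dl_coord (X : Op) (m n : ℕ) : ((star X) (dl m)) n = conj ((X (dl n)) m) := by
  rw [← inner_dl, star_inner_right, ← inner_conj_symm, inner_dl]

lemma hk_symm {c : ℕ → ℂ} {Γ : Op} (h : IsHankelOp c Γ) : cj Γ = star Γ := by
  apply op_ext; intro m n
  rw [star_dl_coord, hk_dl h, cj_apply, star_dl, star_coord, hk_dl h, add_comm]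

lemma hk_unique {c : ℕ → ℂ} {Γ Γ' : Op} (h : IsHankelOp c Γ) (h' : IsHankelOp c Γ') : Γ = Γ' :=
  op_ext fun m n => by rw [hk_dl h, hk_dl h']

lemma hk_compact {c : ℕ → ℂ} {Γ : Op} (h : IsHankelOp c Γ)
    (hs : Summable fun n : ℕ => (1 + (n : ℝ)) * ‖c n‖ ^ 2) : IsCompactOperator (opT Γ) := by
  have h1 := anti_summable (g := fun n => ‖c n‖ ^ 2) (fun n => sq_nonneg _) hs
  have h2 : ∀ k, ∑' n, ‖c (k + n)‖ ^ 2 = ‖Γ (dl k)‖ ^ 2 := by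
    intro k
    rw [← (L2_norm_sq (Γ (dl k))).tsum_eq]
    refine tsum_congr fun n => ?_
    rw [hk_dl h, add_comm]
  have h3 : Summable fun k => ‖Γ (dl k)‖ ^ 2 := by
    have := h1.prod
    simpa only [h2] using this
  have hc : IsCompactOperator Γ := by
    refine ⟨_, compact_cube h3, ?_⟩
    refine Filter.mem_of_superset (Metric.closedBall_mem_nhds 0 one_pos) ?_
    intro x hx n
    rw [mem_closedBall_zero_iff] at hx
    rw [← inner_dl, ← star_inner_left, ← hk_symm h, cj_apply, star_dl]
    calc _ ≤ ‖star (Γ (dl n))‖ * ‖x‖ := norm_inner_le_norm _ _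
      _ ≤ ‖Γ (dl n)‖ * 1 := by rw [norm_star]; gcongr
      _ = _ := mul_one _
  exact hc.comp_clm _

/-- the shift -/
lemma exists_shift : ∃ S : Op, star S * S = 1 ∧ (∀ n, S (dl n) = dl (n + 1)) ∧ cj S = S ∧
    S * star S = 1 - rk (dl 0) := by
  have ho : Orthonormal ℂ (fun n => dl (n + 1)) := by
    constructor
    · intro n
      have : ⟪dl (n + 1), dl (n + 1)⟫_ℂ = 1 := by rw [inner_dl, dl_apply]; simp
      rw [inner_self_c] at this
      have h2 : ‖dl (n + 1)‖ ^ 2 = 1 := by exact_mod_cast this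
      nlinarith [norm_nonneg (dl (n + 1))]
    · intro n m hnm
      change ⟪dl (n + 1), dl (m + 1)⟫_ℂ = 0
      rw [inner_dl, dl_apply, if_neg (by omega)]
  obtain ⟨S, hS, h⟩ := iso_of_orthonormal ho
  refine ⟨S, hS, h, ?_, ?_⟩
  · apply clm_ext; intro n
    rw [cj_apply, star_dl, h, star_dl]
  · have e : ∀ m, (star S) (dl (m + 1)) = dl m := fun m => by rw [← h, iso_apply hS]
    have e0 : (star S) (dl 0) = 0 := by
      apply L2_ext_inner; intro n
      rw [star_dl_coord, h, dl_apply, if_neg (by omega)]; simp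
    apply clm_ext; intro n
    change S (star S (dl n)) = dl n - rk (dl 0) (dl n)
    rw [rk_apply, inner_dl, dl_apply]
    cases n with
    | zero => rw [e0]; simp
    | succ n => rw [e, h]; simp

lemma dg_pow {a : ℕ → ℂ} (ha : BB a) (k : ℕ) (x : L2) (j : ℕ) :
    ((dg a ^ k) x) j = a j ^ k * x j := by
  induction k with
  | zero => simp
  | succ k ih => rw [pow_succ', op_mul_apply, dg_apply ha, ih]; ring

lemma dg_pow_eq {a : ℕ → ℂ} (ha : BB a) (k : ℕ) : BB (fun n => a n ^ k) ∧
    dg a ^ k = dg (fun n => a n ^ k) := by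
  have hb : BB (fun n => a n ^ k) := by
    obtain ⟨C, hC⟩ := ha
    exact ⟨C ^ k, fun n => by rw [norm_pow]; exact pow_le_pow_left₀ (norm_nonneg _) (hC n) k⟩
  refine ⟨hb, ?_⟩
  ext1 x; apply L2_ext_inner; intro j
  rw [dg_pow ha, dg_apply hb]

lemma iso_conj_pow {W X : Op} (hW : star W * W = 1) (k : ℕ) :
    (W * X * star W) ^ (k + 1) = W * X ^ (k + 1) * star W := by
  induction k with
  | zero => simp
  | succ k ih =>
    rw [pow_succ, ih, pow_succ X (k + 1)]
    calc _ = W * (X ^ (k + 1) * (star W * W) * X) * star W := by noncomm_ring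
      _ = _ := by rw [hW, mul_one]

lemma trace_pow {W : Op} (hW : star W * W = 1) {a : ℕ → ℝ} (ha : Summable fun n => a n ^ 2) (k : ℕ) :
    HasSum (fun n => ⟪dl n, ((W * dg (fun n => (a n : ℂ) ^ 2) * star W) ^ (k + 1)) (dl n)⟫_ℂ)
      ((∑' n, (a n ^ 2) ^ (k + 1) : ℝ) : ℂ) := by
  have hs : Summable fun n => (a n ^ 2) ^ (k + 1) := by
    obtain ⟨C, hC⟩ := BB_sq ha
    have hC' : ∀ n, a n ^ 2 ≤ C := fun n => by
      have := hC n
      rw [norm_pow, Complex.norm_real, Real.norm_eq_abs, sq_abs] at this; exact this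
    refine Summable.of_nonneg_of_le (fun n => by positivity) (fun n => ?_) (ha.mul_left (C ^ k))
    rw [pow_succ]
    gcongr
    exact hC' n
  have := trace_lemma hW hs (fun n => by positivity)
  rw [iso_conj_pow hW, (dg_pow_eq (BB_sq ha) _).2]
  convert this using 8
  push_cast; rfl

lemma pow_sub_pow_op (X Y : Op) (k : ℕ) :
    X ^ k - Y ^ k = ∑ i ∈ Finset.range k, X ^ (k - 1 - i) * (X - Y) * Y ^ i := by
  induction k with
  | zero => simp
  | succ k ih =>
    rw [Finset.sum_range_succ]
    have e : ∀ i ∈ Finset.range k, X ^ (k + 1 - 1 - i) * (X - Y) * Y ^ i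
        = X * (X ^ (k - 1 - i) * (X - Y) * Y ^ i) := by
      intro i hi
      rw [Finset.mem_range] at hi
      have : k + 1 - 1 - i = (k - 1 - i) + 1 := by omega
      rw [this, pow_succ']; noncomm_ring
    rw [Finset.sum_congr rfl e, ← Finset.mul_sum, ← ih]
    simp only [Nat.add_sub_cancel, Nat.sub_self, pow_zero, one_mul, pow_succ']
    noncomm_ring

lemma trace_id {W0 W1 : Op} (h0 : star W0 * W0 = 1) (h1 : star W1 * W1 = 1) {a b : ℕ → ℝ}
    (ha : Summable fun n => a n ^ 2) (hb : Summable fun n => b n ^ 2) {T1 T2 : Op} {u : L2}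
    (e1 : T1 = W0 * dg (fun n => (a n : ℂ) ^ 2) * star W0)
    (e2 : T2 = W1 * dg (fun n => (b n : ℂ) ^ 2) * star W1)
    (e3 : T1 - T2 = rk u) (k : ℕ) :
    ∑ i ∈ Finset.range (k + 1), ⟪(T2 ^ i) u, (T1 ^ (k - i)) u⟫_ℂ
      = ((∑' n, (a n ^ 2) ^ (k + 1) : ℝ) : ℂ) - ((∑' n, (b n ^ 2) ^ (k + 1) : ℝ) : ℂ) := by
  have t1 := trace_pow h0 ha k
  have t2 := trace_pow h1 hb k
  rw [← e1] at t1
  rw [← e2] at t2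
  have hT2 : star T2 = T2 := by
    rw [e2]; simp only [star_mul, star_star, dg_star (BB_sq hb)]
    simp only [map_pow, Complex.conj_ofReal]; noncomm_ring
  have t3 := t1.sub t2
  have t4 : HasSum (fun n => ∑ i ∈ Finset.range (k + 1),
      conj (((T2 ^ i) u) n) * ((T1 ^ (k - i)) u) n)
      (∑ i ∈ Finset.range (k + 1), ⟪(T2 ^ i) u, (T1 ^ (k - i)) u⟫_ℂ) := by
    refine hasSum_sum fun i _ => ?_
    rw [inner_L2]
    exact (summable_inner_mul _ _).of_norm.hasSum
  refine t4.unique ?_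
  have e0 : (fun n => ∑ i ∈ Finset.range (k + 1),
      conj (((T2 ^ i) u) n) * ((T1 ^ (k - i)) u) n)
      = fun n => ⟪dl n, (T1 ^ (k + 1)) (dl n)⟫_ℂ - ⟪dl n, (T2 ^ (k + 1)) (dl n)⟫_ℂ := by
    funext n
    rw [← inner_sub_right]
    have : (T1 ^ (k + 1)) (dl n) - (T2 ^ (k + 1)) (dl n) = (T1 ^ (k + 1) - T2 ^ (k + 1)) (dl n) := rfl
    rw [this, pow_sub_pow_op, e3, ContinuousLinearMap.sum_apply, inner_sum]
    refine Finset.sum_congr rfl fun i _ => ?_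
    rw [op_mul_apply, op_mul_apply, rk_apply, map_smul, inner_smul_right, inner_dl, ← star_inner_left,
      star_pow, hT2, ← inner_conj_symm, inner_dl, Nat.add_sub_cancel]
  rw [e0]
  exact t3

lemma array_unique {M M' : ℕ → ℕ → ℂ}
    (h : ∀ i l, M (i + 1) l = M i (l + 1) - M i 0 * M 0 l)
    (h' : ∀ i l, M' (i + 1) l = M' i (l + 1) - M' i 0 * M' 0 l)
    (hs : ∀ k, ∑ i ∈ Finset.range (k + 1), M i (k - i) = ∑ i ∈ Finset.range (k + 1), M' i (k - i)) :
    ∀ n i l, i + l = n → M i l = M' i l := by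
  intro n
  induction n using Nat.strong_induction_on with
  | _ n ih =>
  have hd : ∀ i l, i + l = n → M i l - M' i l = M 0 n - M' 0 n := by
    intro i
    induction i with
    | zero => intro l hl; rw [zero_add] at hl; rw [hl]
    | succ i ihi =>
      intro l hl
      rw [h, h', ih i (by omega) i 0 (by omega), ih l (by omega) 0 l (by omega),
        ← ihi (l + 1) (by omega)]
      ring
  have h0 : M 0 n - M' 0 n = 0 := by
    have h1 := hs n
    rw [← sub_eq_zero, ← Finset.sum_sub_distrib] at h1
    rw [Finset.sum_congr rfl (fun i hi => hd i (n - i) (by rw [Finset.mem_range] at hi; omega))] at h1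
    simp only [Finset.sum_const, Finset.card_range, nsmul_eq_mul] at h1
    rcases mul_eq_zero.1 h1 with h2 | h2
    · exact absurd h2 (by exact_mod_cast Nat.succ_ne_zero n)
    · exact h2
  intro i l hil
  have := hd i l hil
  rw [h0] at this
  exact sub_eq_zero.1 this

lemma array_rec {T1 T2 : Op} {u : L2} (hT2 : star T2 = T2) (e3 : T1 - T2 = rk u) (i l : ℕ) :
    ⟪(T2 ^ (i + 1)) u, (T1 ^ l) u⟫_ℂ = ⟪(T2 ^ i) u, (T1 ^ (l + 1)) u⟫_ℂ
      - ⟪(T2 ^ i) u, (T1 ^ 0) u⟫_ℂ * ⟪(T2 ^ 0) u, (T1 ^ l) u⟫_ℂ := by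
  have e : T2 = T1 - rk u := by rw [← e3]; abel
  have e4 : T2 ((T1 ^ l) u) = T1 ((T1 ^ l) u) - rk u ((T1 ^ l) u) := by
    conv_lhs => rw [e]
    rfl
  rw [pow_succ' T2, op_mul_apply, ← hT2, star_inner_left, hT2, e4, inner_sub_right, rk_apply,
    inner_smul_right, pow_succ' T1, op_mul_apply, pow_zero, pow_zero]
  change _ = _ - ⟪(T2 ^ i) u, u⟫_ℂ * ⟪u, (T1 ^ l) u⟫_ℂ
  ring


lemma inner_pow_diag {W0 : Op} (h0 : star W0 * W0 = 1) {a : ℕ → ℝ}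
    (ha : Summable fun n => a n ^ 2) (u : L2) (k : ℕ) :
    ⟪u, ((W0 * dg (fun n => (a n : ℂ) ^ 2) * star W0) ^ (k + 1)) u⟫_ℂ
      = ∑' j, (conj ((star W0 u) j) * (star W0 u) j) * ((a j ^ 2 : ℝ) : ℂ) ^ (k + 1) := by
  rw [iso_conj_pow h0, op_mul_apply, op_mul_apply, ← star_inner_left, inner_L2]
  refine tsum_congr fun j => ?_
  rw [dg_pow (BB_sq ha)]
  push_cast; ring

lemma summable_pow_weights {a : ℕ → ℝ} (ha : Summable fun n => a n ^ 2) (b : L2) (k : ℕ) :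
    Summable fun j => (conj (b j) * b j) * ((a j ^ 2 : ℝ) : ℂ) ^ (k + 1) := by
  have := (summable_inner_mul b ((dg (fun n => (a n : ℂ) ^ 2) ^ (k + 1)) b)).of_norm
  refine this.congr fun j => ?_
  rw [dg_pow (BB_sq ha)]
  push_cast; ring

namespace Mdl
variable {lam mu : ℕ → ℝ} (M : Mdl lam mu)

lemma weights_eq {W0 W1 : Op} (h0 : star W0 * W0 = 1) (h1 : star W1 * W1 = 1)
    {T1 T2 : Op} {u : L2}
    (e1 : T1 = W0 * dg (fun n => (lam n : ℂ) ^ 2) * star W0)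
    (e2 : T2 = W1 * dg (fun n => (mu n : ℂ) ^ 2) * star W1)
    (e3 : T1 - T2 = rk u) (j : ℕ) :
    ‖(star W0 u) j‖ = M.ν j := by
  have hsa : ∀ {X : Op}, star (X * dg (fun n => (mu n : ℂ) ^ 2) * star X)
      = X * dg (fun n => (mu n : ℂ) ^ 2) * star X := by
    intro X
    simp only [star_mul, star_star, dg_star M.BBm2]
    simp only [map_pow, Complex.conj_ofReal]; noncomm_ring
  have hone : star (1 : Op) * 1 = 1 := by simp
  have f1 : dg (fun n => (lam n : ℂ) ^ 2) = (1 : Op) * dg (fun n => (lam n : ℂ) ^ 2) * star (1 : Op) := by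
    simp
  have f3 : dg (fun n => (lam n : ℂ) ^ 2) - M.F * dg (fun n => (mu n : ℂ) ^ 2) * star M.F = rk M.u0 := by
    rw [← M.hT]; abel
  have key := array_unique
    (M := fun i l => ⟪(T2 ^ i) u, (T1 ^ l) u⟫_ℂ)
    (M' := fun i l => ⟪((M.F * dg (fun n => (mu n : ℂ) ^ 2) * star M.F) ^ i) M.u0,
      ((dg (fun n => (lam n : ℂ) ^ 2)) ^ l) M.u0⟫_ℂ)
    (array_rec (by rw [e2]; exact hsa) e3) (array_rec hsa f3)
    (fun k => by
      rw [trace_id h0 h1 M.lam_sum M.mu_sum e1 e2 e3 k]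
      rw [trace_id hone M.hF M.lam_sum M.mu_sum f1 rfl f3 k])
  have key2 : ∀ k : ℕ, ⟪u, (T1 ^ (k + 1)) u⟫_ℂ
      = ⟪M.u0, ((dg (fun n => (lam n : ℂ) ^ 2)) ^ (k + 1)) M.u0⟫_ℂ := by
    intro k
    have := key (k + 1) 0 (k + 1) (by omega)
    simp only [pow_zero] at this
    exact this
  set b := star W0 u with hb
  have hz := moment_lemma (a := fun j => conj (b j) * b j - conj (M.u0 j) * M.u0 j)
    (x := fun j => lam j ^ 2)
    (((summable_inner_mul b b).of_norm.sub (summable_inner_mul M.u0 M.u0).of_norm).norm)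
    (fun i j hij => by
      have := M.lam_anti hij
      have := M.lam_pos j
      change lam j ^ 2 < lam i ^ 2
      gcongr)
    (fun j => by have := M.lam_pos j; positivity)
    (fun k hk => by
      obtain ⟨k, rfl⟩ : ∃ m, k = m + 1 := ⟨k - 1, by omega⟩
      have e := key2 k
      rw [e1, inner_pow_diag h0 M.lam_sum, f1, inner_pow_diag hone M.lam_sum] at e
      simp only [star_one] at e
      change _ = ∑' j, (conj (M.u0 j) * M.u0 j) * ((lam j ^ 2 : ℝ) : ℂ) ^ (k + 1) at e
      simp only [sub_mul]
      rw [(summable_pow_weights M.lam_sum b k).tsum_sub (summable_pow_weights M.lam_sum M.u0 k), e, sub_self])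
  have := hz j
  simp only [M.u0_apply, Complex.conj_ofReal] at this
  rw [mul_comm, Complex.mul_conj, Complex.normSq_eq_norm_sq, sub_eq_zero] at this
  have h2 : ‖b j‖ ^ 2 = M.ν j ^ 2 := by rw [sq (M.ν j)]; exact_mod_cast this
  exact (pow_left_inj₀ (norm_nonneg _) (M.ν_pos j).le two_ne_zero).1 h2

/-- normalised diagonalisation -/
lemma exists_norm_diag {W0 W1 : Op} (h0 : star W0 * W0 = 1) (h1 : star W1 * W1 = 1)
    {Γ T2 : Op} {u : L2}
    (e1 : opT Γ = W0 * dg (fun n => (lam n : ℂ) ^ 2) * star W0)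
    (e2 : T2 = W1 * dg (fun n => (mu n : ℂ) ^ 2) * star W1)
    (e3 : opT Γ - T2 = rk u) (hu : u = Γ (dl 0)) :
    ∃ W : Op, star W * W = 1 ∧ opT Γ = W * dg (fun n => (lam n : ℂ) ^ 2) * star W ∧ W M.u0 = u := by
  have hν := M.weights_eq h0 h1 e1 e2 e3
  set b := star W0 u with hb
  have hWW : W0 * star W0 * Γ = Γ := by
    have e1' : (1 - W0 * star W0) * Γ = 0 := by
      rw [← CStarRing.mul_star_self_eq_zero_iff]
      have : (1 - W0 * star W0) * Γ * star ((1 - W0 * star W0) * Γ)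
        = (1 - W0 * star W0) * opT Γ * star (1 - W0 * star W0) := by
        rw [star_mul, opT_eq]; noncomm_ring
      rw [this, e1]
      have : (1 - W0 * star W0) * (W0 * dg (fun n => (lam n : ℂ) ^ 2) * star W0)
          = W0 * (1 - star W0 * W0) * dg (fun n => (lam n : ℂ) ^ 2) * star W0 := by
        noncomm_ring
      rw [this, h0]; simp
    rw [sub_mul, one_mul, sub_eq_zero] at e1'; exact e1'.symm
  have hub : W0 b = u := by
    have := congrArg (fun X : Op => X (dl 0)) hWW
    simp only [op_mul_apply, ← hu] at this
    exact this
  have hν0 : ∀ j, (M.ν j : ℂ) ≠ 0 := fun j => by exact_mod_cast (M.ν_pos j).ne'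
  have hθn : ∀ j, ‖b j / (M.ν j : ℂ)‖ = 1 := fun j => by
    rw [norm_div, hν, Complex.norm_real, Real.norm_of_nonneg (M.ν_pos j).le, div_self (M.ν_pos j).ne']
  let θ : ℕ → Circle := fun j => ⟨b j / (M.ν j : ℂ), by
    rw [Submonoid.unitSphere, Submonoid.mem_mk]; exact mem_sphere_zero_iff_norm.2 (hθn j)⟩
  have hθ : ∀ j, (θ j : ℂ) = b j / (M.ν j : ℂ) := fun j => rfl
  refine ⟨W0 * U θ, ?_, ?_, ?_⟩
  · rw [star_mul]
    calc _ = star (U θ) * (star W0 * W0) * U θ := by noncomm_ring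
      _ = 1 := by rw [h0, mul_one, star_U_U]
  · have e : U θ * dg (fun n => (lam n : ℂ) ^ 2) * star (U θ) = dg (fun n => (lam n : ℂ) ^ 2) := by
      rw [star_U, U, dg_mul (BB_circ θ) M.BBl2, dg_mul ((BB_circ θ).mul M.BBl2) (BB_circ θ).conj]
      congr 1; funext n
      linear_combination (lam n : ℂ) ^ 2 * circ_mul_conj (θ n)
    rw [e1, star_mul]
    conv_lhs => rw [← e]
    noncomm_ring
  · rw [op_mul_apply, ← hub]
    congr 1
    apply L2_ext_inner; intro j
    rw [U, dg_apply (BB_circ θ), hθ, M.u0_apply, div_mul_cancel₀ _ (hν0 j)]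

lemma surj {c : ℕ → ℂ} (hc : InH12 c) {Γ Γt : Op} (hΓ : IsHankelOp c Γ)
    (hΓt : IsHankelOp (shiftSeq c) Γt) (hl : HasSimpleSValsSeq Γ lam) (hm : HasSimpleSValsSeq Γt mu) :
    ∃ p q, c = M.c p q := by
  obtain ⟨S, hS1, hS2, hS3, hS4⟩ := exists_shift
  have hs : Summable fun n : ℕ => (1 + (n : ℝ)) * ‖c n‖ ^ 2 :=
    ((summable_sq_of_memℓp hc.1).add hc.2).congr fun n => by ring
  have hst : Summable fun n : ℕ => (1 + (n : ℝ)) * ‖shiftSeq c n‖ ^ 2 := by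
    refine Summable.of_nonneg_of_le (fun n => by positivity) (fun n => ?_) ((summable_nat_add_iff 1).2 hs)
    change _ * ‖c (n + 1)‖ ^ 2 ≤ _
    gcongr
    linarith
  obtain ⟨W0, h0, e1⟩ := diag_of_hasSimple (hk_compact hΓ hs) M.lam_sum M.lam_pos M.lam_anti.injective hl
  obtain ⟨W1, h1, e2⟩ := diag_of_hasSimple (hk_compact hΓt hst) M.mu_sum M.mu_pos M.mu_anti.injective hm
  have hsy := hk_symm hΓ
  have hsyt := hk_symm hΓt
  have hGS : Γ * S = Γt := by
    apply op_ext; intro m n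
    rw [op_mul_apply, hS2, hk_dl hΓ, hk_dl hΓt]; rfl
  have hSG : star S * Γ = Γt := by
    have := congrArg (fun X => star (cj X)) hGS
    simp only [cj_mul, star_mul, hS3, hsy, hsyt, star_star] at this
    exact this
  set u := Γ (dl 0) with hu
  have e3 : opT Γ - opT Γt = rk u := by
    have : opT Γt = Γ * (S * star S) * star Γ := by
      rw [opT_eq, ← hGS, star_mul]; noncomm_ring
    rw [this, hS4, opT_eq, hu, ← rk_conj]; noncomm_ring
  obtain ⟨W, hW, d1, hWu⟩ := M.exists_norm_diag h0 h1 e1 e2 e3 hu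
  have hWF : star (W * M.F) * (W * M.F) = 1 := by
    rw [star_mul]
    calc _ = star M.F * (star W * W) * M.F := by noncomm_ring
      _ = _ := by rw [hW, mul_one, M.hF]
  have d2 : opT Γt = (W * M.F) * dg (fun n => (mu n : ℂ) ^ 2) * star (W * M.F) := by
    have f : (W * M.F) * dg (fun n => (mu n : ℂ) ^ 2) * star (W * M.F)
      = W * (M.F * dg (fun n => (mu n : ℂ) ^ 2) * star M.F) * star W := by
      rw [star_mul]; noncomm_ring
    rw [f, ← M.hT, mul_sub, sub_mul, rk_conj, hWu, ← d1, ← e3]; abel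
  obtain ⟨p, hp⟩ := diag_of_symm hW M.lam_sum M.lam_pos M.lam_anti.injective hsy d1
  obtain ⟨q, hq⟩ := diag_of_symm hWF M.mu_sum M.mu_pos M.mu_anti.injective hsyt d2
  refine ⟨p, q, ?_⟩
  have hcW := cj_iso hW
  have hp' : Γ = W * M.P p * star (cj W) := hp
  have hq' : Γt = W * M.G q * star (cj W) := by
    rw [hq, cj_mul, M.cjF, star_mul, G]; noncomm_ring
  have hSW : star S * W = W * M.A p q := by
    apply dg_cancel_right (M.BBP p) (M.P_ne p)
    change star S * W * M.P p = W * M.A p q * M.P p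
    have g1 : star S * W * M.P p = star S * Γ * cj W := by
      rw [hp']
      calc _ = star S * W * M.P p * 1 := by rw [mul_one]
        _ = star S * W * M.P p * (star (cj W) * cj W) := by rw [hcW]
        _ = _ := by noncomm_ring
    rw [g1, hSG, hq', mul_assoc W (M.A p q), A_mul_P, mul_assoc, hcW, mul_one]
  have hv : star W (dl 0) = M.v p := by
    have g2 : M.P p (star (star W (dl 0))) = M.u0 := by
      have g3 : star W u = M.u0 := by rw [← hWu, iso_apply hW]
      rw [← g3, hu, hp', op_mul_apply, op_mul_apply, iso_apply hW, ← cj_star, cj_apply, star_dl]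
    have g4 : M.P p (star (M.v p)) = M.u0 := by
      have := M.P_star_v p
      rw [← cj_P, cj_apply] at this
      rw [← star_star (M.P p (star (M.v p))), this, star_u0]
    have g5 : star (star W (dl 0)) = star (M.v p) := by
      apply L2_ext_inner; intro n
      have := congrArg (fun x : L2 => x n) (g2.trans g4.symm)
      simp only [P, dg_apply (M.BBP p)] at this
      exact mul_left_cancel₀ (M.P_ne p n) this
    exact star_injective g5
  have hSn : ∀ n, star S ^ n * W = W * M.A p q ^ n := by
    intro n
    induction n with
    | zero => simp
    | succ n ih => rw [pow_succ', mul_assoc, ih, ← mul_assoc, hSW, mul_assoc, ← pow_succ']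
  have hSd : ∀ n, (S ^ n) (dl 0) = dl n := by
    intro n
    induction n with
    | zero => simp
    | succ n ih => rw [pow_succ', op_mul_apply, ih, hS2]
  funext n
  have : c n = u n := by rw [hu, hk_dl hΓ, add_zero]
  rw [this, ← inner_dl, ← hSd, ← star_inner_right, star_pow, ← hWu, ← op_mul_apply, hSn, op_mul_apply,
    ← star_inner_left, hv]
  rfl

lemma inj {p q p' q' : ℕ → Circle} (h : M.c p q = M.c p' q') : p = p' ∧ q = q' := by
  have hG : M.Gam p q = M.Gam p' q' := hk_unique (M.hankel p q) (by rw [h]; exact M.hankel p' q')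
  have hGt : M.Gamt p q = M.Gamt p' q' := hk_unique (M.hankelt p q) (by rw [h]; exact M.hankelt p' q')
  have hW := M.W_iso p q
  have hW' := M.W_iso p' q'
  have hu : M.W p q M.u0 = M.W p' q' M.u0 := by
    apply L2_ext_inner; intro n
    rw [W_u0, W_u0, h]
  have hT : M.W p q * dg (fun n => (lam n : ℂ) ^ 2) * star (M.W p q)
      = M.W p' q' * dg (fun n => (lam n : ℂ) ^ 2) * star (M.W p' q') := by
    rw [← opT_Gam, ← opT_Gam, hG]
  have hc : (star (M.W p' q') * M.W p q) * dg (fun n => (lam n : ℂ) ^ 2)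
      = dg (fun n => (lam n : ℂ) ^ 2) * (star (M.W p' q') * M.W p q) := by
    calc _ = star (M.W p' q') * (M.W p q * dg (fun n => (lam n : ℂ) ^ 2) * (star (M.W p q) * M.W p q)) := by
            rw [hW, mul_one, mul_assoc]
      _ = star (M.W p' q') * (M.W p q * dg (fun n => (lam n : ℂ) ^ 2) * star (M.W p q)) * M.W p q := by
            noncomm_ring
      _ = (star (M.W p' q') * M.W p' q') * dg (fun n => (lam n : ℂ) ^ 2) * star (M.W p' q') * M.W p q := by
            rw [hT]; noncomm_ring
      _ = _ := by rw [hW', one_mul, mul_assoc]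
  have hsq : Function.Injective (fun j => (lam j : ℂ) ^ 2) := by
    intro i j hij
    apply M.lam_anti.injective
    have hij' : (lam i : ℂ) ^ 2 = (lam j : ℂ) ^ 2 := hij
    have : lam i ^ 2 = lam j ^ 2 := by exact_mod_cast hij'
    exact (pow_left_inj₀ (M.lam_pos i).le (M.lam_pos j).le two_ne_zero).1 this
  obtain ⟨x, hx, hN⟩ := diag_of_comm M.BBl2 hsq hc
  have hNu : dg x M.u0 = M.u0 := by
    rw [← hN, op_mul_apply, hu, iso_apply hW']
  have hx1 : x = fun _ => 1 := by
    funext n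
    have := congrArg (fun y : L2 => y n) hNu
    simp only [dg_apply hx, M.u0_apply] at this
    have h0 : (M.ν n : ℂ) ≠ 0 := by exact_mod_cast (M.ν_pos n).ne'
    exact mul_right_cancel₀ h0 (by rw [this, one_mul])
  have hN1 : star (M.W p' q') * M.W p q = 1 := by rw [hN, hx1]; exact dg_one
  have hN2 : star (M.W p q) * M.W p' q' = 1 := by
    have := congrArg star hN1
    rwa [star_mul, star_star, star_one] at this
  have hWW : M.W p q = M.W p' q' := by
    rw [← sub_eq_zero, ← CStarRing.star_mul_self_eq_zero_iff, star_sub, sub_mul, mul_sub, mul_sub,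
      hN1, hN2, hW, hW']
    simp
  have hcW := cj_iso hW
  have strip : ∀ X Y : Op, M.W p q * X * star (cj (M.W p q)) = M.W p q * Y * star (cj (M.W p q)) →
      X = Y := by
    intro X Y hXY
    have h1 : ∀ X : Op, X = star (M.W p q) * (M.W p q * X * star (cj (M.W p q))) * cj (M.W p q) := by
      intro X
      calc X = 1 * X * 1 := by simp
        _ = (star (M.W p q) * M.W p q) * X * (star (cj (M.W p q)) * cj (M.W p q)) := by rw [hW, hcW]
        _ = _ := by noncomm_ring
    rw [h1 X, hXY, ← h1 Y]
  have circ : ∀ {a : ℕ → ℝ} (_ : ∀ j, 0 < a j) {r r' : ℕ → Circle},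
      ((fun n => (a n : ℂ) * (r n : ℂ)) = fun n => (a n : ℂ) * (r' n : ℂ)) → r = r' := by
    intro a ha r r' hr
    funext n
    have h0 : (a n : ℂ) ≠ 0 := by exact_mod_cast (ha n).ne'
    exact Circle.ext (mul_left_cancel₀ h0 (congrFun hr n))
  constructor
  · have : M.P p = M.P p' := strip _ _ (by
      change M.Gam p q = _
      rw [hG, Gam, hWW])
    exact circ M.lam_pos (dg_inj (M.BBP p) (M.BBP p') this)
  · have : M.G q = M.G q' := strip _ _ (by
      change M.Gamt p q = _
      rw [hGt, Gamt, hWW])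
    have hFs : ∀ X : Op, X = star M.F * (M.F * X * star M.F) * M.F := by
      intro X
      calc X = 1 * X * 1 := by simp
        _ = (star M.F * M.F) * X * (star M.F * M.F) := by rw [M.hF]
        _ = _ := by noncomm_ring
    refine circ M.mu_pos (dg_inj (M.BBG q) (M.BBG q') ?_)
    rw [hFs (dg fun n => (mu n : ℂ) * (q n : ℂ)), hFs (dg fun n => (mu n : ℂ) * (q' n : ℂ))]
    exact congrArg (fun X => star M.F * X * M.F) this

end Mdl

def splitCircle : ((ℕ → Circle) × (ℕ → Circle)) ≃ₜ (ℕ → AddCircle (2 * Real.pi)) :=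
  ((Homeomorph.sumArrowHomeomorphProdArrow (X := Circle) (ι := ℕ) (ι' := ℕ)).symm.trans
    (Homeomorph.piCongrLeft (Y := fun _ => Circle) Equiv.natSumNatEquivNat)).trans
    (Homeomorph.piCongrRight fun _ => AddCircle.homeomorphCircle'.symm)

lemma final (lam mu : ℕ → ℝ)
    (h1 : ∀ j : ℕ, mu j < lam j)
    (h2 : ∀ j : ℕ, lam (j + 1) < mu j)
    (h3 : ∀ j : ℕ, 0 < mu j)
    (hsum : Summable fun j : ℕ => lam j ^ 2) :
    Nonempty (
      {c : H12 // ∃ Γ Γt : L2 →L[ℂ] L2,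
          IsHankelOp c.1 Γ ∧ IsHankelOp (shiftSeq c.1) Γt ∧
          HasSimpleSValsSeq Γ lam ∧ HasSimpleSValsSeq Γt mu}
        ≃ₜ (ℕ → AddCircle (2 * Real.pi))) := by
  obtain ⟨M⟩ := exists_model lam mu h1 h2 h3 hsum
  let f : (ℕ → Circle) × (ℕ → Circle) → {c : H12 // ∃ Γ Γt : L2 →L[ℂ] L2,
          IsHankelOp c.1 Γ ∧ IsHankelOp (shiftSeq c.1) Γt ∧
          HasSimpleSValsSeq Γ lam ∧ HasSimpleSValsSeq Γt mu} := fun s =>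
    ⟨M.Phi s, M.Gam s.1 s.2, M.Gamt s.1 s.2, M.hankel _ _, M.hankelt _ _, M.simple_Gam _ _,
      M.simple_Gamt _ _⟩
  have hf : Continuous f := M.cont_Phi.subtype_mk _
  have hb : Function.Bijective f := by
    constructor
    · intro s s' hss
      have e : M.c s.1 s.2 = M.c s'.1 s'.2 := congrArg (fun z => z.1.1) hss
      obtain ⟨a, b⟩ := M.inj e
      exact Prod.ext a b
    · rintro ⟨c, Γ, Γt, a, b, d, e⟩
      obtain ⟨p, q, hpq⟩ := M.surj c.2 a b d e
      exact ⟨(p, q), Subtype.ext (Subtype.ext hpq.symm)⟩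
  exact ⟨(Continuous.homeoOfEquivCompactToT2 (f := Equiv.ofBijective f hb) hf).symm.trans splitCircle⟩


/-- Given `λ_1 > μ_1 > λ_2 > μ_2 > … > 0` with `Σ λ_j² < ∞`, the set of `c ∈ h^{1/2}` whose
Hankel operator `Γ_c` has simple positive singular values exactly the `λ_j` and whose shifted
Hankel operator `Γ̃_c` has simple positive singular values exactly the `μ_m`, endowed with
the `h^{1/2}` topology, is homeomorphic to the infinite-dimensional torus `𝕋^ℕ`. -/
theorem statement3 (lam mu : ℕ → ℝ)
    (h1 : ∀ j : ℕ, mu j < lam j)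
    (h2 : ∀ j : ℕ, lam (j + 1) < mu j)
    (h3 : ∀ j : ℕ, 0 < mu j)
    (hsum : Summable fun j : ℕ => lam j ^ 2) :
    Nonempty (
      {c : H12 // ∃ Γ Γt : L2 →L[ℂ] L2,
          IsHankelOp c.1 Γ ∧ IsHankelOp (shiftSeq c.1) Γt ∧
          HasSimpleSValsSeq Γ lam ∧ HasSimpleSValsSeq Γt mu}
        ≃ₜ (ℕ → AddCircle (2 * Real.pi))) := by
  exact final lam mu h1 h2 h3 hsum

end
end

section
/- Let N ≥ 1 and let c ∈ h^{1/2} be N-generic, with simple positive eigenvalues λ_1² > … > λ_N² of Γ_cΓ_c* and normalization constants ν_1, …, ν_N. Then Γ̃_cΓ̃_c* has exactly N positive eigenvalues, all simple, say μ_1² > … > μ_N²; these are precisely the N real solutions σ of the equation Σ_{j=1}^N λ_j²ν_j²/(λ_j² − σ) = 1, and they satisfy the strict interlacing λ_1² > μ_1² > λ_2² > μ_2² > … > λ_N² > μ_N² > 0. -/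
open scoped InnerProductSpace ComplexConjugate ENNReal

noncomputable section

/-- `c` is `N`-generic, witnessed by its Hankel operator `Γ`: `Γ` has rank `N`, `Γ Γ*` has `N`
simple positive eigenvalues `λ_1² > … > λ_N²`, the norms `ν_j` of the orthogonal projections
of `e₀` onto the corresponding (one-dimensional) eigenspaces are positive, and `Σ ν_j² < 1`.
(For a simple eigenvalue, the norm of the projection of `e₀` on the eigenspace equals
`|⟨v, e₀⟩|` for any unit eigenvector `v`.) -/
def NGenericData (Γ : L2 →L[ℂ] L2) (N : ℕ) (lam nu : Fin N → ℝ) : Prop :=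
  LinearMap.rank Γ.toLinearMap = N ∧
  (∀ j k : Fin N, j < k → lam k < lam j) ∧
  (∀ j : Fin N, 0 < lam j) ∧
  {z : ℂ | z ≠ 0 ∧ Module.End.HasEigenvalue (opT Γ).toLinearMap z}
    = Set.range (fun j : Fin N => ((lam j : ℂ)) ^ 2) ∧
  (∀ j : Fin N,
    Module.finrank ℂ (Module.End.eigenspace (opT Γ).toLinearMap ((lam j : ℂ) ^ 2)) = 1) ∧
  (∀ j : Fin N, ∃ v : L2, ‖v‖ = 1 ∧ (opT Γ) v = ((lam j : ℂ) ^ 2) • v ∧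
    nu j = ‖(⟪v, e0⟫_ℂ)‖) ∧
  (∀ j : Fin N, 0 < nu j) ∧
  (∑ j : Fin N, (nu j) ^ 2) < 1

/-- secular function near a pole -/
lemma sec_near {N : ℕ} (a β : Fin N → ℝ) (hinj : Function.Injective a) (hβ : ∀ j, 0 < β j) (m : Fin N) :
    ∀ᶠ σ in nhds (a m), σ ≠ a m → 0 < (a m - σ) * ((∑ j, β j / (a j - σ)) - 1) := by
  have hcont : ContinuousAt (fun σ : ℝ => β m + (a m - σ) * ((∑ j ∈ Finset.univ.erase m, β j / (a j - σ)) - 1)) (a m) := by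
    have : ContinuousAt (fun σ : ℝ => ∑ j ∈ Finset.univ.erase m, β j / (a j - σ)) (a m) := by
      apply tendsto_finsetSum
      intro j hj
      have hne : a j - a m ≠ 0 := sub_ne_zero.mpr fun h => (Finset.ne_of_mem_erase hj) (hinj h)
      exact (ContinuousAt.div continuousAt_const (by fun_prop) hne : ContinuousAt (fun σ : ℝ => β j / (a j - σ)) (a m))
    fun_prop
  have h0 := hcont.eventually (lt_mem_nhds (by simpa using hβ m : (0:ℝ) < _))
  filter_upwards [h0] with σ hσ hne
  rw [← Finset.add_sum_erase _ _ (Finset.mem_univ m)]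
  have h1 : a m - σ ≠ 0 := sub_ne_zero.mpr (Ne.symm hne)
  have : (a m - σ) * (β m / (a m - σ) + ∑ x ∈ Finset.univ.erase m, β x / (a x - σ) - 1)
    = β m + (a m - σ) * ((∑ j ∈ Finset.univ.erase m, β j / (a j - σ)) - 1) := by
    field_simp
    ring
  rw [this]; exact hσ

lemma sec_root {N : ℕ} (a β : Fin N → ℝ) (ha : StrictAnti a) (hpos : ∀ j, 0 < a j)
    (hβ : ∀ j, 0 < β j) (h0 : ∑ j, β j / a j < 1) (m : Fin N) :
    ∃ σ : ℝ, 0 < σ ∧ σ < a m ∧ (∀ k : Fin N, m < k → a k < σ) ∧ ∑ j, β j / (a j - σ) = 1 := by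
  classical
  -- lower end
  obtain ⟨y, hy0, hym, hyk, hyf⟩ : ∃ y : ℝ, 0 ≤ y ∧ y < a m ∧ (∀ k : Fin N, m < k → a k < y) ∧
      ∑ j, β j / (a j - y) < 1 := by
    by_cases hm : (m : ℕ) + 1 < N
    · let k : Fin N := ⟨m + 1, hm⟩
      have hmk : m < k := by simp [k, Fin.lt_def]
      have e1 := (sec_near a β ha.injective hβ k).filter_mono (nhdsWithin_le_nhds (s := Set.Ioi (a k)))
      have e2 : ∀ᶠ σ in nhdsWithin (a k) (Set.Ioi (a k)), σ < a m :=
        nhdsWithin_le_nhds (gt_mem_nhds (ha hmk))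
      have e3 : ∀ᶠ σ in nhdsWithin (a k) (Set.Ioi (a k)), a k < σ := eventually_mem_nhdsWithin
      obtain ⟨y, h1, h2, h3⟩ := (e1.and (e2.and e3)).exists
      refine ⟨y, (hpos k).le.trans h3.le, h2, ?_, ?_⟩
      · intro l hl
        have : k ≤ l := by simp only [k, Fin.le_def, Fin.lt_def] at *; omega
        exact (ha.antitone this).trans_lt h3
      · have := h1 h3.ne'
        nlinarith
    · refine ⟨0, le_rfl, hpos m, ?_, by simpa using h0⟩
      intro k hk
      exact absurd k.2 (by simp only [Fin.lt_def] at hk; omega)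
  obtain ⟨x, hxm, hyx, hxf⟩ : ∃ x : ℝ, x < a m ∧ y < x ∧ 1 < ∑ j, β j / (a j - x) := by
    have e1 := (sec_near a β ha.injective hβ m).filter_mono (nhdsWithin_le_nhds (s := Set.Iio (a m)))
    have e2 : ∀ᶠ σ in nhdsWithin (a m) (Set.Iio (a m)), y < σ :=
      nhdsWithin_le_nhds (lt_mem_nhds hym)
    have e3 : ∀ᶠ σ in nhdsWithin (a m) (Set.Iio (a m)), σ < a m := eventually_mem_nhdsWithin
    obtain ⟨x, h1, h2, h3⟩ := (e1.and (e2.and e3)).exists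
    refine ⟨x, h3, h2, ?_⟩
    have := h1 h3.ne
    nlinarith
  have hcont : ContinuousOn (fun σ : ℝ => ∑ j, β j / (a j - σ)) (Set.Icc y x) := by
    apply continuousOn_finsetSum
    intro j _
    apply ContinuousOn.div continuousOn_const (by fun_prop)
    intro σ hσ
    rcases lt_or_ge m j with h | h
    · have := hyk j h; have := hσ.1; intro h; linarith
    · have := ha.antitone h; have := hσ.2; intro h; linarith
  obtain ⟨σ, hσ, hf⟩ := intermediate_value_Ioo hyx.le hcont ⟨hyf, hxf⟩
  exact ⟨σ, hy0.trans_lt hσ.1, hσ.2.trans hxm, fun k hk => (hyk k hk).trans hσ.1, hf⟩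

lemma sec_unique {N : ℕ} (a β : Fin N → ℝ) (ha : StrictAnti a) 
    (hβ : ∀ j, 0 < β j) (r : Fin N → ℝ) (hr1 : ∀ m, r m < a m)
    (hr2 : ∀ m k : Fin N, m < k → a k < r m) (hr : ∀ m, ∑ j, β j / (a j - r m) = 1)
    (σ : ℝ) (hσ : ∀ j, σ ≠ a j) (hs : ∑ j, β j / (a j - σ) = 1) : ∃ m, σ = r m := by
  classical
  have hne : (Finset.univ.filter fun j => σ < a j).Nonempty := by
    by_contra h
    rw [Finset.not_nonempty_iff_eq_empty, Finset.filter_eq_empty_iff] at h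
    have : ∑ j, β j / (a j - σ) ≤ 0 := Finset.sum_nonpos fun j hj =>
      div_nonpos_of_nonneg_of_nonpos (hβ j).le (by have := h hj; linarith)
    linarith
  obtain ⟨hm1, hm2⟩ := Finset.mem_filter.mp (Finset.max'_mem _ hne)
  set m := Finset.max' _ hne with hmdef
  refine ⟨m, ?_⟩
  by_contra hcon
  have hsign : ∀ j, 0 < (a j - σ) * (a j - r m) := by
    intro j
    rcases lt_or_ge m j with h | h
    · have h1 := hr2 m j h
      have h2 : a j < σ := by
        rcases lt_trichotomy σ (a j) with h' | h' | h'
        · have : j ≤ m := Finset.le_max' _ _ (by simp [h'])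
          exact absurd h (not_lt.mpr this)
        · exact absurd h' (hσ j)
        · exact h'
      nlinarith
    · have h1 := ha.antitone h
      have := hr1 m
      apply mul_pos <;> linarith
  have : (r m - σ) * ∑ j, β j / ((a j - σ) * (a j - r m)) = 0 := by
    have h := (hr m).trans hs.symm
    rw [← sub_eq_zero, ← Finset.sum_sub_distrib] at h
    rw [Finset.mul_sum, ← h]
    refine Finset.sum_congr rfl fun j _ => ?_
    have h1 := left_ne_zero_of_mul (hsign j).ne'
    have h2 := right_ne_zero_of_mul (hsign j).ne'
    field_simp
    ring
  have hp : 0 < ∑ j, β j / ((a j - σ) * (a j - r m)) :=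
    Finset.sum_pos (fun j _ => div_pos (hβ j) (hsign j)) ⟨m, Finset.mem_univ _⟩
  rcases mul_eq_zero.mp this with h | h
  · exact hcon (by linarith)
  · exact hp.ne' h

section
variable {H : Type*} [NormedAddCommGroup H] [InnerProductSpace ℂ H]

lemma eig_form {N : ℕ} (T T' : H →L[ℂ] H) (c : H) (hT' : ∀ x, T' x = T x - ⟪c, x⟫_ℂ • c)
    (v : Fin N → H) (hv : Orthonormal ℂ v) (a : Fin N → ℂ) (hainj : Function.Injective a)
    (hTv : ∀ j, T (v j) = a j • v j)
    (hspan : ∀ x, T x ∈ Submodule.span ℂ (Set.range v)) (b : Fin N → ℂ) (hb : ∀ j, b j ≠ 0)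
    (hc : c = ∑ j, b j • v j) (z : ℂ) (hz : z ≠ 0) (x : H) (hx : x ≠ 0) (hTx : T' x = z • x) :
    (∀ j, z ≠ a j) ∧ (∑ j, (starRingEnd ℂ (b j) * b j) / (a j - z) = 1) ∧
      ∃ s : ℂ, x = s • ∑ j, (b j / (a j - z)) • v j := by
  have hxs : x ∈ Submodule.span ℂ (Set.range v) := by
    have : x = z⁻¹ • (T x - ⟪c, x⟫_ℂ • c) := by rw [← hT', hTx, smul_smul, inv_mul_cancel₀ hz, one_smul]
    rw [this]
    refine Submodule.smul_mem _ _ (Submodule.sub_mem _ (hspan x) (Submodule.smul_mem _ _ ?_))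
    rw [hc]
    exact Submodule.sum_mem _ fun j _ => Submodule.smul_mem _ _ (Submodule.subset_span ⟨j, rfl⟩)
  obtain ⟨l, hl⟩ := (Submodule.mem_span_range_iff_exists_fun ℂ).mp hxs
  set s := ⟪c, x⟫_ℂ with hs
  have hs' : s = ∑ j, starRingEnd ℂ (b j) * l j := by
    rw [hs, hc, ← hl, hv.inner_sum]
  have hcoef : ∀ j, (a j - z) * l j = s * b j := by
    intro j
    have h := congrArg (fun y => ⟪v j, y⟫_ℂ) (hTx.symm.trans (hT' x))
    have hTl : T x = ∑ j, (l j * a j) • v j := by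
      rw [← hl, map_sum]
      exact Finset.sum_congr rfl fun j _ => by rw [map_smul, hTv, smul_smul]
    rw [← hs, hTl, inner_sub_right, inner_smul_right, inner_smul_right, hc, hv.inner_right_fintype,
      hv.inner_right_fintype, ← hl, hv.inner_right_fintype] at h
    linear_combination -h
  have hs0 : s ≠ 0 := by
    intro h0
    have hex : ∃ j, l j ≠ 0 := by
      by_contra hcon
      push Not at hcon
      apply hx; rw [← hl]; simp [hcon]
    obtain ⟨j, hj⟩ := hex
    have hzj : a j - z = 0 := by
      have := hcoef j
      rw [h0, zero_mul] at this
      exact (mul_eq_zero.mp this).resolve_right hj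
    have hk : ∀ k, k ≠ j → l k = 0 := by
      intro k hk
      have := hcoef k
      rw [h0, zero_mul] at this
      refine (mul_eq_zero.mp this).resolve_left fun h => hk (hainj ?_)
      linear_combination h - hzj
    rw [h0, Finset.sum_eq_single j (fun k _ hkj => by rw [hk k hkj, mul_zero]) (by simp)] at hs'
    exact mul_ne_zero (by simpa using hb j) hj hs'.symm
  have hza : ∀ j, z ≠ a j := by
    intro j h
    have := hcoef j
    rw [h, sub_self, zero_mul] at this
    exact mul_ne_zero hs0 (hb j) this.symm
  have hlj : ∀ j, l j = s * (b j / (a j - z)) := by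
    intro j
    have h1 : a j - z ≠ 0 := sub_ne_zero.mpr (hza j).symm
    field_simp
    linear_combination hcoef j
  refine ⟨hza, ?_, s, ?_⟩
  · apply mul_left_cancel₀ hs0
    rw [mul_one, Finset.mul_sum]
    conv_rhs => rw [hs']
    exact Finset.sum_congr rfl fun j _ => by rw [hlj j]; ring
  · rw [← hl, Finset.smul_sum]
    exact Finset.sum_congr rfl fun j _ => by rw [hlj j, smul_smul]

lemma eig_mk {N : ℕ} (T T' : H →L[ℂ] H) (c : H) (hT' : ∀ x, T' x = T x - ⟪c, x⟫_ℂ • c)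
    (v : Fin N → H) (hv : Orthonormal ℂ v) (a : Fin N → ℂ)
    (hTv : ∀ j, T (v j) = a j • v j) (b : Fin N → ℂ)
    (hc : c = ∑ j, b j • v j) (z : ℂ) (hza : ∀ j, z ≠ a j)
    (hsum : ∑ j, (starRingEnd ℂ (b j) * b j) / (a j - z) = 1) :
    (∑ j, (b j / (a j - z)) • v j) ≠ 0 ∧
    T' (∑ j, (b j / (a j - z)) • v j) = z • ∑ j, (b j / (a j - z)) • v j := by
  have hin : ⟪c, ∑ j, (b j / (a j - z)) • v j⟫_ℂ = 1 := by
    rw [hc, hv.inner_sum, ← hsum]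
    exact Finset.sum_congr rfl fun j _ => by ring
  constructor
  · intro h
    rw [h, inner_zero_right] at hin
    exact zero_ne_one hin
  · rw [hT', hin, one_smul, map_sum, Finset.smul_sum]
    conv_lhs => rw [hc]
    rw [← Finset.sum_sub_distrib]
    refine Finset.sum_congr rfl fun j _ => ?_
    rw [map_smul, hTv, smul_smul, smul_smul, ← sub_smul]
    congr 1
    have h1 : a j - z ≠ 0 := sub_ne_zero.mpr (hza j).symm
    field_simp
    ring
end

lemma e_apply (x : L2) (n : ℕ) : ⟪(lp.single 2 n 1 : L2), x⟫_ℂ = x n := by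
  rw [lp.inner_single_left]; simp

lemma hankel_single {c : ℕ → ℂ} {Γ : L2 →L[ℂ] L2} (hΓ : IsHankelOp c Γ) (n k : ℕ) :
    (Γ (lp.single 2 n 1) : L2) k = c (k + n) := by
  rw [hΓ, tsum_eq_single n]
  · simp
  · intro p hp
    rw [lp.single_apply_ne _ _ _ hp, mul_zero]

lemma hankel_summable {c : ℕ → ℂ} {Γ : L2 →L[ℂ] L2} (hΓ : IsHankelOp c Γ) (n : ℕ) (x : L2) :
    Summable fun p => c (n + p) * x p := by
  have h := lp.summable_inner (𝕜 := ℂ) (star (Γ (lp.single 2 n 1))) x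
  refine h.congr fun p => ?_
  rw [lp.star_apply, hankel_single hΓ, RCLike.inner_apply, add_comm n p]
  simp [mul_comm]

lemma adj_apply (Γ : L2 →L[ℂ] L2) (x : L2) (n : ℕ) :
    (ContinuousLinearMap.adjoint Γ x : L2) n = ⟪Γ (lp.single 2 n 1), x⟫_ℂ := by
  rw [← e_apply, ContinuousLinearMap.adjoint_inner_right]

lemma adj_eq_star {c : ℕ → ℂ} {Γ : L2 →L[ℂ] L2} (hΓ : IsHankelOp c Γ) (x : L2) :
    ContinuousLinearMap.adjoint Γ x = star (Γ (star x)) := by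
  apply lp.ext
  funext n
  rw [adj_apply, lp.star_apply, hΓ, lp.inner_eq_tsum, tsum_star]
  refine tsum_congr fun p => ?_
  rw [hankel_single hΓ, RCLike.inner_apply, lp.star_apply, star_mul, star_star, add_comm n p]
  rfl

lemma opT_shift {c : ℕ → ℂ} {Γ Γt : L2 →L[ℂ] L2} (hΓ : IsHankelOp c Γ)
    (hΓt : IsHankelOp (shiftSeq c) Γt) (x : L2) :
    opT Γt x = opT Γ x - ⟪Γ e0, x⟫_ℂ • Γ e0 := by
  have h1 : ∀ n, Γt (lp.single 2 n 1) = Γ (lp.single 2 (n + 1) 1) := by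
    intro n
    apply lp.ext
    funext k
    rw [hankel_single hΓt, hankel_single hΓ]
    rfl
  have h2 : ∀ n, (ContinuousLinearMap.adjoint Γt x : L2) n =
      (ContinuousLinearMap.adjoint Γ x : L2) (n + 1) := by
    intro n
    rw [adj_apply, adj_apply, h1]
  rw [eq_sub_iff_add_eq]
  apply lp.ext
  funext n
  have h3 : (opT Γ x : L2) n = ∑' p, c (n + p) * (ContinuousLinearMap.adjoint Γ x : L2) p := hΓ _ n
  have h4 : (opT Γt x : L2) n =
      ∑' p, shiftSeq c (n + p) * (ContinuousLinearMap.adjoint Γt x : L2) p := hΓt _ n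
  rw [lp.coeFn_add, Pi.add_apply, lp.coeFn_smul, Pi.smul_apply, h3, h4,
    (hankel_summable hΓ n _).tsum_eq_zero_add, add_comm, adj_apply]
  congr 1
  · rw [smul_eq_mul, mul_comm, e0, hankel_single hΓ]
  · refine tsum_congr fun p => ?_
    rw [h2]
    rfl

lemma opT_inner (Γ : L2 →L[ℂ] L2) (x y : L2) : ⟪opT Γ x, y⟫_ℂ = ⟪x, opT Γ y⟫_ℂ := by
  simp only [opT, ContinuousLinearMap.comp_apply]
  rw [← ContinuousLinearMap.adjoint_inner_right, ContinuousLinearMap.adjoint_inner_left]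

lemma opT_symm (Γ : L2 →L[ℂ] L2) : (opT Γ).toLinearMap.IsSymmetric := fun x y => opT_inner Γ x y

lemma coeff_norm {c : ℕ → ℂ} {Γ : L2 →L[ℂ] L2} (hΓ : IsHankelOp c Γ) (l : ℝ)
    (hdim : Module.finrank ℂ (Module.End.eigenspace (opT Γ).toLinearMap ((l : ℂ) ^ 2)) = 1)
    (v : L2) (hv : ‖v‖ = 1) (hTv : opT Γ v = ((l : ℂ) ^ 2) • v) :
    ‖⟪v, Γ e0⟫_ℂ‖ ^ 2 = l ^ 2 * ‖⟪v, e0⟫_ℂ‖ ^ 2 := by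
  set w : L2 := star (ContinuousLinearMap.adjoint Γ v) with hw
  have hw' : w = Γ (star v) := by rw [hw, adj_eq_star hΓ, star_star]
  have hTw : opT Γ w = ((l : ℂ) ^ 2) • w := by
    have h1 : opT Γ w = Γ (star (opT Γ v)) := by
      have : ContinuousLinearMap.adjoint Γ w = star (opT Γ v) := by
        rw [adj_eq_star hΓ, hw, star_star]; rfl
      rw [← this]; rfl
    have h2 : star (((l : ℂ) ^ 2) • v) = ((l : ℂ) ^ 2) • star v := by
      apply lp.ext
      funext n
      simp
    rw [h1, hTv, h2, map_smul, hw']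
  have hv0 : v ≠ 0 := by
    intro h; rw [h, norm_zero] at hv; exact zero_ne_one hv
  have hvm : v ∈ Module.End.eigenspace (opT Γ).toLinearMap ((l : ℂ) ^ 2) :=
    Module.End.mem_eigenspace_iff.mpr hTv
  have hwm : w ∈ Module.End.eigenspace (opT Γ).toLinearMap ((l : ℂ) ^ 2) :=
    Module.End.mem_eigenspace_iff.mpr hTw
  obtain ⟨α, hα⟩ := (finrank_eq_one_iff_of_nonzero' ⟨v, hvm⟩
    (fun h => hv0 (congrArg Subtype.val h))).mp hdim ⟨w, hwm⟩
  have hα' : α • v = w := congrArg Subtype.val hα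
  have hnw : ‖w‖ ^ 2 = l ^ 2 := by
    rw [hw, norm_star]
    have h1 : ((‖ContinuousLinearMap.adjoint Γ v‖ ^ 2 : ℝ) : ℂ) = ((l ^ 2 : ℝ) : ℂ) := by
      have := inner_self_eq_norm_sq_to_K (𝕜 := ℂ) (ContinuousLinearMap.adjoint Γ v)
      have h3 : ⟪ContinuousLinearMap.adjoint Γ v, ContinuousLinearMap.adjoint Γ v⟫_ℂ
          = ⟪v, opT Γ v⟫_ℂ := ContinuousLinearMap.adjoint_inner_left _ _ _
      rw [h3, hTv, inner_smul_right, inner_self_eq_norm_sq_to_K, hv] at this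
      push_cast
      simpa using this.symm
    exact_mod_cast h1
  have hnα : ‖α‖ ^ 2 = l ^ 2 := by rw [← hnw, ← hα', norm_smul, hv, mul_one]
  have e1 : ‖⟪v, Γ e0⟫_ℂ‖ = ‖w 0‖ := by
    rw [← ContinuousLinearMap.adjoint_inner_left, norm_inner_symm, e0, e_apply, hw, lp.star_apply,
      norm_star]
  have e2 : ‖⟪v, e0⟫_ℂ‖ = ‖v 0‖ := by rw [norm_inner_symm, e0, e_apply]
  rw [e1, e2, ← hα', lp.coeFn_smul, Pi.smul_apply, norm_smul, mul_pow, hnα]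

/-- For `N`-generic `c`, the operator `Γ̃_c Γ̃_c*` has exactly `N` positive eigenvalues, all
simple, say `μ_1² > … > μ_N²`; they are precisely the real solutions `σ` of
`Σ_j λ_j² ν_j²/(λ_j² - σ) = 1` and they strictly interlace: `λ_1² > μ_1² > λ_2² > … > μ_N² > 0`. -/
theorem statement9 (N : ℕ) (hN : 1 ≤ N) (c : ℕ → ℂ) (hc : InH12 c)
    (Γ Γt : L2 →L[ℂ] L2) (hΓ : IsHankelOp c Γ) (hΓt : IsHankelOp (shiftSeq c) Γt)
    (lam nu : Fin N → ℝ) (hgen : NGenericData Γ N lam nu) :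
    ∃ mu : Fin N → ℝ,
      (∀ j : Fin N, 0 < mu j) ∧
      (∀ j : Fin N, mu j ^ 2 < lam j ^ 2) ∧
      (∀ j k : Fin N, (j : ℕ) + 1 = (k : ℕ) → lam k ^ 2 < mu j ^ 2) ∧
      {z : ℂ | z ≠ 0 ∧ Module.End.HasEigenvalue (opT Γt).toLinearMap z}
        = Set.range (fun m : Fin N => ((mu m : ℂ)) ^ 2) ∧
      (∀ m : Fin N,
        Module.finrank ℂ
          (Module.End.eigenspace (opT Γt).toLinearMap ((mu m : ℂ) ^ 2)) = 1) ∧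
      (∀ σ : ℝ, (∀ j : Fin N, σ ≠ lam j ^ 2) →
        ((∑ j : Fin N, lam j ^ 2 * nu j ^ 2 / (lam j ^ 2 - σ)) = 1 ↔
          ∃ m : Fin N, σ = mu m ^ 2)) := by
  classical
  obtain ⟨hrank, hanti, hlpos, -, hdim, hvec, hnupos, hnusum⟩ := hgen
  choose v hvn hTv hnu using hvec
  set a : Fin N → ℝ := fun j => lam j ^ 2 with ha
  have hapos : ∀ j, 0 < a j := fun j => pow_pos (hlpos j) 2
  have haanti : StrictAnti a := fun j k hjk => pow_lt_pow_left₀ (hanti j k hjk) (hlpos k).le two_ne_zero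
  set β : Fin N → ℝ := fun j => lam j ^ 2 * nu j ^ 2 with hβdef
  have hβ : ∀ j, 0 < β j := fun j => mul_pos (hapos j) (pow_pos (hnupos j) 2)
  have hTv' : ∀ j, opT Γ (v j) = (a j : ℂ) • v j := fun j => by rw [hTv j]; simp [ha]
  have hortho : Orthonormal ℂ v := by
    refine ⟨hvn, fun j k hjk => ?_⟩
    have h := opT_inner Γ (v j) (v k)
    rw [hTv', hTv', inner_smul_left, inner_smul_right, Complex.conj_ofReal] at h
    have h2 : ((a j : ℂ) - a k) * ⟪v j, v k⟫_ℂ = 0 := by linear_combination h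
    refine (mul_eq_zero.mp h2).resolve_left fun h3 => hjk (haanti.injective ?_)
    exact_mod_cast sub_eq_zero.mp h3
  have hspan : Submodule.span ℂ (Set.range v) = Γ.toLinearMap.range := by
    have hfd : FiniteDimensional ℂ Γ.toLinearMap.range := by
      refine Module.rank_lt_aleph0_iff.mp ?_
      change LinearMap.rank Γ.toLinearMap < _
      rw [hrank]; exact Cardinal.natCast_lt_aleph0
    apply Submodule.eq_of_le_of_finrank_eq
    · rw [Submodule.span_le]
      rintro _ ⟨j, rfl⟩
      refine ⟨(a j : ℂ)⁻¹ • ContinuousLinearMap.adjoint Γ (v j), ?_⟩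
      have : Γ (ContinuousLinearMap.adjoint Γ (v j)) = (a j : ℂ) • v j := hTv' j
      have h0 : (a j : ℂ) ≠ 0 := by exact_mod_cast (hapos j).ne'
      change Γ _ = _
      rw [map_smul, this, smul_smul, inv_mul_cancel₀ h0, one_smul]
    · rw [finrank_span_eq_card hortho.linearIndependent, Fintype.card_fin]
      exact (Module.finrank_eq_of_rank_eq hrank).symm
  have hTspan : ∀ x, opT Γ x ∈ Submodule.span ℂ (Set.range v) := fun x => by
    rw [hspan]; exact ⟨ContinuousLinearMap.adjoint Γ x, rfl⟩
  obtain ⟨b, hb⟩ := (Submodule.mem_span_range_iff_exists_fun ℂ).mp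
    (show Γ e0 ∈ Submodule.span ℂ (Set.range v) by rw [hspan]; exact ⟨e0, rfl⟩)
  have hbβ : ∀ j, ‖b j‖ ^ 2 = β j := by
    intro j
    have h := coeff_norm hΓ (lam j) (hdim j) (v j) (hvn j) (hTv j)
    rw [← hb, hortho.inner_right_fintype, ← hnu j] at h
    exact h
  have hb0 : ∀ j, b j ≠ 0 := by
    intro j h
    have := hbβ j
    rw [h, norm_zero] at this
    have := hβ j
    simp_all
  have hbb : ∀ j, starRingEnd ℂ (b j) * b j = (β j : ℂ) := by
    intro j
    rw [← hbβ j, Complex.conj_mul']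
    push_cast; rfl
  have hainj : Function.Injective fun j => (a j : ℂ) := fun j k h =>
    haanti.injective (Complex.ofReal_injective h)
  have hform := eig_form (opT Γ) (opT Γt) (Γ e0) (opT_shift hΓ hΓt) v hortho (fun j => (a j : ℂ))
    hainj hTv' hTspan b hb0 hb.symm
  have hmk := eig_mk (opT Γ) (opT Γt) (Γ e0) (opT_shift hΓ hΓt) v hortho (fun j => (a j : ℂ))
    hTv' b hb.symm
  simp only [hbb] at hform hmk
  have hsum0 : ∑ j, β j / a j < 1 := by
    refine lt_of_eq_of_lt (Finset.sum_congr rfl fun j _ => ?_) hnusum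
    have := (hapos j).ne'
    exact mul_div_cancel_left₀ _ this
  choose r hr0 hr1 hr2 hr using sec_root a β haanti hapos hβ hsum0
  have huniq := sec_unique a β haanti hβ r hr1 hr2 hr
  have hrne : ∀ m j, r m ≠ a j := by
    intro m j
    rcases lt_or_ge m j with h | h
    · exact (hr2 m j h).ne'
    · exact ((hr1 m).trans_le (haanti.antitone h)).ne
  have hsq : ∀ m, Real.sqrt (r m) ^ 2 = r m := fun m => Real.sq_sqrt (hr0 m).le
  have hsqC : ∀ m, (Real.sqrt (r m) : ℂ) ^ 2 = (r m : ℂ) := fun m => by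
    exact_mod_cast hsq m
  have hmk' : ∀ m, (∑ j, (b j / ((a j : ℂ) - (r m : ℂ))) • v j) ≠ 0 ∧
      opT Γt (∑ j, (b j / ((a j : ℂ) - (r m : ℂ))) • v j)
        = (r m : ℂ) • ∑ j, (b j / ((a j : ℂ) - (r m : ℂ))) • v j := by
    intro m
    refine hmk (r m) (fun j h => hrne m j (Complex.ofReal_injective h)) ?_
    exact_mod_cast hr m
  refine ⟨fun m => Real.sqrt (r m), fun m => Real.sqrt_pos.mpr (hr0 m), ?_, ?_, ?_, ?_, ?_⟩
  · intro j
    rw [hsq]; exact hr1 j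
  · intro j k hjk
    rw [hsq]; exact hr2 j k (by rw [Fin.lt_def]; omega)
  · ext z
    simp only [hsqC, Set.mem_ofPred_eq, Set.mem_range]
    constructor
    · rintro ⟨hz, hev⟩
      have hconj := (opT_symm Γt).conj_eigenvalue_eq_self hev
      obtain ⟨s, rfl⟩ := Complex.conj_eq_iff_real.mp hconj
      obtain ⟨x, hx⟩ := hev.exists_hasEigenvector
      obtain ⟨h1, h2, -⟩ := hform s hz x hx.2 (Module.End.mem_eigenspace_iff.mp hx.1)
      obtain ⟨m, hm⟩ := huniq s (fun j h => h1 j (by rw [h])) (by exact_mod_cast h2)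
      exact ⟨m, by rw [hm]⟩
    · rintro ⟨m, rfl⟩
      refine ⟨by exact_mod_cast (hr0 m).ne', ?_⟩
      exact Module.End.hasEigenvalue_of_hasEigenvector
        ⟨Module.End.mem_eigenspace_iff.mpr (hmk' m).2, (hmk' m).1⟩
  · intro m
    beta_reduce
    rw [hsqC m]
    have hmem : (∑ j, (b j / ((a j : ℂ) - (r m : ℂ))) • v j) ∈
        Module.End.eigenspace (opT Γt).toLinearMap (r m : ℂ) :=
      Module.End.mem_eigenspace_iff.mpr (hmk' m).2
    refine (finrank_eq_one_iff_of_nonzero' ⟨_, hmem⟩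
      (fun h => (hmk' m).1 (congrArg Subtype.val h))).mpr ?_
    rintro ⟨x, hx⟩
    by_cases hx0 : x = 0
    · exact ⟨0, Subtype.ext (by simp [hx0])⟩
    · obtain ⟨-, -, s, hs⟩ := hform (r m) (by exact_mod_cast (hr0 m).ne') x hx0
        (Module.End.mem_eigenspace_iff.mp hx)
      exact ⟨s, Subtype.ext hs.symm⟩
  · intro σ hσ
    simp only [hsq]
    constructor
    · exact huniq σ hσ
    · rintro ⟨m, rfl⟩
      exact hr m

end
end
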